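/- arXiv:1009.4736 — 2 statements merged into one kernel-verified Lean document; each statement's English description precedes it below -/
import Mathlib

section
/- Let P be a set of 30 points in general position in the plane that is crossing-minimal, i.e., cr(P) equals the minimum of cr(Q) over all 30-point sets Q in general position. Then E_{≤k}(P) = 3·binom(k+2,2) + 3·binom(k−8,2) for every 0 ≤ k ≤ 12 (where binom(j,2) = 0 when j < 2), and P is 3-decomposable. -/
/-- The determinant of two planar vectors; its sign tells on which open side of the
(directed) line with direction `u` a point lies. -/
def det2 (u v : ℝ × ℝ) : ℝ := u.1 * v.2 - u.2 * v.1

/-- The standard inner product on the plane; orthogonal projection onto a line with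
direction `d` orders points by `dot2 d ·`. -/
def dot2 (u v : ℝ × ℝ) : ℝ := u.1 * v.1 + u.2 * v.2

/-- `P` is in general position: no three of its points are collinear. -/
def GenPos (P : Finset (ℝ × ℝ)) : Prop :=
  ∀ p ∈ P, ∀ q ∈ P, ∀ r ∈ P, p ≠ q → p ≠ r → q ≠ r →
    ¬ Collinear ℝ ({p, q, r} : Set (ℝ × ℝ))

/-- The line through the two (distinct) points `p, q` of `P` is a `k`-edge of `P`: it
leaves exactly `k` points of `P` on one of its open sides. -/
def IsKEdge (P : Finset (ℝ × ℝ)) (k : ℕ) (p q : ℝ × ℝ) : Prop :=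
  p ≠ q ∧
    ({x ∈ (P : Set (ℝ × ℝ)) | 0 < det2 (q - p) (x - p)}.ncard = k ∨
     {x ∈ (P : Set (ℝ × ℝ)) | det2 (q - p) (x - p) < 0}.ncard = k)

/-- `E_k(P)`: the number of `k`-edges of `P` (pairs of points of `P` whose line leaves
exactly `k` points of `P` on one open side). -/
noncomputable def Ek (P : Finset (ℝ × ℝ)) (k : ℕ) : ℕ :=
  {e : Sym2 (ℝ × ℝ) | ∃ p ∈ P, ∃ q ∈ P, e = s(p, q) ∧ IsKEdge P k p q}.ncard

/-- `E_{≤k}(P) = Σ_{j=0}^{k} E_j(P)`: the number of `(≤ k)`-edges of `P`. -/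
noncomputable def EleK (P : Finset (ℝ × ℝ)) (k : ℕ) : ℕ :=
  ∑ j ∈ Finset.range (k + 1), Ek P j

/-- Along the projection direction `d`, all points of `X` lie strictly between all the
points of `Y` and all the points of `Z` (the `Y`-block on one side, the `Z`-block on
the other). -/
def ProjBetween (d : ℝ × ℝ) (X Y Z : Finset (ℝ × ℝ)) : Prop :=
  (∀ x ∈ X, ∀ y ∈ Y, ∀ z ∈ Z, dot2 d y < dot2 d x ∧ dot2 d x < dot2 d z) ∨
  (∀ x ∈ X, ∀ y ∈ Y, ∀ z ∈ Z, dot2 d z < dot2 d x ∧ dot2 d x < dot2 d y)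

/-- `P` is 3-decomposable: it can be partitioned into three equal-sized sets `A, B, C`
such that some triangle `T = v₁v₂v₃` encloses `P` and the orthogonal projections of `P`
onto the lines of the three sides of `T` show `A` between `B` and `C` on one side, `B`
between `C` and `A` on the second side, and `C` between `A` and `B` on the third side. -/
def PtSet3Decomposable (P : Finset (ℝ × ℝ)) : Prop :=
  ∃ A B C : Finset (ℝ × ℝ), ∃ v₁ v₂ v₃ : ℝ × ℝ,
    A ∪ B ∪ C = P ∧ Disjoint A B ∧ Disjoint A C ∧ Disjoint B C ∧
    A.card = B.card ∧ B.card = C.card ∧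
    ¬ Collinear ℝ ({v₁, v₂, v₃} : Set (ℝ × ℝ)) ∧
    (P : Set (ℝ × ℝ)) ⊆ convexHull ℝ {v₁, v₂, v₃} ∧
    ProjBetween (v₂ - v₁) A B C ∧ ProjBetween (v₃ - v₂) B C A ∧
    ProjBetween (v₁ - v₃) C A B
/-- A finite planar point set is in convex position if none of its points lies in the
convex hull of the others. -/
def ConvexPosition (s : Finset (ℝ × ℝ)) : Prop :=
  ∀ x ∈ s, x ∉ convexHull ℝ ((s.erase x : Finset (ℝ × ℝ)) : Set (ℝ × ℝ))

/-- `cr(P)`: the number of crossings in the rectilinear drawing of the complete graph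
on `P`, i.e. the number of 4-element subsets of `P` in convex position. -/
noncomputable def crNum (P : Finset (ℝ × ℝ)) : ℕ :=
  {s : Finset (ℝ × ℝ) | s ⊆ P ∧ s.card = 4 ∧ ConvexPosition s}.ncard

section
open scoped Classical

def GP (P : Finset (ℝ × ℝ)) : Prop :=
  ∀ p ∈ P, ∀ q ∈ P, ∀ r ∈ P, p ≠ q → p ≠ r → q ≠ r → det2 (q - p) (r - p) ≠ 0

theorem gp_of_genPos {P : Finset (ℝ × ℝ)} (h : GenPos P) : GP P := by
  intro p hp q hq r hr hpq hpr hqr h0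
  apply h p hp q hq r hr hpq hpr hqr
  rw [collinear_iff_of_mem (p₀ := p) (by simp)]
  refine ⟨q - p, ?_⟩
  simp only [det2, Prod.fst_sub, Prod.snd_sub] at h0
  intro x hx
  simp only [Set.mem_insert_iff, Set.mem_singleton_iff] at hx
  rcases hx with rfl | rfl | rfl
  · exact ⟨0, by simp⟩
  · exact ⟨1, by simp⟩
  · by_cases h1 : q.1 - p.1 = 0
    · have h2 : q.2 - p.2 ≠ 0 := by
        intro h2
        exact hpq (Prod.ext (by linarith) (by linarith))
      refine ⟨(x.2 - p.2) / (q.2 - p.2), ?_⟩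
      ext
      · simp
        rw [h1] at h0 ⊢
        have : x.1 - p.1 = 0 := by
          have := mul_eq_zero.1 (show (q.2 - p.2) * (x.1 - p.1) = 0 by linarith)
          tauto
        linarith
      · simp
        field_simp
        ring
    · refine ⟨(x.1 - p.1) / (q.1 - p.1), ?_⟩
      ext
      · simp
        field_simp
        ring
      · simp
        field_simp
        linarith

theorem genPos_of_gp {P : Finset (ℝ × ℝ)} (h : GP P) : GenPos P := by
  intro p hp q hq r hr hpq hpr hqr h0
  apply h p hp q hq r hr hpq hpr hqr
  rw [collinear_iff_of_mem (p₀ := p) (by simp)] at h0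
  obtain ⟨v, hv⟩ := h0
  obtain ⟨a, ha⟩ := hv q (by simp)
  obtain ⟨b, hb⟩ := hv r (by simp)
  subst ha hb
  simp [det2]
  ring

theorem GP.mono {P Q : Finset (ℝ × ℝ)} (h : GP P) (hQ : Q ⊆ P) : GP Q :=
  fun p hp q hq r hr => h p (hQ hp) q (hQ hq) r (hQ hr)

theorem det_swap (p q x : ℝ × ℝ) : det2 (p - q) (x - q) = - det2 (q - p) (x - p) := by
  simp only [det2, Prod.fst_sub, Prod.snd_sub]; ring

theorem det_rot (p q x : ℝ × ℝ) : det2 (x - q) (p - q) = det2 (q - p) (x - p) := by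
  simp only [det2, Prod.fst_sub, Prod.snd_sub]; ring

noncomputable def lft (P : Finset (ℝ × ℝ)) (p q : ℝ × ℝ) : ℕ :=
  (P.filter (fun x => 0 < det2 (q - p) (x - p))).card

theorem lft_swap (P : Finset (ℝ × ℝ)) (p q : ℝ × ℝ) :
    lft P q p = (P.filter (fun x => det2 (q - p) (x - p) < 0)).card := by
  unfold lft
  congr 1
  apply Finset.filter_congr
  intro x _
  rw [det_swap]
  constructor <;> intro h <;> linarith

theorem lft_add {P : Finset (ℝ × ℝ)} (h : GP P) {p q : ℝ × ℝ} (hp : p ∈ P) (hq : q ∈ P)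
    (hpq : p ≠ q) : lft P p q + lft P q p + 2 = P.card := by
  rw [lft_swap P p q]
  unfold lft
  have h2 : ({p, q} : Finset (ℝ × ℝ)).card = 2 := Finset.card_pair hpq
  rw [← h2, ← Finset.card_union_of_disjoint, ← Finset.card_union_of_disjoint]
  · congr 1
    ext x
    simp only [Finset.mem_union, Finset.mem_filter, Finset.mem_insert, Finset.mem_singleton]
    constructor
    · rintro ((h | h) | (h | h))
      · exact h.1
      · exact h.1
      · rwa [h]
      · rwa [h]
    · intro hx
      by_cases h1 : x = p
      · tauto
      by_cases h3 : x = q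
      · tauto
      rcases lt_or_gt_of_ne (h p hp q hq x hx hpq (Ne.symm h1) (Ne.symm h3)) with h4 | h4 <;> tauto
  · rw [Finset.disjoint_left]
    intro x hx
    simp only [Finset.mem_union, Finset.mem_filter, Finset.mem_insert, Finset.mem_singleton] at *
    rintro (rfl | rfl) <;> simp [det2] at hx <;> rcases hx with hx | hx <;> linarith [hx.2]
  · rw [Finset.disjoint_left]
    intro x hx
    simp only [Finset.mem_filter] at *
    intro h; linarith [hx.2, h.2]

theorem card_rank_lt {α : Type*} (Y : Finset α) (f : α → ℝ) (hf : ∀ x ∈ Y, ∀ y ∈ Y, x ≠ y → f x ≠ f y)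
    (m : ℕ) (hm : m ≤ Y.card) :
    (Y.filter (fun y => (Y.filter (fun z => f z < f y)).card < m)).card = m := by
  set g : α → ℕ := fun y => (Y.filter (fun z => f z < f y)).card with hg
  have hlt : ∀ x ∈ Y, ∀ y ∈ Y, f x < f y → g x < g y := by
    intro x hx y hy h
    apply Finset.card_lt_card
    rw [Finset.ssubset_iff_of_subset]
    · exact ⟨x, by simp [hx, h], by simp⟩
    · intro z hz
      simp only [Finset.mem_filter] at *
      exact ⟨hz.1, hz.2.trans h⟩
  have hinj : Set.InjOn g Y := by
    intro x hx y hy hxy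
    by_contra hne
    rcases lt_or_gt_of_ne (hf x hx y hy hne) with h | h
    · exact absurd hxy (hlt x hx y hy h).ne
    · exact absurd hxy (hlt y hy x hx h).ne'
  have him : Y.image g = Finset.range Y.card := by
    apply Finset.eq_of_subset_of_card_le
    · intro j hj
      obtain ⟨y, hy, rfl⟩ := Finset.mem_image.1 hj
      rw [Finset.mem_range]
      apply Finset.card_lt_card
      rw [Finset.ssubset_iff_of_subset (Finset.filter_subset _ _)]
      exact ⟨y, hy, by simp⟩
    · rw [Finset.card_image_of_injOn hinj, Finset.card_range]
  have h1 : (Y.filter (fun y => g y < m)).image g = Finset.range m := by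
    ext j
    simp only [Finset.mem_image, Finset.mem_filter, Finset.mem_range]
    constructor
    · rintro ⟨y, hy, rfl⟩; exact hy.2
    · intro hj
      have : j ∈ Y.image g := by rw [him, Finset.mem_range]; omega
      obtain ⟨y, hy, rfl⟩ := Finset.mem_image.1 this
      exact ⟨y, ⟨hy, hj⟩, rfl⟩
  rw [← Finset.card_image_of_injOn (hinj.mono (by intro x hx; simp at hx; exact hx.1)), h1,
    Finset.card_range]

noncomputable def rk (P : Finset (ℝ × ℝ)) (u x : ℝ × ℝ) : ℕ :=
  (P.filter (fun y => dot2 u y < dot2 u x)).card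

def NT (P : Finset (ℝ × ℝ)) (u : ℝ × ℝ) : Prop :=
  ∀ x ∈ P, ∀ y ∈ P, x ≠ y → dot2 u x ≠ dot2 u y

theorem dot_neg (u x : ℝ × ℝ) : dot2 (-u) x = - dot2 u x := by
  simp only [dot2, Prod.fst_neg, Prod.snd_neg]; ring

theorem NT.neg {P : Finset (ℝ × ℝ)} {u : ℝ × ℝ} (h : NT P u) : NT P (-u) := by
  intro x hx y hy hxy
  rw [dot_neg, dot_neg]
  intro h1
  exact h x hx y hy hxy (by linarith)

theorem NT.mono {P Q : Finset (ℝ × ℝ)} {u : ℝ × ℝ} (h : NT P u) (hQ : Q ⊆ P) : NT Q u :=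
  fun x hx y hy => h x (hQ hx) y (hQ hy)

theorem rk_neg {P : Finset (ℝ × ℝ)} {u : ℝ × ℝ} :
    ∀ x, rk P (-u) x = (P.filter (fun y => dot2 u x < dot2 u y)).card := by
  intro x
  unfold rk
  congr 1
  apply Finset.filter_congr
  intro y _
  rw [dot_neg, dot_neg]
  constructor <;> intro h <;> linarith

theorem rk_add {P : Finset (ℝ × ℝ)} {u : ℝ × ℝ} (h : NT P u) {x : ℝ × ℝ} (hx : x ∈ P) :
    rk P u x + rk P (-u) x + 1 = P.card := by
  rw [rk_neg]
  unfold rk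
  rw [← Finset.card_singleton x, ← Finset.card_union_of_disjoint, ← Finset.card_union_of_disjoint]
  · congr 1
    ext y
    simp only [Finset.mem_union, Finset.mem_filter, Finset.mem_singleton]
    constructor
    · rintro ((h | h) | h)
      · exact h.1
      · exact h.1
      · rwa [h]
    · intro hy
      by_cases h1 : y = x
      · tauto
      · rcases lt_or_gt_of_ne (h y hy x hx h1) with h4 | h4 <;> tauto
  · rw [Finset.disjoint_left]
    intro y hy
    simp only [Finset.mem_union, Finset.mem_filter, Finset.mem_singleton] at *
    rintro rfl
    simp at hy
  · rw [Finset.disjoint_left]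
    intro x hx
    simp only [Finset.mem_filter] at *
    intro h; linarith [hx.2, h.2]

/-- the first `m` points of `P` in direction `u` -/
noncomputable def Sm (P : Finset (ℝ × ℝ)) (m : ℕ) (u : ℝ × ℝ) : Finset (ℝ × ℝ) :=
  P.filter (fun x => rk P u x < m)

theorem card_Sm {P : Finset (ℝ × ℝ)} {u : ℝ × ℝ} (h : NT P u) {m : ℕ} (hm : m ≤ P.card) :
    (Sm P m u).card = m := card_rank_lt P (dot2 u) h m hm

theorem Sm_disj {P : Finset (ℝ × ℝ)} {u : ℝ × ℝ} (h : NT P u) {m : ℕ} (hm : 2 * m ≤ P.card) :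
    ∀ x, x ∈ Sm P m u → x ∈ Sm P m (-u) → False := by
  intro x hx hx'
  simp only [Sm, Finset.mem_filter] at hx hx'
  have := rk_add h hx.1
  omega

theorem lt_of_mem_Sm {P : Finset (ℝ × ℝ)} {u : ℝ × ℝ} (h : NT P u) {m : ℕ} {x y : ℝ × ℝ}
    (hx : x ∈ Sm P m u) (hy : y ∈ P) (hy' : y ∉ Sm P m u) : dot2 u x < dot2 u y := by
  by_contra hlt
  simp only [Sm, Finset.mem_filter, not_and, not_lt] at hx hy'
  have h1 := hy' hy
  have : rk P u y ≤ rk P u x := by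
    apply Finset.card_le_card
    intro z hz
    simp only [Finset.mem_filter] at *
    exact ⟨hz.1, by linarith [hz.2]⟩
  omega
end

section
open scoped Classical

def Hull (P : Finset (ℝ × ℝ)) (v e : ℝ × ℝ) : Prop :=
  v ∈ P ∧ ∀ y ∈ P, y ≠ v → dot2 e v < dot2 e y

theorem dot_sub (u x y : ℝ × ℝ) : dot2 u (x - y) = dot2 u x - dot2 u y := by
  simp only [dot2, Prod.fst_sub, Prod.snd_sub]; ring

noncomputable def tau (e v y : ℝ × ℝ) : ℝ := det2 e (y - v) / dot2 e (y - v)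

theorem Hull.pos {P : Finset (ℝ × ℝ)} {v e y : ℝ × ℝ} (h : Hull P v e) (hy : y ∈ P) (hv : y ≠ v) :
    0 < dot2 e (y - v) := by
  have := h.2 y hy hv
  rw [dot_sub]; linarith

theorem sq_pos_of_dot {e a : ℝ × ℝ} (h : dot2 e a ≠ 0) : 0 < e.1 ^ 2 + e.2 ^ 2 := by
  by_contra h1
  have h2 : e.1 = 0 := by nlinarith [sq_nonneg e.1, sq_nonneg e.2]
  have h3 : e.2 = 0 := by nlinarith [sq_nonneg e.1, sq_nonneg e.2]
  apply h
  simp [dot2, h2, h3]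

theorem Hull.tau_lt {P : Finset (ℝ × ℝ)} {v e y z : ℝ × ℝ} (h : Hull P v e) (hy : y ∈ P) (hyv : y ≠ v)
    (hz : z ∈ P) (hzv : z ≠ v) : tau e v y < tau e v z ↔ 0 < det2 (y - v) (z - v) := by
  have h1 := h.pos hy hyv
  have h2 := h.pos hz hzv
  have h3 := sq_pos_of_dot h1.ne'
  unfold tau
  rw [div_lt_div_iff₀ h1 h2, ← sub_pos]
  have : det2 e (z - v) * dot2 e (y - v) - det2 e (y - v) * dot2 e (z - v)
      = (e.1 ^ 2 + e.2 ^ 2) * det2 (y - v) (z - v) := by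
    simp only [det2, dot2]; ring
  rw [this]
  exact mul_pos_iff_of_pos_left h3

theorem Hull.tau_ne {P : Finset (ℝ × ℝ)} (hP : GP P) {v e y z : ℝ × ℝ} (h : Hull P v e) (hy : y ∈ P) (hyv : y ≠ v)
    (hz : z ∈ P) (hzv : z ≠ v) (hyz : y ≠ z) : tau e v y ≠ tau e v z := by
  rcases lt_or_gt_of_ne (hP v h.1 y hy z hz (Ne.symm hyv) (Ne.symm hzv) hyz) with h1 | h1
  · apply ne_of_gt
    rw [h.tau_lt hz hzv hy hyv]
    have : det2 (z - v) (y - v) = - det2 (y - v) (z - v) := by simp only [det2]; ring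
    linarith
  · exact ne_of_lt ((h.tau_lt hy hyv hz hzv).2 h1)

theorem Hull.lft_out {P : Finset (ℝ × ℝ)} {v e y : ℝ × ℝ} (h : Hull P v e) (hy : y ∈ P) (hyv : y ≠ v) :
    lft P v y = ((P.erase v).filter (fun z => tau e v y < tau e v z)).card := by
  unfold lft
  congr 1
  ext z
  simp only [Finset.mem_filter, Finset.mem_erase]
  constructor
  · rintro ⟨hz, h1⟩
    have hzv : z ≠ v := by rintro rfl; simp [det2] at h1
    exact ⟨⟨hzv, hz⟩, (h.tau_lt hy hyv hz hzv).2 h1⟩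
  · rintro ⟨⟨hzv, hz⟩, h1⟩
    exact ⟨hz, (h.tau_lt hy hyv hz hzv).1 h1⟩

theorem Hull.lft_in {P : Finset (ℝ × ℝ)} {v e y : ℝ × ℝ} (h : Hull P v e) (hy : y ∈ P) (hyv : y ≠ v) :
    lft P y v = ((P.erase v).filter (fun z => tau e v z < tau e v y)).card := by
  rw [lft_swap]
  congr 1
  ext z
  simp only [Finset.mem_filter, Finset.mem_erase]
  have h2 : det2 (z - v) (y - v) = - det2 (y - v) (z - v) := by simp only [det2]; ring
  constructor
  · rintro ⟨hz, h1⟩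
    have hzv : z ≠ v := by rintro rfl; simp [det2] at h1
    exact ⟨⟨hzv, hz⟩, (h.tau_lt hz hzv hy hyv).2 (by linarith)⟩
  · rintro ⟨⟨hzv, hz⟩, h1⟩
    have := (h.tau_lt hz hzv hy hyv).1 h1
    exact ⟨hz, by linarith⟩

theorem Hull.card_out {P : Finset (ℝ × ℝ)} (hP : GP P) {v e : ℝ × ℝ} (h : Hull P v e) {k : ℕ}
    (hk : k + 2 ≤ P.card) : ((P.erase v).filter (fun y => lft P v y ≤ k)).card = k + 1 := by
  rw [← card_rank_lt (P.erase v) (fun y => - tau e v y) _ (k + 1)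
    (by rw [Finset.card_erase_of_mem h.1]; omega)]
  · congr 1
    apply Finset.filter_congr
    intro y hy
    rw [Finset.mem_erase] at hy
    rw [h.lft_out hy.2 hy.1]
    simp only [neg_lt_neg_iff]
    omega
  · intro x hx y hy hxy
    rw [Finset.mem_erase] at hx hy
    have := h.tau_ne hP hx.2 hx.1 hy.2 hy.1 hxy
    simpa using this

theorem Hull.card_in {P : Finset (ℝ × ℝ)} (hP : GP P) {v e : ℝ × ℝ} (h : Hull P v e) {k : ℕ}
    (hk : k + 2 ≤ P.card) : ((P.erase v).filter (fun y => lft P y v ≤ k)).card = k + 1 := by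
  rw [← card_rank_lt (P.erase v) (fun y => tau e v y) _ (k + 1)
    (by rw [Finset.card_erase_of_mem h.1]; omega)]
  · congr 1
    apply Finset.filter_congr
    intro y hy
    rw [Finset.mem_erase] at hy
    rw [h.lft_in hy.2 hy.1]
    omega
  · intro x hx y hy hxy
    rw [Finset.mem_erase] at hx hy
    exact h.tau_ne hP hx.2 hx.1 hy.2 hy.1 hxy

structure Hv (P : Finset (ℝ × ℝ)) (k : ℕ) (v u : ℝ × ℝ) : Prop where
  hull : ∃ e, Hull P v e ∧ 0 < det2 e u
  nt : NT P u
  below : k + 1 ≤ (P.filter (fun y => dot2 u y < dot2 u v)).card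
  above : k + 1 ≤ (P.filter (fun y => dot2 u v < dot2 u y)).card

theorem Hv.mem {P : Finset (ℝ × ℝ)} {k : ℕ} {v u : ℝ × ℝ} (h : Hv P k v u) : v ∈ P := by
  obtain ⟨e, he, _⟩ := h.hull
  exact he.1

theorem cramer (e u s d : ℝ × ℝ) :
    det2 e u * dot2 s d = - det2 u s * dot2 e d + det2 e s * dot2 u d := by
  simp only [det2, dot2]; ring

theorem Hv.low {P : Finset (ℝ × ℝ)} {k : ℕ} {v u s : ℝ × ℝ} (h : Hv P k v u) (hs : 0 < det2 u s) :
    k + 1 ≤ (P.filter (fun y => dot2 s y < dot2 s v)).card := by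
  obtain ⟨e, he, heu⟩ := h.hull
  rcases le_total 0 (det2 e s) with h1 | h1
  · refine h.below.trans (Finset.card_le_card ?_)
    intro y hy
    simp only [Finset.mem_filter] at *
    refine ⟨hy.1, ?_⟩
    have hyv : y ≠ v := by rintro rfl; exact lt_irrefl _ hy.2
    have h2 := he.pos hy.1 hyv
    have h3 := cramer e u s (y - v)
    have h4 : dot2 u (y - v) < 0 := by rw [dot_sub]; linarith
    have h5 : dot2 s (y - v) < 0 := by
      have : det2 e u * dot2 s (y - v) < 0 := by
        rw [h3]; nlinarith [mul_pos hs h2, mul_nonneg h1 (neg_pos.2 h4).le]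
      by_contra hc
      nlinarith [mul_nonneg heu.le (not_lt.1 hc)]
    rw [dot_sub] at h5; linarith
  · refine h.above.trans (Finset.card_le_card ?_)
    intro y hy
    simp only [Finset.mem_filter] at *
    refine ⟨hy.1, ?_⟩
    have hyv : y ≠ v := by rintro rfl; exact lt_irrefl _ hy.2
    have h2 := he.pos hy.1 hyv
    have h3 := cramer e u s (y - v)
    have h4 : 0 < dot2 u (y - v) := by rw [dot_sub]; linarith
    have h5 : dot2 s (y - v) < 0 := by
      have : det2 e u * dot2 s (y - v) < 0 := by
        rw [h3]; nlinarith [mul_pos hs h2, mul_nonneg (neg_nonneg.2 h1) h4.le]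
      by_contra hc
      nlinarith [mul_nonneg heu.le (not_lt.1 hc)]
    rw [dot_sub] at h5; linarith

theorem Hv.high {P : Finset (ℝ × ℝ)} {k : ℕ} {v u s : ℝ × ℝ} (h : Hv P k v u) (hs : 0 < det2 s u) :
    k + 1 ≤ (P.filter (fun y => dot2 s v < dot2 s y)).card := by
  have h1 : 0 < det2 u (-s) := by
    have : det2 u (-s) = det2 s u := by simp only [det2, Prod.fst_neg, Prod.snd_neg]; ring
    rwa [this]
  have h2 := h.low h1
  have h3 := rk_neg (P := P) (u := s) v
  unfold rk at h3
  rwa [h3] at h2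

theorem exists_Hv {P : Finset (ℝ × ℝ)} (hP : GP P) {k : ℕ} (hk : 2 * k + 3 ≤ P.card) {v e : ℝ × ℝ}
    (h : Hull P v e) (W : Finset (ℝ × ℝ)) (hW : ∀ w ∈ W, w ≠ 0) :
    ∃ u, Hv P k v u ∧ ∀ w ∈ W, det2 u w ≠ 0 := by
  set Y := P.erase v with hY
  have hYc : Y.card = P.card - 1 := Finset.card_erase_of_mem h.1
  have hinj : ∀ x ∈ Y, ∀ y ∈ Y, x ≠ y → tau e v x ≠ tau e v y := by
    intro x hx y hy hxy
    rw [hY, Finset.mem_erase] at hx hy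
    exact h.tau_ne hP hx.2 hx.1 hy.2 hy.1 hxy
  set L := Y.filter (fun y => (Y.filter (fun z => tau e v z < tau e v y)).card < k + 1) with hL
  have hLc : L.card = k + 1 := card_rank_lt Y (tau e v) hinj (k + 1) (by omega)
  have hLY : L ⊆ Y := Finset.filter_subset _ _
  have hUc : (Y \ L).card = Y.card - (k + 1) := by rw [Finset.card_sdiff_of_subset hLY, hLc]
  have hlt : ∀ x ∈ L, ∀ y ∈ Y \ L, tau e v x < tau e v y := by
    intro x hx y hy
    rw [Finset.mem_sdiff] at hy
    by_contra hc
    apply hy.2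
    rw [hL, Finset.mem_filter] at hx ⊢
    refine ⟨hy.1, lt_of_le_of_lt (Finset.card_le_card ?_) hx.2⟩
    intro z hz
    simp only [Finset.mem_filter] at *
    exact ⟨hz.1, by linarith [hz.2]⟩
  obtain ⟨x0, hx0, hx0m⟩ := Finset.exists_max_image L (tau e v) (Finset.card_pos.1 (by omega))
  obtain ⟨y0, hy0, hy0m⟩ := Finset.exists_min_image (Y \ L) (tau e v) (Finset.card_pos.1 (by omega))
  have h0 := hlt x0 hx0 y0 hy0
  set B : Finset ℝ := (P ×ˢ P).image (fun z => det2 e (z.1 - z.2) / dot2 e (z.1 - z.2)) ∪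
    W.image (fun w => (- dot2 e w) / det2 e w) with hB
  obtain ⟨t, ht, htB⟩ := (Set.Ioo_infinite h0).exists_notMem_finset B
  have hyv : y0 ∈ P ∧ y0 ≠ v := by
    have := (Finset.mem_sdiff.1 hy0).1
    rw [hY, Finset.mem_erase] at this
    exact ⟨this.2, this.1⟩
  have hepos := sq_pos_of_dot (h.pos hyv.1 hyv.2).ne'
  set u : ℝ × ℝ := (-e.2 - t * e.1, e.1 - t * e.2) with hu
  have hdot : ∀ d, dot2 u d = det2 e d - t * dot2 e d := by
    intro d; simp only [hu, dot2, det2]; ring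
  have hbad : ∀ z : ℝ, z ∈ B → t ≠ z := fun z hz h => htB (h ▸ hz)
  have key : ∀ y ∈ Y, dot2 u y - dot2 u v = dot2 e (y - v) * (tau e v y - t) := by
    intro y hy
    rw [hY, Finset.mem_erase] at hy
    rw [← dot_sub, hdot]
    have := (h.pos hy.2 hy.1).ne'
    unfold tau
    field_simp
  refine ⟨u, ⟨⟨e, h, ?_⟩, ?_, ?_, ?_⟩, ?_⟩
  · have : det2 e u = e.1 ^ 2 + e.2 ^ 2 := by simp only [hu, det2]; ring
    rwa [this]
  · intro x hx y hy hxy h1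
    have h2 : dot2 u (x - y) = 0 := by rw [dot_sub]; linarith
    rw [hdot] at h2
    have h3 := hbad (det2 e (x - y) / dot2 e (x - y)) (by
      rw [hB, Finset.mem_union]; left
      exact Finset.mem_image.2 ⟨(x, y), by simp [hx, hy], rfl⟩)
    by_cases h4 : dot2 e (x - y) = 0
    · rw [h4] at h2
      simp only [mul_zero, sub_zero] at h2
      have h5 : (e.1 ^ 2 + e.2 ^ 2) * (x - y).1 = 0 := by
        have : (e.1 ^ 2 + e.2 ^ 2) * (x - y).1 = e.1 * dot2 e (x - y) - e.2 * det2 e (x - y) := by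
          simp only [dot2, det2]; ring
        rw [this, h2, h4]; ring
      have h6 : (e.1 ^ 2 + e.2 ^ 2) * (x - y).2 = 0 := by
        have : (e.1 ^ 2 + e.2 ^ 2) * (x - y).2 = e.2 * dot2 e (x - y) + e.1 * det2 e (x - y) := by
          simp only [dot2, det2]; ring
        rw [this, h2, h4]; ring
      rw [mul_eq_zero] at h5 h6
      simp only [Prod.fst_sub, Prod.snd_sub] at h5 h6
      apply hxy
      ext
      · rcases h5 with h | h <;> linarith
      · rcases h6 with h | h <;> linarith
    · apply h3
      field_simp
      linarith
  · rw [← hLc]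
    apply Finset.card_le_card
    intro y hy
    have h1 := hLY hy
    have h2 := key y h1
    rw [hY, Finset.mem_erase] at h1
    rw [Finset.mem_filter]
    refine ⟨h1.2, ?_⟩
    have h3 := h.pos h1.2 h1.1
    have h4 := hx0m y hy
    have := mul_pos h3 (show 0 < t - tau e v y by linarith [ht.1])
    linarith
  · have : k + 1 ≤ (Y \ L).card := by omega
    refine this.trans (Finset.card_le_card ?_)
    intro y hy
    have h1 := (Finset.mem_sdiff.1 hy).1
    have h2 := key y h1
    rw [hY, Finset.mem_erase] at h1
    rw [Finset.mem_filter]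
    refine ⟨h1.2, ?_⟩
    have h3 := h.pos h1.2 h1.1
    have h4 := hy0m y hy
    have := mul_pos h3 (show 0 < tau e v y - t by linarith [ht.2])
    linarith
  · intro w hw h1
    have h2 : det2 u w = - dot2 e w - t * det2 e w := by simp only [hu, dot2, det2]; ring
    rw [h2] at h1
    have h3 := hbad (- dot2 e w / det2 e w) (by
      rw [hB, Finset.mem_union]; right
      exact Finset.mem_image.2 ⟨w, hw, rfl⟩)
    by_cases h4 : det2 e w = 0
    · rw [h4] at h1
      have h7 : dot2 e w = 0 := by linarith
      have h5 : (e.1 ^ 2 + e.2 ^ 2) * w.1 = 0 := by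
        have : (e.1 ^ 2 + e.2 ^ 2) * w.1 = e.1 * dot2 e w - e.2 * det2 e w := by
          simp only [dot2, det2]; ring
        rw [this, h7, h4]; ring
      have h6 : (e.1 ^ 2 + e.2 ^ 2) * w.2 = 0 := by
        have : (e.1 ^ 2 + e.2 ^ 2) * w.2 = e.2 * dot2 e w + e.1 * det2 e w := by
          simp only [dot2, det2]; ring
        rw [this, h7, h4]; ring
      rw [mul_eq_zero] at h5 h6
      apply hW w hw
      ext
      · rcases h5 with h | h
        · linarith
        · simpa using h
      · rcases h6 with h | h
        · linarith
        · simpa using h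
    · apply h3
      field_simp
      linarith

theorem Hv.ne_zero {P : Finset (ℝ × ℝ)} {k : ℕ} {v u : ℝ × ℝ} (h : Hv P k v u) : u ≠ 0 := by
  rintro rfl
  obtain ⟨e, _, h⟩ := h.hull
  simp [det2] at h

theorem exists_family {P : Finset (ℝ × ℝ)} (hP : GP P) {k : ℕ} (hk : 2 * k + 3 ≤ P.card)
    (H : Finset (ℝ × ℝ)) (hH : ∀ v ∈ H, ∃ e, Hull P v e) :
    ∃ f : ℝ × ℝ → ℝ × ℝ, (∀ v ∈ H, Hv P k v (f v)) ∧
      ∀ v ∈ H, ∀ w ∈ H, v ≠ w → det2 (f v) (f w) ≠ 0 := by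
  induction H using Finset.induction_on with
  | empty => exact ⟨id, by simp, by simp⟩
  | insert a s ha ih =>
    obtain ⟨f, hf1, hf2⟩ := ih (fun v hv => hH v (Finset.mem_insert_of_mem hv))
    obtain ⟨e, he⟩ := hH a (Finset.mem_insert_self _ _)
    obtain ⟨u, hu, huw⟩ := exists_Hv hP hk he (s.image f) (by
      intro w hw
      obtain ⟨v, hv, rfl⟩ := Finset.mem_image.1 hw
      exact (hf1 v hv).ne_zero)
    have hne : ∀ v ∈ s, v ≠ a := fun v hv h => ha (h ▸ hv)
    refine ⟨Function.update f a u, ?_, ?_⟩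
    · intro v hv
      rcases Finset.mem_insert.1 hv with rfl | hv
      · simpa using hu
      · rw [Function.update_of_ne (hne v hv)]; exact hf1 v hv
    · intro v hv w hw hvw
      rw [Finset.mem_insert] at hv hw
      rcases hv with rfl | hv <;> rcases hw with rfl | hw
      · exact absurd rfl hvw
      · rw [Function.update_of_ne (hne w hw), Function.update_self]
        exact huw _ (Finset.mem_image_of_mem _ hw)
      · rw [Function.update_of_ne (hne v hv), Function.update_self]
        have := huw _ (Finset.mem_image_of_mem f hv)
        have h2 : det2 (f v) u = - det2 u (f v) := by simp only [det2]; ring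
        rw [h2]; exact neg_ne_zero.2 this
      · rw [Function.update_of_ne (hne v hv), Function.update_of_ne (hne w hw)]
        exact hf2 v hv w hw hvw

theorem exists_perturb (P H : Finset (ℝ × ℝ)) (s : ℝ × ℝ) (hs : s ≠ 0)
    (hH : ∀ u ∈ H, 0 < det2 s u) :
    ∃ s', NT P s' ∧ ∀ u ∈ H, 0 < det2 s' u := by
  have h1 : ∀ᶠ ε : ℝ in nhdsWithin 0 (Set.Ioi 0),
      ∀ u ∈ H, 0 < det2 (s.1 - ε * s.2, s.2 + ε * s.1) u := by
    rw [Filter.eventually_all_finset]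
    intro u hu
    apply Filter.Eventually.filter_mono nhdsWithin_le_nhds
    have hc : Continuous (fun ε : ℝ => det2 (s.1 - ε * s.2, s.2 + ε * s.1) u) := by
      unfold det2; fun_prop
    apply hc.continuousAt.eventually_const_lt
    simpa using hH u hu
  have h2 : ∀ᶠ ε : ℝ in nhdsWithin 0 (Set.Ioi 0),
      ∀ z ∈ P ×ˢ P, z.1 ≠ z.2 → dot2 (s.1 - ε * s.2, s.2 + ε * s.1) (z.1 - z.2) ≠ 0 := by
    rw [Filter.eventually_all_finset]
    rintro ⟨x, y⟩ hz
    simp only [Finset.mem_product] at hz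
    by_cases hxy : x = y
    · simp [hxy]
    simp only [ne_eq, hxy, not_false_eq_true, true_imp_iff]
    by_cases h0 : dot2 s (x - y) = 0
    · filter_upwards [self_mem_nhdsWithin] with ε hε h3
      have hε' : 0 < ε := hε
      have h4 : dot2 (s.1 - ε * s.2, s.2 + ε * s.1) (x - y) = dot2 s (x - y) + ε * det2 s (x - y) := by
        simp only [dot2, det2]; ring
      rw [h4, h0, zero_add, mul_eq_zero] at h3
      have h5 : det2 s (x - y) = 0 := by
        rcases h3 with h | h
        · linarith
        · exact h
      have h6 : 0 < s.1 ^ 2 + s.2 ^ 2 := by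
        by_contra hc
        have h2 : s.1 = 0 := by nlinarith [sq_nonneg s.1, sq_nonneg s.2]
        have h3 : s.2 = 0 := by nlinarith [sq_nonneg s.1, sq_nonneg s.2]
        exact hs (Prod.ext h2 h3)
      have h7 : (s.1 ^ 2 + s.2 ^ 2) * ((x - y).1 ^ 2 + (x - y).2 ^ 2) = 0 := by
        have : (s.1 ^ 2 + s.2 ^ 2) * ((x - y).1 ^ 2 + (x - y).2 ^ 2) =
          dot2 s (x - y) ^ 2 + det2 s (x - y) ^ 2 := by simp only [dot2, det2]; ring
        rw [this, h0, h5]; ring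
      have h8 : (x - y).1 ^ 2 + (x - y).2 ^ 2 = 0 := by
        rcases mul_eq_zero.1 h7 with h | h
        · linarith
        · exact h
      apply hxy
      simp only [Prod.fst_sub, Prod.snd_sub] at h8
      ext <;> nlinarith [sq_nonneg (x.1 - y.1), sq_nonneg (x.2 - y.2)]
    · apply Filter.Eventually.filter_mono nhdsWithin_le_nhds
      have hc : Continuous (fun ε : ℝ => dot2 (s.1 - ε * s.2, s.2 + ε * s.1) (x - y)) := by
        unfold dot2; fun_prop
      apply hc.continuousAt.eventually_ne
      simpa using h0
  obtain ⟨ε, h3, h4⟩ := (h1.and h2).exists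
  refine ⟨_, ?_, h3⟩
  intro x hx y hy hxy h5
  apply h4 (x, y) (by simp [hx, hy]) hxy
  rw [dot_sub]
  linarith

structure Trip (P : Finset (ℝ × ℝ)) (k : ℕ) (p q r a b c : ℝ × ℝ) (α β γ : ℝ) : Prop where
  hp : Hv P k p a
  hq : Hv P k q b
  hr : Hv P k r c
  pq : p ≠ q
  qr : q ≠ r
  rp : r ≠ p
  α0 : 0 < α
  β0 : 0 < β
  γ0 : 0 < γ
  sum : α • a + β • b + γ • c = 0
  ab : 0 < det2 a b
  bc : 0 < det2 b c
  ca : 0 < det2 c a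

theorem Trip.rot {P : Finset (ℝ × ℝ)} {k : ℕ} {p q r a b c : ℝ × ℝ} {α β γ : ℝ}
    (h : Trip P k p q r a b c α β γ) : Trip P k q r p b c a β γ α :=
  ⟨h.hq, h.hr, h.hp, h.qr, h.rp, h.pq, h.β0, h.γ0, h.α0, by rw [← h.sum]; abel, h.bc, h.ca, h.ab⟩

theorem zero_mem_hull {P : Finset (ℝ × ℝ)} (hne : P.Nonempty) {k : ℕ}
    (H : Finset (ℝ × ℝ)) (hH : ∀ v e, Hull P v e → v ∈ H) (f : ℝ × ℝ → ℝ × ℝ)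
    (hf : ∀ v ∈ H, Hv P k v (f v)) : (0 : ℝ × ℝ) ∈ convexHull ℝ (f '' (H : Set (ℝ × ℝ))) := by
  by_contra h0
  have hfin : (f '' (H : Set (ℝ × ℝ))).Finite := (Finset.finite_toSet H).image f
  obtain ⟨g, t, h1, h2⟩ := geometric_hahn_banach_point_closed (convex_convexHull ℝ (f '' (H : Set (ℝ × ℝ))))
    (hfin.isClosed_convexHull ℝ) h0
  have hg : ∀ w : ℝ × ℝ, g w = w.1 * g (1, 0) + w.2 * g (0, 1) := by
    intro w
    have : w = w.1 • ((1, 0) : ℝ × ℝ) + w.2 • ((0, 1) : ℝ × ℝ) := by ext <;> simp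
    calc g w = g (w.1 • ((1, 0) : ℝ × ℝ) + w.2 • ((0, 1) : ℝ × ℝ)) := by rw [← this]
      _ = _ := by rw [map_add, map_smul, map_smul]; rfl
  set s : ℝ × ℝ := (g (0, 1), - g (1, 0)) with hs
  have hs1 : ∀ w, det2 s w = g w := by
    intro w; rw [hg w]; simp only [det2, hs]; ring
  rw [map_zero] at h1
  have hpos : ∀ u ∈ H.image f, 0 < det2 s u := by
    intro u hu
    obtain ⟨v, hv, rfl⟩ := Finset.mem_image.1 hu
    rw [hs1]
    exact h1.trans (h2 _ (subset_convexHull ℝ _ ⟨v, hv, rfl⟩))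
  have hHne : ∀ s', NT P s' → ∃ x ∈ P, (∀ y ∈ P, dot2 s' y ≤ dot2 s' x) ∧ x ∈ H := by
    intro s' hs'
    obtain ⟨x, hx, hm⟩ := Finset.exists_max_image P (dot2 s') hne
    refine ⟨x, hx, hm, hH x (-s') ⟨hx, ?_⟩⟩
    intro y hy hyx
    rw [dot_neg, dot_neg]
    have := lt_of_le_of_ne (hm y hy) (hs' y hy x hx hyx)
    linarith
  by_cases hs0 : s = 0
  · obtain ⟨s', h3, _⟩ := exists_perturb P ∅ (1, 0) (by simp) (by simp)
    obtain ⟨x, hx, -, hxH⟩ := hHne s' h3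
    have := hpos (f x) (Finset.mem_image_of_mem _ hxH)
    rw [hs0] at this
    simp [det2] at this
  · obtain ⟨s', h3, h4⟩ := exists_perturb P _ s hs0 hpos
    obtain ⟨x, hx, hm, hxH⟩ := hHne s' h3
    have h5 := (hf x hxH).high (h4 (f x) (Finset.mem_image_of_mem _ hxH))
    have h6 : P.filter (fun y => dot2 s' x < dot2 s' y) = ∅ := by
      rw [Finset.filter_eq_empty_iff]
      intro y hy
      exact not_lt.2 (hm y hy)
    rw [h6] at h5
    simp at h5

theorem exists_trip {P : Finset (ℝ × ℝ)} (hP : GP P) {k : ℕ} (hk : 2 * k + 3 ≤ P.card) :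
    ∃ p q r a b c α β γ, Trip P k p q r a b c α β γ := by
  set H := P.filter (fun v => ∃ e, Hull P v e) with hH
  obtain ⟨f, hf1, hf2⟩ := exists_family hP hk H (by simp [hH])
  have h0 := zero_mem_hull (P := P) (k := k) (Finset.card_pos.1 (by omega)) H
    (fun v e hv => by rw [hH, Finset.mem_filter]; exact ⟨hv.1, e, hv⟩) f hf1
  obtain ⟨ι, hι, z, w, hz, haff, hw, hw1, hsum⟩ := eq_pos_convex_span_of_mem_convexHull h0
  have hinj := haff.injective
  have hcard : Fintype.card ι ≤ 3 := by
    have := haff.card_le_finrank_succ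
    have h2 : Module.finrank ℝ (vectorSpan ℝ (Set.range z)) ≤ Module.finrank ℝ (ℝ × ℝ) :=
      Submodule.finrank_le _
    simp at h2
    omega
  have hz' : ∀ i, ∃ v ∈ H, f v = z i := fun i => by
    obtain ⟨v, hv, h⟩ := hz ⟨i, rfl⟩
    exact ⟨v, hv, h⟩
  choose g hgH hgz using hz'
  have hgne : ∀ i j, i ≠ j → g i ≠ g j := by
    intro i j hij h
    apply hij
    apply hinj
    rw [← hgz, ← hgz, h]
  have hHv : ∀ i, Hv P k (g i) (z i) := by
    intro i; rw [← hgz]; exact hf1 _ (hgH i)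
  have hdet : ∀ i j, i ≠ j → det2 (z i) (z j) ≠ 0 := by
    intro i j hij
    rw [← hgz i, ← hgz j]
    exact hf2 _ (hgH i) _ (hgH j) (hgne i j hij)
  obtain ⟨m, hm⟩ : ∃ m, Fintype.card ι = m := ⟨_, rfl⟩
  have e := Fintype.equivFinOfCardEq hm
  rw [← e.symm.sum_comp] at hw1 hsum
  have hm3 : m ≤ 3 := by omega
  interval_cases m
  · simp at hw1
  · simp only [Fin.sum_univ_one] at hsum
    have := (hHv (e.symm 0)).ne_zero
    rw [smul_eq_zero] at hsum
    rcases hsum with h | h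
    · exact absurd h (hw _).ne'
    · exact absurd h this
  · simp only [Fin.sum_univ_two] at hsum
    have h1 := hdet (e.symm 0) (e.symm 1) (by simp)
    have h2 := hw (e.symm 1)
    exfalso
    have h3 : w (e.symm 1) * det2 (z (e.symm 0)) (z (e.symm 1)) = 0 := by
      have hx := congrArg Prod.fst hsum
      have hy := congrArg Prod.snd hsum
      simp at hx hy
      simp only [det2]
      linear_combination (z (e.symm 0)).1 * hy - (z (e.symm 0)).2 * hx
    rcases mul_eq_zero.1 h3 with h | h
    · exact h2.ne' h
    · exact h1 h
  · simp only [Fin.sum_univ_three] at hsum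
    set i0 := e.symm 0
    set i1 := e.symm 1
    set i2 := e.symm 2
    have n01 : i0 ≠ i1 := by simp [i0, i1]
    have n02 : i0 ≠ i2 := by simp [i0, i2]
    have n12 : i1 ≠ i2 := by simp [i1, i2]
    have hx := congrArg Prod.fst hsum
    have hy := congrArg Prod.snd hsum
    simp at hx hy
    have d1 : w i1 * det2 (z i0) (z i1) = w i2 * det2 (z i2) (z i0) := by
      simp only [det2]
      linear_combination (z i0).1 * hy - (z i0).2 * hx
    have d2 : w i2 * det2 (z i1) (z i2) = w i0 * det2 (z i0) (z i1) := by
      simp only [det2]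
      linear_combination (z i1).1 * hy - (z i1).2 * hx
    have sg : ∀ a b x y : ℝ, 0 < a → 0 < b → a * x = b * y → 0 < x → 0 < y := by
      intro a b x y ha hb h hx
      have : 0 < b * y := by rw [← h]; exact mul_pos ha hx
      exact (mul_pos_iff_of_pos_left hb).1 this
    have dsw : ∀ a b, det2 a b = - det2 b a := by intro a b; simp only [det2]; ring
    rcases lt_or_gt_of_ne (hdet i0 i1 n01) with h | h
    · have p1 : 0 < det2 (z i1) (z i0) := by rw [dsw]; linarith
      have p2 : 0 < det2 (z i0) (z i2) :=
        sg _ _ _ _ (hw i1) (hw i2) (by rw [dsw (z i1), dsw (z i0) (z i2)]; linarith) p1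
      have p3 : 0 < det2 (z i2) (z i1) :=
        sg _ _ _ _ (hw i0) (hw i2) (by rw [dsw (z i1), dsw (z i2) (z i1)]; linarith) p1
      refine ⟨g i1, g i0, g i2, z i1, z i0, z i2, w i1, w i0, w i2, hHv _, hHv _, hHv _,
        hgne _ _ n01.symm, hgne _ _ n02, hgne _ _ n12.symm, hw _, hw _, hw _, ?_, p1, p2, p3⟩
      rw [← hsum]; abel
    · have p2 : 0 < det2 (z i2) (z i0) := sg _ _ _ _ (hw i1) (hw i2) d1 h
      have p3 : 0 < det2 (z i1) (z i2) := sg _ _ _ _ (hw i0) (hw i2) d2.symm h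
      exact ⟨g i0, g i1, g i2, z i0, z i1, z i2, w i0, w i1, w i2, hHv _, hHv _, hHv _,
        hgne _ _ n01, hgne _ _ n12, hgne _ _ n02.symm, hw _, hw _, hw _, hsum, h, p3, p2⟩
end

section
open scoped Classical

theorem binet (a w d d' : ℝ × ℝ) :
    det2 a w * det2 d d' = dot2 a d * dot2 w d' - dot2 a d' * dot2 w d := by
  simp only [det2, dot2]; ring

theorem gate_pt {P : Finset (ℝ × ℝ)} (hP : GP P) {a b : ℝ × ℝ} (ha : NT P a)
    (hab : 0 < det2 a b) {m : ℕ} {x : ℝ × ℝ} (hx : x ∈ P) (hxa : rk P a x < m) (hxb : m ≤ rk P b x) :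
    ∃ y ∈ P, dot2 a x < dot2 a y ∧ dot2 b y < dot2 b x ∧ lft P y x + 1 = m := by
  set F : ℝ × ℝ → ℝ → ℝ := fun z t => (1 - t) * (dot2 a z - dot2 a x) + t * (dot2 b z - dot2 b x) with hF
  have hFc : ∀ z, Continuous (F z) := by intro z; simp only [hF]; fun_prop
  set R : ℝ → ℕ := fun t => (P.filter (fun z => F z t < 0)).card with hR
  have hR0 : R 0 < m := by
    have : R 0 = rk P a x := by
      simp only [hR, rk, hF]
      congr 1
      apply Finset.filter_congr
      intro z _
      constructor <;> intro h <;> linarith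
    omega
  have hR1 : m ≤ R 1 := by
    have : R 1 = rk P b x := by
      simp only [hR, rk, hF]
      congr 1
      apply Finset.filter_congr
      intro z _
      constructor <;> intro h <;> linarith
    omega
  have hopen : IsOpen {t | m ≤ R t} := by
    rw [isOpen_iff_mem_nhds]
    intro t ht
    have h1 : ∀ᶠ t' in nhds t, ∀ z ∈ P.filter (fun z => F z t < 0), F z t' < 0 := by
      rw [Filter.eventually_all_finset]
      intro z hz
      exact (hFc z).continuousAt.eventually_lt_const (Finset.mem_filter.1 hz).2
    filter_upwards [h1] with t' ht'
    refine le_trans ht (Finset.card_le_card ?_)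
    intro z hz
    rw [Finset.mem_filter]
    exact ⟨(Finset.mem_filter.1 hz).1, ht' z hz⟩
  have hcl : IsClosed {t | R t < m} := by
    have : {t | R t < m} = {t | m ≤ R t}ᶜ := by ext t; simp
    rw [this]; exact hopen.isClosed_compl
  have hcomp : IsCompact (Set.Icc (0:ℝ) 1 ∩ {t | R t < m}) := isCompact_Icc.inter_right hcl
  obtain ⟨t, ⟨ht01, htm⟩, htmax⟩ := hcomp.exists_isGreatest ⟨0, by simp, hR0⟩
  replace htm : R t < m := htm
  have ht1 : t < 1 := by
    rcases lt_or_eq_of_le ht01.2 with h | h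
    · exact h
    · rw [h] at htm; omega
  have hev : ∀ᶠ t' in nhdsWithin t (Set.Ioi t), (∀ z ∈ P, 0 < F z t → 0 < F z t') ∧ t' < 1 := by
    refine Filter.Eventually.and ?_ (Filter.Eventually.filter_mono nhdsWithin_le_nhds (eventually_lt_nhds ht1))
    rw [Filter.eventually_all_finset]
    intro z _
    by_cases h : 0 < F z t
    · apply Filter.Eventually.filter_mono nhdsWithin_le_nhds
      filter_upwards [(hFc z).continuousAt.eventually_const_lt h] with t' h1 _ using h1
    · exact Filter.Eventually.of_forall (fun _ h' => absurd h' h)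
  obtain ⟨t', ⟨h1, h2⟩, h3⟩ := (hev.and self_mem_nhdsWithin).exists
  have h3' : t < t' := h3
  have hRt' : m ≤ R t' := by
    by_contra hc
    have := htmax ⟨⟨by linarith [ht01.1], h2.le⟩, not_le.1 hc⟩
    linarith
  have hsub : P.filter (fun z => F z t' < 0) ⊆ P.filter (fun z => F z t < 0) ∪
      P.filter (fun z => F z t = 0 ∧ F z t' < 0) := by
    intro z hz
    simp only [Finset.mem_union, Finset.mem_filter] at *
    rcases lt_trichotomy (F z t) 0 with h | h | h
    · left; exact ⟨hz.1, h⟩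
    · right; exact ⟨hz.1, h, hz.2⟩
    · linarith [h1 z hz.1 h, hz.2]
  have hle := (Finset.card_le_card hsub).trans (Finset.card_union_le _ _)
  change R t' ≤ R t + _ at hle
  have hne : (P.filter (fun z => F z t = 0 ∧ F z t' < 0)).Nonempty := by
    rw [← Finset.card_pos]; omega
  obtain ⟨y, hy⟩ := hne
  rw [Finset.mem_filter] at hy
  obtain ⟨hyP, hy0, hy1⟩ := hy
  have hyx : y ≠ x := by rintro rfl; simp [hF] at hy1
  have ht0 : 0 < t := by
    rcases lt_or_eq_of_le ht01.1 with h | h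
    · exact h
    · rw [← h] at hy0
      simp only [hF] at hy0
      exact absurd (show dot2 a y = dot2 a x by linarith) (ha y hyP x hx hyx)
  have hneg : (dot2 b y - dot2 b x) - (dot2 a y - dot2 a x) < 0 := by
    simp only [hF] at hy0 hy1
    by_contra hc
    nlinarith [mul_nonneg (sub_pos.2 h3').le (not_lt.1 hc)]
  have hA : 0 < dot2 a y - dot2 a x := by
    simp only [hF] at hy0
    nlinarith
  have hB : dot2 b y - dot2 b x < 0 := by
    simp only [hF] at hy0
    nlinarith
  set w : ℝ × ℝ := ((1 - t) * a.1 + t * b.1, (1 - t) * a.2 + t * b.2) with hw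
  have hFw : ∀ z, F z t = dot2 w (z - x) := by
    intro z
    simp only [hF, hw, dot2, Prod.fst_sub, Prod.snd_sub]; ring
  have haw : 0 < det2 a w := by
    have : det2 a w = t * det2 a b := by simp only [hw, det2]; ring
    rw [this]; positivity
  have huniq : P.filter (fun z => F z t = 0 ∧ F z t' < 0) ⊆ {y} := by
    intro z hz
    rw [Finset.mem_filter] at hz
    rw [Finset.mem_singleton]
    by_contra hzy
    have hzx : z ≠ x := by rintro rfl; simp [hF] at hz
    have h4 := binet a w (y - x) (z - x)
    rw [← hFw, ← hFw, hy0, hz.2.1] at h4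
    have h5 : det2 a w * det2 (y - x) (z - x) = 0 := by rw [h4]; ring
    rcases mul_eq_zero.1 h5 with h | h
    · linarith
    · exact hP x hx y hyP z hz.1 (Ne.symm hyx) (Ne.symm hzx) (Ne.symm hzy) h
  have hc1 := Finset.card_le_card huniq
  rw [Finset.card_singleton] at hc1
  have hlft : lft P y x = R t := by
    simp only [lft, hR]
    congr 1
    apply Finset.filter_congr
    intro z _
    have h4 := binet a w (x - y) (z - y)
    have h5 : dot2 w (x - y) = 0 := by
      have h6 := hFw y
      rw [hy0, dot_sub] at h6
      rw [dot_sub]; linarith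
    have h6 : dot2 w (z - y) = F z t := by
      rw [hFw, dot_sub, dot_sub]
      rw [dot_sub] at h5
      linarith
    rw [h5, h6, dot_sub] at h4
    constructor
    · intro h
      have := mul_pos haw h
      by_contra hc
      nlinarith [mul_nonneg hA.le (not_lt.1 hc)]
    · intro h
      have : 0 < det2 a w * det2 (x - y) (z - y) := by
        rw [h4]; nlinarith [mul_pos hA (neg_pos.2 h)]
      exact (mul_pos_iff_of_pos_left haw).1 this
  exact ⟨y, hyP, by linarith, by linarith, by omega⟩

noncomputable def Gt (P : Finset (ℝ × ℝ)) (m : ℕ) (a b : ℝ × ℝ) : Finset ((ℝ × ℝ) × (ℝ × ℝ)) :=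
  (P ×ˢ P).filter (fun z => dot2 a z.2 < dot2 a z.1 ∧ dot2 b z.2 < dot2 b z.1 ∧
    lft P z.1 z.2 + 1 = m)

theorem gate {P : Finset (ℝ × ℝ)} (hP : GP P) {a b : ℝ × ℝ} (ha : NT P a)
    (hab : 0 < det2 b a) (m : ℕ) :
    (Sm P m a \ Sm P m (-b)).card ≤ (Gt P m a b).card := by
  have h : Sm P m a \ Sm P m (-b) ⊆ (Gt P m a b).image Prod.snd := by
    intro x hx
    simp only [Sm, Finset.mem_sdiff, Finset.mem_filter, not_and, not_lt] at hx
    have hd : 0 < det2 a (-b) := by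
      have : det2 a (-b) = det2 b a := by simp only [det2, Prod.fst_neg, Prod.snd_neg]; ring
      rwa [this]
    obtain ⟨y, hy, h1, h2, h3⟩ := gate_pt hP ha hd hx.1.1 hx.1.2 (hx.2 hx.1.1)
    rw [Finset.mem_image]
    refine ⟨(y, x), ?_, rfl⟩
    rw [dot_neg, dot_neg] at h2
    simp only [Gt, Finset.mem_filter, Finset.mem_product]
    exact ⟨⟨hy, hx.1.1⟩, h1, by linarith, h3⟩
  exact (Finset.card_le_card h).trans Finset.card_image_le

noncomputable def NlS (P : Finset (ℝ × ℝ)) (j : ℕ) : Finset ((ℝ × ℝ) × (ℝ × ℝ)) :=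
  (P ×ˢ P).filter (fun z => z.1 ≠ z.2 ∧ lft P z.1 z.2 < j)

noncomputable def Nl (P : Finset (ℝ × ℝ)) (j : ℕ) : ℕ := (NlS P j).card

theorem mem_NlS {P : Finset (ℝ × ℝ)} {j : ℕ} {z : (ℝ × ℝ) × (ℝ × ℝ)} :
    z ∈ NlS P j ↔ (z.1 ∈ P ∧ z.2 ∈ P) ∧ z.1 ≠ z.2 ∧ lft P z.1 z.2 < j := by
  simp [NlS]

/-- `below` filter for the direction orthogonal to the pair -/
theorem left_iff (x y z v : ℝ × ℝ) (h : dot2 (-(x - y).2, (x - y).1) z < dot2 (-(x - y).2, (x - y).1) v)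
    (hv : 0 < det2 (y - x) (v - x)) : 0 < det2 (y - x) (z - x) := by
  simp only [dot2, det2, Prod.fst_sub, Prod.snd_sub] at *
  nlinarith

theorem low_pair {P : Finset (ℝ × ℝ)} {k : ℕ} {v u x y : ℝ × ℝ} (h : Hv P k v u)
    (hu : dot2 u y < dot2 u x) :
    k + 1 ≤ (P.filter (fun z => dot2 (-(x - y).2, (x - y).1) z < dot2 (-(x - y).2, (x - y).1) v)).card := by
  apply h.low
  have : det2 u (-(x - y).2, (x - y).1) = dot2 u x - dot2 u y := by
    rw [← dot_sub]; simp only [det2, dot2]; ring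
  rw [this]; linarith

theorem high_left {P : Finset (ℝ × ℝ)} {k : ℕ} {v u x y : ℝ × ℝ} (h : Hv P k v u)
    (hu : dot2 u y < dot2 u x) (hv : 0 < det2 (y - x) (v - x)) : k + 2 ≤ lft P x y := by
  have h1 := low_pair h hu
  set S := P.filter (fun z => dot2 (-(x - y).2, (x - y).1) z < dot2 (-(x - y).2, (x - y).1) v) with hS
  have h2 : v ∉ S := by simp [hS]
  have h3 : (insert v S).card = S.card + 1 := Finset.card_insert_of_notMem h2
  have h4 : (insert v S).card ≤ lft P x y := by
    apply Finset.card_le_card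
    intro z hz
    rw [Finset.mem_insert] at hz
    rw [Finset.mem_filter]
    rcases hz with rfl | hz
    · exact ⟨h.mem, hv⟩
    · rw [hS, Finset.mem_filter] at hz
      exact ⟨hz.1, left_iff x y z v hz.2 hv⟩
  omega

theorem high_left2_aux {P : Finset (ℝ × ℝ)} {k : ℕ} {v u v' x y : ℝ × ℝ} (h : Hv P k v u)
    (h' : v' ∈ P) (hne : v ≠ v')
    (hu : dot2 u y < dot2 u x) (hv : 0 < det2 (y - x) (v - x)) (hv' : 0 < det2 (y - x) (v' - x))
    (hle : dot2 (-(x - y).2, (x - y).1) v ≤ dot2 (-(x - y).2, (x - y).1) v') : k + 3 ≤ lft P x y := by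
  have h1 := low_pair h hu
  set S := P.filter (fun z => dot2 (-(x - y).2, (x - y).1) z < dot2 (-(x - y).2, (x - y).1) v) with hS
  have h2 : v ∉ S := by simp [hS]
  have h2' : v' ∉ insert v S := by
    rw [Finset.mem_insert, not_or]
    refine ⟨Ne.symm hne, ?_⟩
    rw [hS, Finset.mem_filter]
    intro h; linarith [h.2]
  have h3 : (insert v S).card = S.card + 1 := Finset.card_insert_of_notMem h2
  have h3' := Finset.card_insert_of_notMem h2'
  have h4 : (insert v' (insert v S)).card ≤ lft P x y := by
    apply Finset.card_le_card
    intro z hz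
    rw [Finset.mem_insert, Finset.mem_insert] at hz
    rw [Finset.mem_filter]
    rcases hz with rfl | rfl | hz
    · exact ⟨h', hv'⟩
    · exact ⟨h.mem, hv⟩
    · rw [hS, Finset.mem_filter] at hz
      exact ⟨hz.1, left_iff x y z v hz.2 hv⟩
  omega

theorem high_left2 {P : Finset (ℝ × ℝ)} {k : ℕ} {v u v' u' x y : ℝ × ℝ} (h : Hv P k v u)
    (h' : Hv P k v' u') (hne : v ≠ v')
    (hu : dot2 u y < dot2 u x) (hu' : dot2 u' y < dot2 u' x)
    (hv : 0 < det2 (y - x) (v - x)) (hv' : 0 < det2 (y - x) (v' - x)) : k + 3 ≤ lft P x y := by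
  rcases le_total (dot2 (-(x - y).2, (x - y).1) v) (dot2 (-(x - y).2, (x - y).1) v') with hle | hle
  · exact high_left2_aux h h'.mem hne hu hv hv' hle
  · exact high_left2_aux h' h.mem (Ne.symm hne) hu' hv' hv hle

theorem lft_erase {P : Finset (ℝ × ℝ)} {v : ℝ × ℝ} (hv : v ∈ P) (x y : ℝ × ℝ) :
    lft P x y = lft (P.erase v) x y + if 0 < det2 (y - x) (v - x) then 1 else 0 := by
  unfold lft
  conv_lhs => rw [← Finset.insert_erase hv]
  rw [Finset.filter_insert]
  split_ifs with h
  · rw [Finset.card_insert_of_notMem (by simp)]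
  · rfl

/-- the remaining points -/
noncomputable def Er (P : Finset (ℝ × ℝ)) (p q r : ℝ × ℝ) : Finset (ℝ × ℝ) := ((P.erase p).erase q).erase r

theorem mem_Er {P : Finset (ℝ × ℝ)} {p q r x : ℝ × ℝ} :
    x ∈ Er P p q r ↔ x ≠ r ∧ x ≠ q ∧ x ≠ p ∧ x ∈ P := by simp [Er]

theorem Er_rot (P : Finset (ℝ × ℝ)) (p q r : ℝ × ℝ) : Er P q r p = Er P p q r := by
  ext x; rw [mem_Er, mem_Er]; tauto

section
variable {P : Finset (ℝ × ℝ)} {k : ℕ} {p q r a b c : ℝ × ℝ} {α β γ : ℝ}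

theorem Er_sub : Er P p q r ⊆ P := fun _ hx => (mem_Er.1 hx).2.2.2

theorem Trip.card (h : Trip P k p q r a b c α β γ) : (Er P p q r).card + 3 = P.card := by
  have h1 : q ∈ P.erase p := Finset.mem_erase.2 ⟨h.pq.symm, h.hq.mem⟩
  have h2 : r ∈ (P.erase p).erase q := Finset.mem_erase.2 ⟨h.qr.symm, Finset.mem_erase.2 ⟨h.rp, h.hr.mem⟩⟩
  have h3 := Finset.card_erase_add_one h.hp.mem
  have h4 := Finset.card_erase_add_one h1
  have h5 := Finset.card_erase_add_one h2
  unfold Er; omega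

theorem Trip.lft_eq (h : Trip P k p q r a b c α β γ) (x y : ℝ × ℝ) :
    lft P x y = lft (Er P p q r) x y + (if 0 < det2 (y - x) (p - x) then 1 else 0) +
      (if 0 < det2 (y - x) (q - x) then 1 else 0) + (if 0 < det2 (y - x) (r - x) then 1 else 0) := by
  have h1 : q ∈ P.erase p := Finset.mem_erase.2 ⟨h.pq.symm, h.hq.mem⟩
  have h2 : r ∈ (P.erase p).erase q := Finset.mem_erase.2 ⟨h.qr.symm, Finset.mem_erase.2 ⟨h.rp, h.hr.mem⟩⟩
  rw [lft_erase h.hp.mem, lft_erase h1, lft_erase h2]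
  unfold Er; ring

theorem Trip.dsum (h : Trip P k p q r a b c α β γ) (d : ℝ × ℝ) :
    α * dot2 a d + β * dot2 b d + γ * dot2 c d = 0 := by
  have hx := congrArg Prod.fst h.sum
  have hy := congrArg Prod.snd h.sum
  simp at hx hy
  simp only [dot2]
  linear_combination d.1 * hx + d.2 * hy

theorem Trip.some_high (h : Trip P k p q r a b c α β γ) {x y : ℝ × ℝ} (hx : x ∈ P) (hy : y ∈ P)
    (hxy : x ≠ y) : dot2 a y < dot2 a x ∨ dot2 b y < dot2 b x ∨ dot2 c y < dot2 c x := by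
  by_contra hc
  push Not at hc
  obtain ⟨h1, h2, h3⟩ := hc
  have h1 := lt_of_le_of_ne h1 (h.hp.nt x hx y hy hxy)
  have h4 := h.dsum (y - x)
  rw [dot_sub, dot_sub, dot_sub] at h4
  nlinarith [mul_pos h.α0 (sub_pos.2 h1), mul_nonneg h.β0.le (sub_nonneg.2 h2),
    mul_nonneg h.γ0.le (sub_nonneg.2 h3)]

theorem Trip.not_all (h : Trip P k p q r a b c α β γ) {x y : ℝ × ℝ} (h1 : dot2 a y < dot2 a x)
    (h2 : dot2 b y < dot2 b x) (h3 : dot2 c y < dot2 c x) : False := by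
  have h4 := h.dsum (x - y)
  rw [dot_sub, dot_sub, dot_sub] at h4
  nlinarith [mul_pos h.α0 (sub_pos.2 h1), mul_pos h.β0 (sub_pos.2 h2),
    mul_pos h.γ0 (sub_pos.2 h3)]

theorem Trip.keep1 (h : Trip P k p q r a b c α β γ) {x y : ℝ × ℝ} (hx : x ∈ P) (hy : y ∈ P)
    (hxy : x ≠ y) (hl : lft (Er P p q r) x y + 2 ≤ k) : lft P x y ≤ k := by
  have h1 := h.lft_eq x y
  rcases h.some_high hx hy hxy with h2 | h2 | h2
  · by_cases h3 : 0 < det2 (y - x) (p - x)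
    · have := high_left h.hp h2 h3
      split_ifs at h1 <;> omega
    · split_ifs at h1 <;> omega
  · by_cases h3 : 0 < det2 (y - x) (q - x)
    · have := high_left h.hq h2 h3
      split_ifs at h1 <;> omega
    · split_ifs at h1 <;> omega
  · by_cases h3 : 0 < det2 (y - x) (r - x)
    · have := high_left h.hr h2 h3
      split_ifs at h1 <;> omega
    · split_ifs at h1 <;> omega

theorem Trip.keep2 (h : Trip P k p q r a b c α β γ) {x y : ℝ × ℝ}
    (hl : lft (Er P p q r) x y + 1 = k) (h1 : dot2 a y < dot2 a x)
    (h2 : dot2 b y < dot2 b x) : lft P x y ≤ k := by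
  have h0 := h.lft_eq x y
  by_cases h3 : 0 < det2 (y - x) (p - x)
  · have := high_left h.hp h1 h3
    by_cases h4 : 0 < det2 (y - x) (q - x)
    · have := high_left2 h.hp h.hq h.pq h1 h2 h3 h4
      split_ifs at h0 <;> omega
    · split_ifs at h0 <;> omega
  · by_cases h4 : 0 < det2 (y - x) (q - x)
    · have := high_left h.hq h2 h4
      split_ifs at h0 <;> omega
    · split_ifs at h0 <;> omega

theorem Trip.hull_card (h : Trip P k p q r a b c α β γ) (hP : GP P) (hk : 2 * k + 3 ≤ P.card) :
    6 * k + 3 ≤ ((NlS P (k + 1)).filter (fun z => z.1 ∈ ({p, q, r} : Finset (ℝ × ℝ)) ∨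
      z.2 ∈ ({p, q, r} : Finset (ℝ × ℝ)))).card := by
  set V : Finset (ℝ × ℝ) := {p, q, r} with hV
  have hVc : V.card = 3 := Finset.card_eq_three.2 ⟨p, q, r, h.pq, h.rp.symm, h.qr, rfl⟩
  have hVh : ∀ v ∈ V, ∃ e, Hull P v e := by
    intro v hv
    simp only [hV, Finset.mem_insert, Finset.mem_singleton] at hv
    rcases hv with rfl | rfl | rfl
    · obtain ⟨e, he, _⟩ := h.hp.hull; exact ⟨e, he⟩
    · obtain ⟨e, he, _⟩ := h.hq.hull; exact ⟨e, he⟩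
    · obtain ⟨e, he, _⟩ := h.hr.hull; exact ⟨e, he⟩
  have hO : ((NlS P (k + 1)).filter (fun z => z.1 ∈ V)).card = 3 * (k + 1) := by
    rw [Finset.card_eq_sum_card_fiberwise (f := Prod.fst) (t := V) (by intro z hz; simp at hz; exact hz.2)]
    rw [Finset.sum_congr rfl (g := fun _ => k + 1), Finset.sum_const, hVc, smul_eq_mul]
    intro v hv
    obtain ⟨e, he⟩ := hVh v hv
    refine Eq.trans ?_ (he.card_out hP (by omega : k + 2 ≤ P.card))
    refine Eq.trans ?_ (Finset.card_image_of_injective _ (Prod.mk_right_injective v))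
    congr 1
    ext ⟨z1, z2⟩
    simp only [Finset.mem_filter, mem_NlS, Finset.mem_image, Finset.mem_erase, Prod.mk.injEq]
    constructor
    · rintro ⟨⟨⟨⟨h1, h2⟩, h3, h4⟩, h5⟩, rfl⟩
      exact ⟨z2, ⟨⟨Ne.symm h3, h2⟩, by omega⟩, rfl, rfl⟩
    · rintro ⟨y, ⟨⟨h1, h2⟩, h3⟩, rfl, rfl⟩
      exact ⟨⟨⟨⟨he.1, h2⟩, Ne.symm h1, by omega⟩, hv⟩, rfl⟩
  have hI : ((NlS P (k + 1)).filter (fun z => z.2 ∈ V)).card = 3 * (k + 1) := by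
    rw [Finset.card_eq_sum_card_fiberwise (f := Prod.snd) (t := V) (by intro z hz; simp at hz; exact hz.2)]
    rw [Finset.sum_congr rfl (g := fun _ => k + 1), Finset.sum_const, hVc, smul_eq_mul]
    intro v hv
    obtain ⟨e, he⟩ := hVh v hv
    refine Eq.trans ?_ (he.card_in hP (by omega : k + 2 ≤ P.card))
    refine Eq.trans ?_ (Finset.card_image_of_injective _ (Prod.mk_left_injective v))
    congr 1
    ext ⟨z1, z2⟩
    simp only [Finset.mem_filter, mem_NlS, Finset.mem_image, Finset.mem_erase, Prod.mk.injEq]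
    constructor
    · rintro ⟨⟨⟨⟨h1, h2⟩, h3, h4⟩, h5⟩, rfl⟩
      exact ⟨z1, ⟨⟨h3, h1⟩, by omega⟩, rfl, rfl⟩
    · rintro ⟨y, ⟨⟨h1, h2⟩, h3⟩, rfl, rfl⟩
      exact ⟨⟨⟨⟨h2, he.1⟩, h1, by omega⟩, hv⟩, rfl⟩
  have hor : (NlS P (k + 1)).filter (fun z => z.1 ∈ V ∨ z.2 ∈ V) =
      (NlS P (k + 1)).filter (fun z => z.1 ∈ V) ∪ (NlS P (k + 1)).filter (fun z => z.2 ∈ V) :=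
    Finset.filter_or _ _ _
  rw [hor]
  have hcu := Finset.card_union_add_card_inter ((NlS P (k + 1)).filter (fun z => z.1 ∈ V))
    ((NlS P (k + 1)).filter (fun z => z.2 ∈ V))
  have hint : ((NlS P (k + 1)).filter (fun z => z.1 ∈ V) ∩ (NlS P (k + 1)).filter (fun z => z.2 ∈ V)).card ≤ 3 := by
    refine le_trans (Finset.card_le_card (t := {if lft P p q ≤ k then (p, q) else (q, p),
      if lft P q r ≤ k then (q, r) else (r, q), if lft P r p ≤ k then (r, p) else (p, r)}) ?_)
      Finset.card_le_three
    rintro ⟨x, y⟩ hz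
    simp only [Finset.mem_inter, Finset.mem_filter, mem_NlS] at hz
    obtain ⟨⟨⟨-, hxy, hl⟩, hx⟩, -, hy⟩ := hz
    have e1 := lft_add hP h.hp.mem h.hq.mem h.pq
    have e2 := lft_add hP h.hq.mem h.hr.mem h.qr
    have e3 := lft_add hP h.hr.mem h.hp.mem h.rp
    simp only [hV, Finset.mem_insert, Finset.mem_singleton] at hx hy ⊢
    rcases hx with rfl | rfl | rfl <;> rcases hy with rfl | rfl | rfl
    · exact absurd rfl hxy
    · left; rw [if_pos (by omega)]
    · right; right; rw [if_neg (by omega)]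
    · left; rw [if_neg (by omega)]
    · exact absurd rfl hxy
    · right; left; rw [if_pos (by omega)]
    · right; right; rw [if_pos (by omega)]
    · right; left; rw [if_neg (by omega)]
    · exact absurd rfl hxy
  omega

theorem Trip.Gt_sub (h : Trip P k p q r a b c α β γ) :
    Gt (Er P p q r) k b a ⊆ (NlS P (k + 1)).filter (fun z => z.1 ∈ Er P p q r ∧ z.2 ∈ Er P p q r) := by
  intro z hz
  simp only [Gt, Finset.mem_filter, Finset.mem_product] at hz
  simp only [Finset.mem_filter, mem_NlS]
  have := h.keep2 hz.2.2.2 hz.2.2.1 hz.2.1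
  refine ⟨⟨⟨Er_sub hz.1.1, Er_sub hz.1.2⟩, ?_, by omega⟩, hz.1⟩
  intro h1
  rw [h1] at hz
  linarith [hz.2.1]

theorem Gt_lft {P : Finset (ℝ × ℝ)} {k : ℕ} {a b : ℝ × ℝ} {z : (ℝ × ℝ) × (ℝ × ℝ)} (hz : z ∈ Gt P k a b) :
    dot2 a z.2 < dot2 a z.1 ∧ dot2 b z.2 < dot2 b z.1 ∧ lft P z.1 z.2 + 1 = k := by
  simp only [Gt, Finset.mem_filter] at hz
  exact hz.2

theorem Trip.recur (h : Trip P k p q r a b c α β γ) (hP : GP P) (hk : 2 * k + 3 ≤ P.card) :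
    6 * k + 3 + Nl (Er P p q r) (k - 1) + ((Gt (Er P p q r) k b a).card + (Gt (Er P p q r) k c b).card +
      (Gt (Er P p q r) k a c).card) ≤ Nl P (k + 1) := by
  have h1 := h.hull_card hP hk
  set E := Er P p q r with hE
  have g1 := h.Gt_sub
  have g2 := h.rot.Gt_sub
  have g3 := h.rot.rot.Gt_sub
  rw [Er_rot, Er_rot] at g3
  rw [Er_rot] at g2
  rw [← hE] at g1 g2 g3
  have g0 : NlS E (k - 1) ⊆ (NlS P (k + 1)).filter (fun z => z.1 ∈ E ∧ z.2 ∈ E) := by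
    intro z hz
    rw [mem_NlS] at hz
    simp only [Finset.mem_filter, mem_NlS]
    have := h.keep1 (Er_sub hz.1.1) (Er_sub hz.1.2) hz.2.1 (by rw [← hE]; omega)
    exact ⟨⟨⟨Er_sub hz.1.1, Er_sub hz.1.2⟩, hz.2.1, by omega⟩, hz.1⟩
  set I := (NlS P (k + 1)).filter (fun z => z.1 ∈ ({p, q, r} : Finset (ℝ × ℝ)) ∨
      z.2 ∈ ({p, q, r} : Finset (ℝ × ℝ))) with hI
  have hd : Disjoint I ((NlS P (k + 1)).filter (fun z => z.1 ∈ E ∧ z.2 ∈ E)) := by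
    rw [Finset.disjoint_left]
    intro z hz hz'
    simp only [hI, Finset.mem_filter, Finset.mem_insert, Finset.mem_singleton] at hz hz'
    rw [hE, mem_Er, mem_Er] at hz'
    tauto
  have hd1 : Disjoint (Gt E k b a) (Gt E k c b) := by
    rw [Finset.disjoint_left]
    intro z hz hz'
    have := Gt_lft hz; have := Gt_lft hz'
    exact h.not_all (x := z.1) (y := z.2) (by tauto) (by tauto) (by tauto)
  have hd2 : Disjoint (Gt E k b a ∪ Gt E k c b) (Gt E k a c) := by
    rw [Finset.disjoint_left]
    intro z hz hz'
    rw [Finset.mem_union] at hz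
    have := Gt_lft hz'
    rcases hz with hz | hz
    · have := Gt_lft hz
      exact h.not_all (x := z.1) (y := z.2) (by tauto) (by tauto) (by tauto)
    · have := Gt_lft hz
      exact h.not_all (x := z.1) (y := z.2) (by tauto) (by tauto) (by tauto)
  have hd3 : Disjoint (NlS E (k - 1)) (Gt E k b a ∪ Gt E k c b ∪ Gt E k a c) := by
    rw [Finset.disjoint_left]
    intro z hz hz'
    rw [Finset.mem_union, Finset.mem_union] at hz'
    rw [mem_NlS] at hz
    rcases hz' with (hz' | hz') | hz'
    all_goals
      have := Gt_lft hz'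
      omega
  have hu : NlS E (k - 1) ∪ (Gt E k b a ∪ Gt E k c b ∪ Gt E k a c) ⊆
      (NlS P (k + 1)).filter (fun z => z.1 ∈ E ∧ z.2 ∈ E) :=
    Finset.union_subset g0 (Finset.union_subset (Finset.union_subset g1 g2) g3)
  have hc := Finset.card_le_card hu
  rw [Finset.card_union_of_disjoint hd3, Finset.card_union_of_disjoint hd2,
    Finset.card_union_of_disjoint hd1] at hc
  have hfin : (I ∪ ((NlS P (k + 1)).filter (fun z => z.1 ∈ E ∧ z.2 ∈ E))).card ≤ Nl P (k + 1) :=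
    Finset.card_le_card (Finset.union_subset (Finset.filter_subset _ _) (Finset.filter_subset _ _))
  rw [Finset.card_union_of_disjoint hd] at hfin
  unfold Nl at *
  omega

theorem Trip.gates (h : Trip P k p q r a b c α β γ) (hP : GP P) (hk : 2 * k + 3 ≤ P.card) :
    3 * k ≤ (Gt (Er P p q r) k b a).card + (Gt (Er P p q r) k c b).card +
      (Gt (Er P p q r) k a c).card + (Er P p q r).card := by
  have hEc := h.card
  set E := Er P p q r with hE
  have hEP : GP E := hP.mono Er_sub
  have na : NT E a := h.hp.nt.mono Er_sub
  have nb : NT E b := h.hq.nt.mono Er_sub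
  have nc : NT E c := h.hr.nt.mono Er_sub
  have g1 := gate hEP nb h.ab k
  have g2 := gate hEP nc h.bc k
  have g3 := gate hEP na h.ca k
  have c1 := Finset.card_sdiff_add_card_inter (Sm E k b) (Sm E k (-a))
  have c2 := Finset.card_sdiff_add_card_inter (Sm E k c) (Sm E k (-b))
  have c3 := Finset.card_sdiff_add_card_inter (Sm E k a) (Sm E k (-c))
  rw [card_Sm nb (by omega)] at c1
  rw [card_Sm nc (by omega)] at c2
  rw [card_Sm na (by omega)] at c3
  have d1 : Disjoint (Sm E k b ∩ Sm E k (-a)) (Sm E k c ∩ Sm E k (-b)) := by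
    rw [Finset.disjoint_left]
    intro x hx hx'
    rw [Finset.mem_inter] at hx hx'
    exact Sm_disj nb (by omega) x hx.1 hx'.2
  have d2 : Disjoint (Sm E k b ∩ Sm E k (-a) ∪ Sm E k c ∩ Sm E k (-b)) (Sm E k a ∩ Sm E k (-c)) := by
    rw [Finset.disjoint_left]
    intro x hx hx'
    rw [Finset.mem_union, Finset.mem_inter, Finset.mem_inter] at hx
    rw [Finset.mem_inter] at hx'
    rcases hx with hx | hx
    · exact Sm_disj na (by omega) x hx'.1 hx.2
    · exact Sm_disj nc (by omega) x hx.1 hx'.2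
  have hs : ∀ u, Sm E k u ⊆ E := fun u => Finset.filter_subset _ _
  have hu : (Sm E k b ∩ Sm E k (-a) ∪ Sm E k c ∩ Sm E k (-b)) ∪ (Sm E k a ∩ Sm E k (-c)) ⊆ E := by
    refine Finset.union_subset (Finset.union_subset ?_ ?_) ?_ <;>
    exact Finset.inter_subset_left.trans (hs _)
  have hcu := Finset.card_le_card hu
  rw [Finset.card_union_of_disjoint d2, Finset.card_union_of_disjoint d1] at hcu
  omega
end

theorem choose_step (m : ℕ) : Nat.choose (m + 1) 2 = Nat.choose m 2 + m := by
  rw [Nat.choose_succ_succ' m 1, Nat.choose_one_right]; ring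

theorem main_bound (h : ℕ) : ∀ (P : Finset (ℝ × ℝ)), GP P → P.card = 3 * h → ∀ k, 2 * k + 3 ≤ P.card →
    3 * Nat.choose (k + 2) 2 + 3 * Nat.choose (k + 2 - h) 2 ≤ Nl P (k + 1) := by
  induction h with
  | zero => intro P _ h1 k hk; omega
  | succ h ih =>
    intro P hP hc k hk
    obtain ⟨p, q, r, a, b, c, α, β, γ, T⟩ := exists_trip hP hk
    have h1 := T.recur hP hk
    have h2 := T.gates hP hk
    have h3 := T.card
    rcases Nat.lt_or_ge k 2 with hk2 | hk2
    · have h4 : Nat.choose (k + 2 - (h + 1)) 2 = 0 := by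
        apply Nat.choose_eq_zero_of_lt
        omega
      have h5 : 3 * Nat.choose (k + 2) 2 = 6 * k + 3 := by
        interval_cases k <;> rfl
      omega
    · obtain ⟨j, rfl⟩ := Nat.exists_eq_add_of_le hk2
      have h4 := ih (Er P p q r) (hP.mono Er_sub) (by omega) j (by omega)
      have e1 : 2 + j - 1 = j + 1 := by omega
      rw [e1] at h1
      have e2 : Nat.choose (2 + j + 2) 2 = Nat.choose (j + 2) 2 + (j + 2) + (j + 3) := by
        rw [show 2 + j + 2 = (j + 2 + 1) + 1 by ring, choose_step, choose_step]
      have e3 : Nat.choose (2 + j + 2 - (h + 1)) 2 = Nat.choose (j + 2 - h) 2 + (j + 2 - h) ∨ 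
          (Nat.choose (2 + j + 2 - (h + 1)) 2 = 0) := by
        rcases Nat.lt_or_ge (j + 2) h with hl | hl
        · right
          apply Nat.choose_eq_zero_of_lt; omega
        · left
          rw [show 2 + j + 2 - (h + 1) = (j + 2 - h) + 1 by omega, choose_step]
      rcases e3 with e3 | e3 <;> omega
end

section
open scoped Classical

noncomputable def NjS (P : Finset (ℝ × ℝ)) (j : ℕ) : Finset ((ℝ × ℝ) × (ℝ × ℝ)) :=
  (P ×ˢ P).filter (fun z => z.1 ≠ z.2 ∧ lft P z.1 z.2 = j)

noncomputable def Nj (P : Finset (ℝ × ℝ)) (j : ℕ) : ℕ := (NjS P j).card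

theorem mem_NjS {P : Finset (ℝ × ℝ)} {j : ℕ} {z : (ℝ × ℝ) × (ℝ × ℝ)} :
    z ∈ NjS P j ↔ (z.1 ∈ P ∧ z.2 ∈ P) ∧ z.1 ≠ z.2 ∧ lft P z.1 z.2 = j := by
  simp [NjS]

def First (P : Finset (ℝ × ℝ)) (o x z : ℝ × ℝ) : Prop :=
  z ∈ P ∧ 0 < det2 (x - o) (z - o) ∧ ∀ w ∈ P, 0 < det2 (x - o) (w - o) → 0 ≤ det2 (z - o) (w - o)

noncomputable def ct (o x w : ℝ × ℝ) : ℝ := dot2 (x - o) (w - o) / det2 (x - o) (w - o)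

theorem halving_first {P : Finset (ℝ × ℝ)} (hP : GP P) {x y z : ℝ × ℝ} (hx : x ∈ P) (hy : y ∈ P)
    (hxy : y ≠ x) (hz : z ∈ P) (hzl : 0 < det2 (x - y) (z - y))
    (h1 : ∀ w ∈ P, 0 < det2 (x - y) (w - y) → ct y x w ≤ ct y x z)
    (h2 : ∀ w ∈ P, 0 < det2 (y - x) (w - x) → ct x y w ≤ ct y x z) :
    First P y x z ∧ lft P y z + 1 = lft P y x := by
  have hD : 0 < dot2 (x - y) (x - y) := by
    have h0 : x.1 - y.1 ≠ 0 ∨ x.2 - y.2 ≠ 0 := by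
      by_contra hc
      push Not at hc
      exact hxy (Prod.ext (by linarith) (by linarith))
    simp only [dot2, Prod.fst_sub, Prod.snd_sub]
    rcases h0 with h | h
    · nlinarith [mul_self_pos.2 h, mul_self_nonneg (x.2 - y.2)]
    · nlinarith [mul_self_pos.2 h, mul_self_nonneg (x.1 - y.1)]
  have id1 : ∀ w, dot2 (x - y) (x - y) * det2 (z - y) (w - y) =
      dot2 (x - y) (z - y) * det2 (x - y) (w - y) - dot2 (x - y) (w - y) * det2 (x - y) (z - y) := by
    intro w; simp only [dot2, det2]; ring
  have hF : ∀ w ∈ P, 0 < det2 (x - y) (w - y) → 0 ≤ det2 (z - y) (w - y) := by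
    intro w hw hl
    have h3 := h1 w hw hl
    unfold ct at h3
    rw [div_le_div_iff₀ hl hzl] at h3
    have h4 := id1 w
    by_contra hc
    nlinarith [mul_pos hD (neg_pos.2 (not_le.1 hc))]
  refine ⟨⟨hz, hzl, hF⟩, ?_⟩
  have hzy : z ≠ y := by rintro rfl; simp [det2] at hzl
  have hset : P.filter (fun w => 0 < det2 (z - y) (w - y)) =
      (P.filter (fun w => 0 < det2 (x - y) (w - y))).erase z := by
    ext w
    simp only [Finset.mem_filter, Finset.mem_erase]
    constructor
    · rintro ⟨hw, hp⟩
      have hwz : w ≠ z := by rintro rfl; simp only [det2] at hp; nlinarith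
      refine ⟨hwz, hw, ?_⟩
      by_contra hc
      have hwy : w ≠ y := by rintro rfl; simp [det2] at hp
      have h4 := id1 w
      by_cases hwx : w = x
      · rw [hwx] at hp
        have : det2 (z - y) (x - y) = - det2 (x - y) (z - y) := by simp only [det2]; ring
        linarith
      have hne := hP y hy x hx w hw hxy (Ne.symm hwy) (Ne.symm hwx)
      have hl : 0 < det2 (y - x) (w - x) := by
        rw [det_swap]
        have := lt_of_le_of_ne (not_lt.1 hc) hne
        linarith
      have h3 := h2 w hw hl
      unfold ct at h3
      rw [div_le_div_iff₀ hl hzl, det_swap y x w] at h3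
      have id2 : dot2 (y - x) (w - x) = dot2 (x - y) (x - y) - dot2 (x - y) (w - y) := by
        simp only [dot2, Prod.fst_sub, Prod.snd_sub]; ring
      rw [id2] at h3
      nlinarith [mul_pos hD hp, mul_pos hD hzl]
    · rintro ⟨hwz, hw, hl⟩
      refine ⟨hw, lt_of_le_of_ne (hF w hw hl) ?_⟩
      have hwy : w ≠ y := by rintro rfl; simp [det2] at hl
      exact (hP y hy z hz w hw (Ne.symm hzy) (Ne.symm hwy) (Ne.symm hwz)).symm
  unfold lft
  rw [hset]
  apply Finset.card_erase_add_one
  rw [Finset.mem_filter]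
  exact ⟨hz, hzl⟩

theorem first_inj {P : Finset (ℝ × ℝ)} (hP : GP P) {o x x' z : ℝ × ℝ} (ho : o ∈ P) (hx : x ∈ P)
    (hx' : x' ∈ P) (hox : o ≠ x) (hox' : o ≠ x') (h : First P o x z) (h' : First P o x' z) : x = x' := by
  by_contra hne
  have s : ∀ a b : ℝ × ℝ, det2 a b = - det2 b a := by intro a b; simp only [det2]; ring
  rcases lt_or_gt_of_ne (hP o ho x hx x' hx' hox hox' hne) with h1 | h1
  · have := h'.2.2 x hx (by rw [s]; linarith)
    have h2 := h.2.1
    rw [s] at h2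
    linarith
  · have := h.2.2 x' hx' h1
    have h2 := h'.2.1
    rw [s] at h2
    linarith

theorem halving_bound {P : Finset (ℝ × ℝ)} (hP : GP P) {h : ℕ} (hh : 1 ≤ h) (hc : P.card = 2 * h + 2) :
    Nj P h ≤ 2 * Nj P (h - 1) := by
  have key : ∀ t ∈ NjS P h, (∃ z, First P t.1 t.2 z ∧ lft P t.1 z + 1 = h) ∨
      (∃ z, First P t.2 t.1 z ∧ lft P t.2 z + 1 = h) := by
    rintro ⟨y, x⟩ ht
    rw [mem_NjS] at ht
    obtain ⟨⟨hy, hx⟩, hyx, hl⟩ := ht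
    simp only at hy hx hyx hl ⊢
    have hl' : lft P x y = h := by have := lft_add hP hy hx hyx; omega
    set W := P.filter (fun w => det2 (x - y) (w - y) ≠ 0) with hW
    have hWne : W.Nonempty := by
      have : 0 < lft P y x := by omega
      rw [lft, Finset.card_pos] at this
      obtain ⟨w, hw⟩ := this
      rw [Finset.mem_filter] at hw
      exact ⟨w, by rw [hW, Finset.mem_filter]; exact ⟨hw.1, hw.2.ne'⟩⟩
    obtain ⟨z, hz, hm⟩ := Finset.exists_max_image W
      (fun w => if 0 < det2 (x - y) (w - y) then ct y x w else ct x y w) hWne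
    rw [hW, Finset.mem_filter] at hz
    have m1 : ∀ w ∈ P, 0 < det2 (x - y) (w - y) → 
        ct y x w ≤ if 0 < det2 (x - y) (z - y) then ct y x z else ct x y z := by
      intro w hw hp
      have := hm w (by rw [hW, Finset.mem_filter]; exact ⟨hw, hp.ne'⟩)
      rwa [if_pos hp] at this
    have m2 : ∀ w ∈ P, 0 < det2 (y - x) (w - x) → 
        ct x y w ≤ if 0 < det2 (x - y) (z - y) then ct y x z else ct x y z := by
      intro w hw hp
      rw [det_swap] at hp
      have := hm w (by rw [hW, Finset.mem_filter]; exact ⟨hw, by intro h; linarith⟩)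
      rwa [if_neg (by intro h; linarith)] at this
    by_cases hp : 0 < det2 (x - y) (z - y)
    · left
      rw [if_pos hp] at m1 m2
      obtain ⟨a1, a2⟩ := halving_first hP hx hy hyx hz.1 hp m1 m2
      exact ⟨z, a1, by omega⟩
    · right
      rw [if_neg hp] at m1 m2
      have hp' : 0 < det2 (y - x) (z - x) := by
        rw [det_swap]
        have := lt_of_le_of_ne (not_lt.1 hp) hz.2
        linarith
      obtain ⟨a1, a2⟩ := halving_first hP hy hx hyx.symm hz.1 hp' m2 m1
      exact ⟨z, a1, by omega⟩
  set A := (NjS P h).filter (fun t => ∃ z, First P t.1 t.2 z ∧ lft P t.1 z + 1 = h) with hA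
  set B := (NjS P h).filter (fun t => ∃ z, First P t.2 t.1 z ∧ lft P t.2 z + 1 = h) with hB
  have hAB : NjS P h ⊆ A ∪ B := by
    intro t ht
    rw [Finset.mem_union, hA, hB, Finset.mem_filter, Finset.mem_filter]
    rcases key t ht with h | h
    · exact Or.inl ⟨ht, h⟩
    · exact Or.inr ⟨ht, h⟩
  have hne : ∀ {o x z : ℝ × ℝ}, First P o x z → o ≠ z := by
    rintro o x z hf rfl
    have := hf.2.1
    simp [det2] at this
  have hAc : A.card ≤ Nj P (h - 1) := by
    have hex : ∀ t : (ℝ × ℝ) × (ℝ × ℝ), ∃ z, t ∈ A → First P t.1 t.2 z ∧ lft P t.1 z + 1 = h := by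
      intro t
      by_cases ht : t ∈ A
      · have ht' := ht
        rw [hA, Finset.mem_filter] at ht'
        obtain ⟨z, hz⟩ := ht'.2
        exact ⟨z, fun _ => hz⟩
      · exact ⟨0, fun h => absurd h ht⟩
    choose g hg using hex
    apply Finset.card_le_card_of_injOn (fun t => (t.1, g t))
    · intro t ht
      obtain ⟨h1, h2⟩ := hg t ht
      rw [Finset.mem_coe, hA, Finset.mem_filter, mem_NjS] at ht
      rw [Finset.mem_coe, mem_NjS]
      exact ⟨⟨ht.1.1.1, h1.1⟩, hne h1, by simp only; omega⟩
    · rintro ⟨y, x⟩ ht ⟨y', x'⟩ ht' heq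
      obtain ⟨h1, h2⟩ := hg _ ht
      obtain ⟨h1', h2'⟩ := hg _ ht'
      rw [Finset.mem_coe, hA, Finset.mem_filter, mem_NjS] at ht ht'
      simp only [Prod.mk.injEq] at heq
      obtain ⟨rfl, e2⟩ := heq
      rw [← e2] at h1'
      have := first_inj hP ht.1.1.1 ht.1.1.2 ht'.1.1.2 ht.1.2.1 ht'.1.2.1 h1 h1'
      simp only at this
      rw [this]
  have hBc : B.card ≤ Nj P (h - 1) := by
    have hex : ∀ t : (ℝ × ℝ) × (ℝ × ℝ), ∃ z, t ∈ B → First P t.2 t.1 z ∧ lft P t.2 z + 1 = h := by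
      intro t
      by_cases ht : t ∈ B
      · have ht' := ht
        rw [hB, Finset.mem_filter] at ht'
        obtain ⟨z, hz⟩ := ht'.2
        exact ⟨z, fun _ => hz⟩
      · exact ⟨0, fun h => absurd h ht⟩
    choose g hg using hex
    apply Finset.card_le_card_of_injOn (fun t => (t.2, g t))
    · intro t ht
      obtain ⟨h1, h2⟩ := hg t ht
      rw [Finset.mem_coe, hB, Finset.mem_filter, mem_NjS] at ht
      rw [Finset.mem_coe, mem_NjS]
      exact ⟨⟨ht.1.1.2, h1.1⟩, hne h1, by simp only; omega⟩
    · rintro ⟨y, x⟩ ht ⟨y', x'⟩ ht' heq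
      obtain ⟨h1, h2⟩ := hg _ ht
      obtain ⟨h1', h2'⟩ := hg _ ht'
      rw [Finset.mem_coe, hB, Finset.mem_filter, mem_NjS] at ht ht'
      simp only [Prod.mk.injEq] at heq
      obtain ⟨rfl, e2⟩ := heq
      rw [← e2] at h1'
      have := first_inj hP ht.1.1.2 ht.1.1.1 ht'.1.1.1 (Ne.symm ht.1.2.1) (Ne.symm ht'.1.2.1) h1 h1'
      simp only at this
      rw [this]
  have h1 := Finset.card_le_card hAB
  have h2 := Finset.card_union_le A B
  unfold Nj at *
  omega

theorem Nj_symm {P : Finset (ℝ × ℝ)} (hP : GP P) {i j : ℕ} (hij : i + j + 2 = P.card) : Nj P i = Nj P j := by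
  apply Finset.card_bij (fun t _ => (t.2, t.1))
  · intro t ht
    rw [mem_NjS] at *
    have := lft_add hP ht.1.1 ht.1.2 ht.2.1
    exact ⟨ht.1.symm, ht.2.1.symm, by simp only; omega⟩
  · rintro ⟨a, b⟩ _ ⟨c, d⟩ _ h
    simp only [Prod.mk.injEq] at *
    tauto
  · intro t ht
    refine ⟨(t.2, t.1), ?_, rfl⟩
    rw [mem_NjS] at *
    have := lft_add hP ht.1.1 ht.1.2 ht.2.1
    exact ⟨ht.1.symm, ht.2.1.symm, by simp only; omega⟩

theorem Nl_zero (P : Finset (ℝ × ℝ)) : Nl P 0 = 0 := by simp [Nl, NlS]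

theorem Nl_succ (P : Finset (ℝ × ℝ)) (j : ℕ) : Nl P (j + 1) = Nl P j + Nj P j := by
  unfold Nl Nj
  rw [← Finset.card_union_of_disjoint]
  · congr 1
    ext z
    rw [Finset.mem_union, mem_NlS, mem_NlS, mem_NjS]
    constructor
    · rintro ⟨h1, h2, h3⟩
      rcases Nat.lt_succ_iff_lt_or_eq.1 h3 with h | h
      · left; exact ⟨h1, h2, h⟩
      · right; exact ⟨h1, h2, h⟩
    · rintro (⟨h1, h2, h3⟩ | ⟨h1, h2, h3⟩)
      · exact ⟨h1, h2, by omega⟩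
      · exact ⟨h1, h2, by omega⟩
  · rw [Finset.disjoint_left]
    intro z hz hz'
    rw [mem_NlS] at hz
    rw [mem_NjS] at hz'
    omega

theorem Nl_eq_sum (P : Finset (ℝ × ℝ)) (j : ℕ) : Nl P j = ∑ i ∈ Finset.range j, Nj P i := by
  induction j with
  | zero => simp [Nl_zero]
  | succ j ih => rw [Finset.sum_range_succ, Nl_succ, ih]

theorem sum_pairs {P : Finset (ℝ × ℝ)} (hP : GP P) {n : ℕ} (hn : P.card = n + 2) (g : ℕ → ℕ) :
    ∑ t ∈ P.offDiag, g (lft P t.1 t.2) = ∑ j ∈ Finset.range (n + 1), Nj P j * g j := by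
  have h1 : ∀ t ∈ P.offDiag, lft P t.1 t.2 ∈ Finset.range (n + 1) := by
    intro t ht
    rw [Finset.mem_offDiag] at ht
    have := lft_add hP ht.1 ht.2.1 ht.2.2
    rw [Finset.mem_range]; omega
  rw [← Finset.sum_fiberwise_of_maps_to h1]
  apply Finset.sum_congr rfl
  intro j _
  have h2 : P.offDiag.filter (fun t => lft P t.1 t.2 = j) = NjS P j := by
    ext t
    rw [Finset.mem_filter, Finset.mem_offDiag, mem_NjS]
    tauto
  rw [h2, Finset.sum_congr rfl (g := fun _ => g j)]
  · rw [Finset.sum_const, smul_eq_mul]; rfl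
  · intro t ht
    rw [mem_NjS] at ht
    rw [ht.2.2]

theorem sum_Nj {P : Finset (ℝ × ℝ)} (hP : GP P) {n : ℕ} (hn : P.card = n + 2) :
    Nl P (n + 1) = (n + 2) * (n + 1) := by
  have := sum_pairs hP hn (fun _ => 1)
  rw [Nl_eq_sum]
  simp only [Finset.sum_const, smul_eq_mul, mul_one, Finset.offDiag_card, hn] at this
  rw [← this]
  rw [Nat.sub_eq_iff_eq_add (by nlinarith)]; ring

theorem ncard_lft (P : Finset (ℝ × ℝ)) (p q : ℝ × ℝ) :
    {x | x ∈ P ∧ 0 < det2 (q - p) (x - p)}.ncard = lft P p q ∧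
    {x | x ∈ P ∧ det2 (q - p) (x - p) < 0}.ncard = lft P q p := by
  rw [lft_swap P p q]
  unfold lft
  constructor
  · rw [← Set.ncard_coe_finset]; congr 1; ext x; simp
  · rw [← Set.ncard_coe_finset]; congr 1; ext x; simp

theorem Ek_eq {P : Finset (ℝ × ℝ)} (hP : GP P) {k : ℕ} (hk : 2 * k + 2 < P.card) : Ek P k = Nj P k := by
  have h1 : {e : Sym2 (ℝ × ℝ) | ∃ p ∈ P, ∃ q ∈ P, e = s(p, q) ∧ IsKEdge P k p q} =
      ((NjS P k).image (fun t => s(t.1, t.2)) : Finset (Sym2 (ℝ × ℝ))) := by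
    ext e
    simp only [Finset.coe_image, Set.mem_image, Finset.mem_coe, mem_NjS, IsKEdge]
    constructor
    · rintro ⟨p, hp, q, hq, rfl, hpq, h⟩
      rw [(ncard_lft P p q).1, (ncard_lft P p q).2] at h
      rcases h with h | h
      · exact ⟨(p, q), ⟨⟨hp, hq⟩, hpq, h⟩, rfl⟩
      · exact ⟨(q, p), ⟨⟨hq, hp⟩, hpq.symm, h⟩, Sym2.eq_swap⟩
    · rintro ⟨⟨p, q⟩, ⟨⟨hp, hq⟩, hpq, h⟩, rfl⟩
      refine ⟨p, hp, q, hq, rfl, hpq, Or.inl ?_⟩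
      rw [(ncard_lft P p q).1]; exact h
  unfold Ek
  rw [h1, Set.ncard_coe_finset, Finset.card_image_of_injOn]
  · rfl
  · rintro ⟨a, b⟩ h2 ⟨c, d⟩ h3 h4
    rw [Finset.mem_coe, mem_NjS] at h2 h3
    simp only [Sym2.eq_iff] at h4
    rcases h4 with ⟨rfl, rfl⟩ | ⟨rfl, rfl⟩
    · rfl
    · have := lft_add hP h2.1.1 h2.1.2 h2.2.1
      simp only at *
      omega

theorem EleK_eq {P : Finset (ℝ × ℝ)} (hP : GP P) {k : ℕ} (hk : 2 * k + 2 < P.card) :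
    EleK P k = Nl P (k + 1) := by
  unfold EleK
  rw [Nl_eq_sum]
  apply Finset.sum_congr rfl
  intro j hj
  rw [Finset.mem_range] at hj
  exact Ek_eq hP (by omega)
end

section
open scoped Classical

noncomputable def Hs (P : Finset (ℝ × ℝ)) : Finset (ℝ × ℝ) := P.filter (fun v => ∃ e, Hull P v e)

theorem hull_of_lft_zero {P : Finset (ℝ × ℝ)} (hP : GP P) {v y : ℝ × ℝ} (hv : v ∈ P) (hy : y ∈ P)
    (hvy : v ≠ y) (h0 : lft P v y = 0) : ∃ e, Hull P v e := by
  have hD : 0 < dot2 (y - v) (y - v) := by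
    have h0 : y.1 - v.1 ≠ 0 ∨ y.2 - v.2 ≠ 0 := by
      by_contra hc
      push Not at hc
      exact hvy (Prod.ext (by linarith) (by linarith))
    simp only [dot2, Prod.fst_sub, Prod.snd_sub]
    rcases h0 with h | h
    · nlinarith [mul_self_pos.2 h, mul_self_nonneg (y.2 - v.2)]
    · nlinarith [mul_self_pos.2 h, mul_self_nonneg (y.1 - v.1)]
  have hneg : ∀ z ∈ P, z ≠ v → z ≠ y → det2 (y - v) (z - v) < 0 := by
    intro z hz hzv hzy
    refine lt_of_le_of_ne ?_ (hP v hv y hy z hz hvy (Ne.symm hzv) (Ne.symm hzy))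
    unfold lft at h0
    rw [Finset.card_eq_zero, Finset.filter_eq_empty_iff] at h0
    exact not_lt.1 (h0 hz)
  have hev : ∀ᶠ ε : ℝ in nhdsWithin 0 (Set.Ioi 0), ∀ z ∈ P, z ≠ v →
      0 < - det2 (y - v) (z - v) + ε * dot2 (y - v) (z - v) := by
    rw [Filter.eventually_all_finset]
    intro z hz
    by_cases hzv : z = v
    · exact Filter.Eventually.of_forall (fun _ h => absurd hzv h)
    by_cases hzy : z = y
    · filter_upwards [self_mem_nhdsWithin] with ε hε _
      rw [hzy]
      have hε' : 0 < ε := hε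
      have : det2 (y - v) (y - v) = 0 := by simp only [det2]; ring
      rw [this]
      have := mul_pos hε' hD
      linarith
    · apply Filter.Eventually.filter_mono nhdsWithin_le_nhds
      have hc : Continuous (fun ε : ℝ => - det2 (y - v) (z - v) + ε * dot2 (y - v) (z - v)) := by
        fun_prop
      have h1 := hc.continuousAt (x := 0) |>.eventually_const_lt (u := 0) (by
        have := hneg z hz hzv hzy
        simp only [zero_mul]; linarith)
      filter_upwards [h1] with ε h2 _ using h2
  obtain ⟨ε, hε⟩ := hev.exists
  refine ⟨((y - v).2 + ε * (y - v).1, -(y - v).1 + ε * (y - v).2), hv, ?_⟩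
  intro z hz hzv
  have h1 := hε z hz hzv
  rw [← sub_pos, ← dot_sub]
  have : dot2 ((y - v).2 + ε * (y - v).1, -(y - v).1 + ε * (y - v).2) (z - v) =
    - det2 (y - v) (z - v) + ε * dot2 (y - v) (z - v) := by simp only [dot2, det2]; ring
  rwa [this]

theorem card_Hs {P : Finset (ℝ × ℝ)} (hP : GP P) (hc : 2 ≤ P.card) : Nj P 0 = (Hs P).card := by
  unfold Nj
  rw [Finset.card_eq_sum_card_fiberwise (f := Prod.fst) (t := Hs P)]
  · rw [Finset.sum_congr rfl (g := fun _ => 1)]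
    · simp
    · intro v hv
      rw [Hs, Finset.mem_filter] at hv
      obtain ⟨e, he⟩ := hv.2
      refine Eq.trans ?_ (he.card_out hP (by omega : 0 + 2 ≤ P.card))
      refine Eq.trans ?_ (Finset.card_image_of_injective _ (Prod.mk_right_injective v))
      congr 1
      ext ⟨z1, z2⟩
      simp only [Finset.mem_filter, mem_NjS, Finset.mem_image, Finset.mem_erase, Prod.mk.injEq]
      constructor
      · rintro ⟨⟨⟨h1, h2⟩, h3, h4⟩, rfl⟩
        exact ⟨z2, ⟨⟨Ne.symm h3, h2⟩, by omega⟩, rfl, rfl⟩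
      · rintro ⟨y, ⟨⟨h1, h2⟩, h3⟩, rfl, rfl⟩
        exact ⟨⟨⟨he.1, h2⟩, Ne.symm h1, by omega⟩, rfl⟩
  · intro z hz
    rw [Finset.mem_coe, mem_NjS] at hz
    rw [Finset.mem_coe, Hs, Finset.mem_filter]
    exact ⟨hz.1.1, hull_of_lft_zero hP hz.1.1 hz.1.2 hz.2.1 hz.2.2⟩

theorem hull_iff {P : Finset (ℝ × ℝ)} {v : ℝ × ℝ} (hv : v ∈ P) :
    (∃ e, Hull P v e) ↔ v ∉ convexHull ℝ ((P.erase v : Finset (ℝ × ℝ)) : Set (ℝ × ℝ)) := by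
  constructor
  · rintro ⟨e, he⟩ hmem
    have hsub : ((P.erase v : Finset (ℝ × ℝ)) : Set (ℝ × ℝ)) ⊆ {y | dot2 e v < dot2 e y} := by
      intro y hy
      rw [Finset.mem_coe, Finset.mem_erase] at hy
      exact he.2 y hy.2 hy.1
    have hconv : Convex ℝ {y : ℝ × ℝ | dot2 e v < dot2 e y} := by
      apply convex_halfSpace_gt
      constructor
      · intro x y; simp only [dot2, Prod.fst_add, Prod.snd_add]; ring
      · intro c x; simp only [dot2, Prod.smul_fst, Prod.smul_snd, smul_eq_mul]; ring
    have := convexHull_min hsub hconv hmem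
    exact lt_irrefl _ (show dot2 e v < dot2 e v from this)
  · intro h0
    obtain ⟨g, t, h1, h2⟩ := geometric_hahn_banach_point_closed (convex_convexHull ℝ _)
      ((Finset.finite_toSet (P.erase v)).isClosed_convexHull ℝ) h0
    have hg : ∀ w : ℝ × ℝ, g w = dot2 (g (1, 0), g (0, 1)) w := by
      intro w
      have : w = w.1 • ((1, 0) : ℝ × ℝ) + w.2 • ((0, 1) : ℝ × ℝ) := by ext <;> simp
      calc g w = g (w.1 • ((1, 0) : ℝ × ℝ) + w.2 • ((0, 1) : ℝ × ℝ)) := by rw [← this]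
        _ = w.1 * g (1, 0) + w.2 * g (0, 1) := by rw [map_add, map_smul, map_smul]; rfl
        _ = _ := by simp only [dot2]; ring
    refine ⟨(g (1, 0), g (0, 1)), hv, ?_⟩
    intro y hy hyv
    rw [← hg, ← hg]
    exact h1.trans (h2 y (subset_convexHull ℝ _ (by
      rw [Finset.mem_coe, Finset.mem_erase]; exact ⟨hyv, hy⟩)))

theorem four_count {s : Finset (ℝ × ℝ)} (hs : GP s) (hc : s.card = 4) :
    Nj s 1 + 2 * (if ConvexPosition s then 1 else 0) = 6 := by
  have h1 := card_Hs hs (by omega)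
  have h2 := sum_Nj (n := 2) hs hc
  rw [Nl_succ, Nl_succ, Nl_succ, Nl_zero] at h2
  have h3 : Nj s 0 = Nj s 2 := Nj_symm hs (by omega)
  have h4 : 3 ≤ (Hs s).card := by
    obtain ⟨p, q, r, a, b, c, α, β, γ, T⟩ := exists_trip (k := 0) hs (by omega)
    rw [← Finset.card_eq_three.2 ⟨p, q, r, T.pq, T.rp.symm, T.qr, rfl⟩]
    apply Finset.card_le_card
    intro v hv
    rw [Hs, Finset.mem_filter]
    simp only [Finset.mem_insert, Finset.mem_singleton] at hv
    rcases hv with rfl | rfl | rfl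
    · obtain ⟨e, he, _⟩ := T.hp.hull; exact ⟨T.hp.mem, e, he⟩
    · obtain ⟨e, he, _⟩ := T.hq.hull; exact ⟨T.hq.mem, e, he⟩
    · obtain ⟨e, he, _⟩ := T.hr.hull; exact ⟨T.hr.mem, e, he⟩
  have h5 : (Hs s).card ≤ 4 := by rw [← hc]; exact Finset.card_le_card (Finset.filter_subset _ _)
  by_cases hcp : ConvexPosition s
  · have h6 : Hs s = s := by
      rw [Hs, Finset.filter_eq_self]
      intro v hv
      rw [hull_iff hv]
      exact hcp v hv
    rw [if_pos hcp]
    rw [h6] at h1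
    simp only [zero_add] at h2
    omega
  · have h6 : (Hs s).card ≠ 4 := by
      intro h6
      have h7 : Hs s = s := Finset.eq_of_subset_of_card_le (Finset.filter_subset _ _) (by omega)
      apply hcp
      intro v hv
      rw [← hull_iff hv]
      rw [← h7, Hs, Finset.mem_filter] at hv
      exact hv.2
    rw [if_neg hcp]
    simp only [zero_add] at h2
    omega

theorem sum_four {P : Finset (ℝ × ℝ)} (hP : GP P) :
    ∑ t ∈ P.offDiag, lft P t.1 t.2 * lft P t.2 t.1 = ∑ s ∈ P.powersetCard 4, Nj s 1 := by
  set T : Finset (((ℝ × ℝ) × (ℝ × ℝ)) × ((ℝ × ℝ) × (ℝ × ℝ))) :=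
    (P.offDiag ×ˢ (P ×ˢ P)).filter (fun t => 0 < det2 (t.1.2 - t.1.1) (t.2.1 - t.1.1) ∧
      det2 (t.1.2 - t.1.1) (t.2.2 - t.1.1) < 0) with hT
  have memT : ∀ x y z w, ((x, y), (z, w)) ∈ T ↔ ((x ∈ P ∧ y ∈ P ∧ x ≠ y) ∧ z ∈ P ∧ w ∈ P) ∧
      0 < det2 (y - x) (z - x) ∧ det2 (y - x) (w - x) < 0 := by
    intro x y z w
    simp only [hT, Finset.mem_filter, Finset.mem_product, Finset.mem_offDiag]
  have hTc : T.card = ∑ t ∈ P.offDiag, lft P t.1 t.2 * lft P t.2 t.1 := by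
    rw [Finset.card_eq_sum_card_fiberwise (f := Prod.fst) (t := P.offDiag)]
    · apply Finset.sum_congr rfl
      rintro ⟨x, y⟩ hxy
      rw [lft_swap P x y]
      unfold lft
      rw [← Finset.card_product]
      refine Eq.trans ?_ (Finset.card_image_of_injective _ (Prod.mk_right_injective (x, y)))
      congr 1
      ext ⟨⟨x', y'⟩, ⟨z, w⟩⟩
      rw [Finset.mem_offDiag] at hxy
      simp only [Finset.mem_filter, memT, Finset.mem_image, Finset.mem_product, Prod.mk.injEq]
      constructor
      · rintro ⟨⟨⟨⟨h1, h2, h3⟩, h4, h5⟩, h6, h7⟩, rfl, rfl⟩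
        exact ⟨(z, w), ⟨⟨h4, h6⟩, h5, h7⟩, ⟨rfl, rfl⟩, rfl⟩
      · rintro ⟨⟨z', w'⟩, ⟨⟨h1, h2⟩, h3, h4⟩, ⟨rfl, rfl⟩, h5⟩
        simp only [Prod.mk.injEq] at h5
        obtain ⟨rfl, rfl⟩ := h5
        exact ⟨⟨⟨hxy, h1, h3⟩, h2, h4⟩, rfl, rfl⟩
    · intro t ht
      rw [Finset.mem_coe, hT, Finset.mem_filter, Finset.mem_product] at ht
      exact ht.1.1
  rw [← hTc]
  have self0 : ∀ x y : ℝ × ℝ, det2 (y - x) (x - x) = 0 ∧ det2 (y - x) (y - x) = 0 := by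
    intro x y; constructor
    · simp [det2]
    · simp only [det2]; ring
  have dist : ∀ x y z w, ((x, y), (z, w)) ∈ T → x ≠ y ∧ z ≠ x ∧ z ≠ y ∧ w ≠ x ∧ w ≠ y ∧ z ≠ w := by
    intro x y z w ht
    rw [memT] at ht
    have := self0 x y
    refine ⟨ht.1.1.2.2, ?_, ?_, ?_, ?_, ?_⟩ <;> rintro rfl <;> linarith [ht.2.1, ht.2.2]
  have card4 : ∀ x y z w, ((x, y), (z, w)) ∈ T → ({x, y, z, w} : Finset (ℝ × ℝ)).card = 4 := by
    intro x y z w ht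
    obtain ⟨h1, h2, h3, h4, h5, h6⟩ := dist x y z w ht
    rw [Finset.card_insert_of_notMem, Finset.card_insert_of_notMem, Finset.card_pair h6]
    · simp only [Finset.mem_insert, Finset.mem_singleton]; rintro (h | h)
      · exact h3 h.symm
      · exact h5 h.symm
    · simp only [Finset.mem_insert, Finset.mem_singleton]; rintro (h | h | h)
      · exact h1 h
      · exact h2 h.symm
      · exact h4 h.symm
  rw [Finset.card_eq_sum_card_fiberwise (f := fun t => ({t.1.1, t.1.2, t.2.1, t.2.2} : Finset (ℝ × ℝ)))
    (t := P.powersetCard 4)]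
  · apply Finset.sum_congr rfl
    intro s hs
    rw [Finset.mem_powersetCard] at hs
    have hsP := hP.mono hs.1
    apply Finset.card_bij (fun t _ => t.1)
    · rintro ⟨⟨x, y⟩, ⟨z, w⟩⟩ ht
      rw [Finset.mem_filter] at ht
      obtain ⟨h1, h2⟩ := ht
      simp only at h2
      have hm := (memT x y z w).1 h1
      rw [mem_NjS]
      refine ⟨⟨by rw [← h2]; simp, by rw [← h2]; simp⟩, hm.1.1.2.2, ?_⟩
      unfold lft
      rw [Finset.card_eq_one]
      refine ⟨z, ?_⟩
      ext a
      rw [Finset.mem_filter, Finset.mem_singleton, ← h2]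
      simp only [Finset.mem_insert, Finset.mem_singleton]
      have := self0 x y
      constructor
      · rintro ⟨rfl | rfl | rfl | rfl, h⟩
        · linarith
        · linarith
        · rfl
        · linarith [hm.2.2]
      · rintro rfl
        exact ⟨by tauto, hm.2.1⟩
    · rintro ⟨⟨x, y⟩, ⟨z, w⟩⟩ ht ⟨⟨x', y'⟩, ⟨z', w'⟩⟩ ht' heq
      simp only [Prod.mk.injEq] at heq
      obtain ⟨rfl, rfl⟩ := heq
      rw [Finset.mem_filter] at ht ht'
      simp only at ht ht'
      have hm := (memT x y z w).1 ht.1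
      have hm' := (memT x y z' w').1 ht'.1
      have := self0 x y
      have hz' : z' ∈ s := by rw [← ht'.2]; simp
      have hw' : w' ∈ s := by rw [← ht'.2]; simp
      rw [← ht.2] at hz' hw'
      simp only [Finset.mem_insert, Finset.mem_singleton] at hz' hw'
      have e1 : z = z' := by
        rcases hz' with h | h | h | h
        · rw [h] at hm'; linarith [hm'.2.1]
        · rw [h] at hm'; linarith [hm'.2.1]
        · exact h.symm
        · rw [h] at hm'; linarith [hm'.2.1, hm.2.2]
      have e2 : w = w' := by
        rcases hw' with h | h | h | h
        · rw [h] at hm'; linarith [hm'.2.2]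
        · rw [h] at hm'; linarith [hm'.2.2]
        · rw [h] at hm'; linarith [hm'.2.2, hm.2.1]
        · exact h.symm
      rw [e1, e2]
    · rintro ⟨x, y⟩ hxy
      rw [mem_NjS] at hxy
      simp only at hxy
      obtain ⟨⟨hx, hy⟩, hne, hl⟩ := hxy
      have hl2 : lft s y x = 1 := by have := lft_add hsP hx hy hne; omega
      rw [lft_swap s x y] at hl2
      unfold lft at hl
      obtain ⟨z, hz⟩ := Finset.card_eq_one.1 hl
      obtain ⟨w, hw⟩ := Finset.card_eq_one.1 hl2
      have hz1 : z ∈ s.filter (fun v => 0 < det2 (y - x) (v - x)) := by rw [hz]; simp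
      have hw1 : w ∈ s.filter (fun v => det2 (y - x) (v - x) < 0) := by rw [hw]; simp
      rw [Finset.mem_filter] at hz1 hw1
      have hm : ((x, y), (z, w)) ∈ T := by
        rw [memT]
        exact ⟨⟨⟨hs.1 hx, hs.1 hy, hne⟩, hs.1 hz1.1, hs.1 hw1.1⟩, hz1.2, hw1.2⟩
      refine ⟨((x, y), (z, w)), ?_, rfl⟩
      rw [Finset.mem_filter]
      refine ⟨hm, ?_⟩
      apply Finset.eq_of_subset_of_card_le
      · intro a ha
        simp only [Finset.mem_insert, Finset.mem_singleton] at ha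
        rcases ha with rfl | rfl | rfl | rfl
        · exact hx
        · exact hy
        · exact hz1.1
        · exact hw1.1
      · rw [hs.2]
        exact (card4 x y z w hm).ge
  · rintro ⟨⟨x, y⟩, ⟨z, w⟩⟩ ht
    rw [Finset.mem_coe] at ht
    rw [Finset.mem_coe, Finset.mem_powersetCard]
    refine ⟨?_, card4 x y z w ht⟩
    rw [memT] at ht
    intro a ha
    simp only [Finset.mem_insert, Finset.mem_singleton] at ha
    rcases ha with rfl | rfl | rfl | rfl
    · exact ht.1.1.1
    · exact ht.1.1.2.1
    · exact ht.1.2.1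
    · exact ht.1.2.2

theorem crossing_formula {P : Finset (ℝ × ℝ)} (hP : GP P) :
    ∑ t ∈ P.offDiag, lft P t.1 t.2 * lft P t.2 t.1 + 2 * crNum P = 6 * Nat.choose P.card 4 := by
  rw [sum_four hP]
  have h1 : crNum P = ∑ s ∈ P.powersetCard 4, if ConvexPosition s then 1 else 0 := by
    rw [← Finset.card_filter, crNum, ← Set.ncard_coe_finset]
    congr 1
    ext s
    simp only [Finset.coe_filter, Finset.mem_powersetCard]
    exact and_assoc.symm
  rw [h1, Finset.mul_sum, ← Finset.sum_add_distrib, Finset.sum_congr rfl (g := fun _ => 6)]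
  · rw [Finset.sum_const, Finset.card_powersetCard, smul_eq_mul]; ring
  · intro s hs
    rw [Finset.mem_powersetCard] at hs
    exact four_count (hP.mono hs.1) hs.2
end

section
def ql : List (ℕ × ℕ) := [(147046,188604),(154783,152780),(163756,158719),(157322,157183),(179287,156842),(158369,160697),(81754,343712),(159463,160167),(198219,154553),(160870,159777),(140283,134099),(167439,158711),(157809,163512),(162357,158708),(151669,177901),(158790,157858),(38602,0),(158702,159071),(144186,195441),(158336,160483),(190868,155494),(155974,166706),(156632,155966),(158519,162306),(147241,143454),(161038,159642),(357841,134485),(160032,158960),(135792,128203),(158991,157936)]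

def qpos (p q x : ℕ × ℕ) : Bool :=
  Nat.blt (p.2*q.1+q.2*x.1+x.2*p.1) (p.1*q.2+q.1*x.2+x.1*p.2)

def qcnt (p q : ℕ × ℕ) : ℕ := (ql.filter (qpos p q)).length

def qeq (p q : ℕ × ℕ) : Bool := Nat.beq p.1 q.1 && Nat.beq p.2 q.2

theorem ql_nodup : ql.Nodup := by decide +kernel

theorem ql_gp : (ql.all fun p => ql.all fun q => ql.all fun x =>
    qeq p q || qeq p x || qeq q x || qpos p q x || qpos q p x) = true := by decide +kernel

theorem ql_sum : (ql.map fun p => (ql.map fun q => qcnt p q * qcnt q p).sum).sum = 144978 := by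
  decide +kernel

def qf (p : ℕ × ℕ) : ℝ × ℝ := ((p.1 : ℝ), (p.2 : ℝ))

theorem qf_inj : Function.Injective qf := by
  rintro ⟨a, b⟩ ⟨c, d⟩ h
  simpa [qf] using h

theorem qpos_iff (p q x : ℕ × ℕ) :
    0 < det2 (qf q - qf p) (qf x - qf p) ↔ qpos p q x = true := by
  rw [qpos, Nat.blt_eq, ← Nat.cast_lt (α := ℝ)]
  simp only [det2, qf, Prod.fst_sub, Prod.snd_sub]
  push_cast
  constructor <;> intro h <;> nlinarith

def qS : Finset (ℕ × ℕ) := ⟨(ql : Multiset (ℕ × ℕ)), Multiset.coe_nodup.2 ql_nodup⟩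

def qQ : Finset (ℝ × ℝ) := qS.map ⟨qf, qf_inj⟩

theorem qQ_card : qQ.card = 30 := by
  rw [qQ, Finset.card_map]; rfl

theorem qQ_gp : GP qQ := by
  intro p hp q hq x hx hpq hpx hqx h0
  simp only [qQ, Finset.mem_map, Function.Embedding.coeFn_mk] at hp hq hx
  obtain ⟨p, hp, rfl⟩ := hp
  obtain ⟨q, hq, rfl⟩ := hq
  obtain ⟨x, hx, rfl⟩ := hx
  have hp' : p ∈ ql := hp
  have hq' : q ∈ ql := hq
  have hx' : x ∈ ql := hx
  have h := ql_gp
  rw [List.all_eq_true] at h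
  have h := h p hp'
  rw [List.all_eq_true] at h
  have h := h q hq'
  rw [List.all_eq_true] at h
  have h := h x hx'
  have ne : ∀ a b : ℕ × ℕ, qf a ≠ qf b → qeq a b = false := by
    rintro ⟨a, b⟩ ⟨c, d⟩ h
    by_contra hc
    apply h
    simp [qeq] at hc
    simp [hc]
  rw [ne _ _ hpq, ne _ _ hpx, ne _ _ hqx] at h
  simp only [Bool.false_or, Bool.or_eq_true] at h
  rcases h with h | h
  · rw [← qpos_iff] at h; linarith
  · rw [← qpos_iff, det_swap] at h; linarith

theorem qQ_lft (p q : ℕ × ℕ) : lft qQ (qf p) (qf q) = qcnt p q := by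
  have h1 : lft qQ (qf p) (qf q) = (qS.filter (fun x => qpos p q x = true)).card := by
    unfold lft qQ
    rw [Finset.filter_map, Finset.card_map]
    congr 1
    ext x
    simp only [Finset.mem_filter, Function.comp, Function.Embedding.coeFn_mk, qpos_iff]
  rw [h1]
  show (Multiset.filter _ (ql : Multiset (ℕ × ℕ))).card = _
  rw [Multiset.filter_coe, Multiset.coe_card]
  unfold qcnt
  congr 1
  congr 1
  ext x
  simp

theorem qS_sum (g : ℕ × ℕ → ℕ) : ∑ p ∈ qS, g p = (ql.map g).sum := rfl

theorem lft_self (P : Finset (ℝ × ℝ)) (p : ℝ × ℝ) : lft P p p = 0 := by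
  unfold lft
  rw [Finset.card_eq_zero, Finset.filter_eq_empty_iff]
  intro x _
  simp [det2]

theorem qQ_cr : crNum qQ = 9726 := by
  have h := crossing_formula qQ_gp
  rw [qQ_card] at h
  have h2 : ∑ t ∈ qQ.offDiag, lft qQ t.1 t.2 * lft qQ t.2 t.1 = 144978 := by
    rw [← ql_sum]
    have e : ∑ t ∈ qQ.offDiag, lft qQ t.1 t.2 * lft qQ t.2 t.1
        = ∑ t ∈ qQ ×ˢ qQ, lft qQ t.1 t.2 * lft qQ t.2 t.1 := by
      apply Finset.sum_subset
      · intro t ht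
        rw [Finset.mem_offDiag] at ht
        exact Finset.mem_product.2 ⟨ht.1, ht.2.1⟩
      · intro t ht ht'
        rw [Finset.mem_product] at ht
        rw [Finset.mem_offDiag] at ht'
        have : t.1 = t.2 := by
          by_contra hc
          exact ht' ⟨ht.1, ht.2, hc⟩
        rw [this, lft_self, zero_mul]
    rw [e, Finset.sum_product]
    rw [← qS_sum, qQ, Finset.sum_map]
    apply Finset.sum_congr rfl
    intro p _
    rw [Finset.sum_map, ← qS_sum]
    apply Finset.sum_congr rfl
    intro q _
    have := qQ_lft p q
    have := qQ_lft q p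
    simp only [Function.Embedding.coeFn_mk]
    rw [← qQ_lft, ← qQ_lft]; rfl
  rw [h2] at h
  have : Nat.choose 30 4 = 27405 := by decide +kernel
  omega
end

section
open scoped Classical

theorem arith {P : Finset (ℝ × ℝ)} (hP : GP P) (hc : P.card = 30) (hcr : crNum P ≤ 9726) :
    ∀ k, k ≤ 12 → Nl P (k+1) = 3 * Nat.choose (k+2) 2 + 3 * Nat.choose (k - 8) 2 := by
  have lb : ∀ k, k ≤ 12 → 3 * Nat.choose (k+2) 2 + 3 * Nat.choose (k + 2 - 10) 2 ≤ Nl P (k+1) :=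
    fun k hk => main_bound 10 P hP (by omega) k (by omega)
  have cf := crossing_formula hP
  have e : ∑ t ∈ P.offDiag, lft P t.1 t.2 * lft P t.2 t.1
      = ∑ t ∈ P.offDiag, (fun l => l * (28 - l)) (lft P t.1 t.2) := by
    apply Finset.sum_congr rfl
    intro t ht
    rw [Finset.mem_offDiag] at ht
    have := lft_add hP ht.1 ht.2.1 ht.2.2
    have : lft P t.2 t.1 = 28 - lft P t.1 t.2 := by omega
    rw [this]
  rw [e, sum_pairs hP (n := 28) hc (fun l => l * (28 - l)), hc] at cf
  have h30 : Nat.choose 30 4 = 27405 := by decide +kernel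
  rw [h30] at cf
  have hh := halving_bound hP (h := 14) (by norm_num) hc
  have sn := sum_Nj hP (n := 28) hc
  have sy : ∀ i, i ≤ 28 → Nj P i = Nj P (28 - i) := fun i hi => Nj_symm hP (by omega)
  have n0 := Nl_zero P
  have ns := fun j => Nl_succ P j
  simp only [Finset.sum_range_succ, Finset.sum_range_zero] at cf
  have s0 := sy 0 (by norm_num); have s1 := sy 1 (by norm_num); have s2 := sy 2 (by norm_num)
  have s3 := sy 3 (by norm_num); have s4 := sy 4 (by norm_num); have s5 := sy 5 (by norm_num)
  have s6 := sy 6 (by norm_num); have s7 := sy 7 (by norm_num); have s8 := sy 8 (by norm_num)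
  have s9 := sy 9 (by norm_num); have s10 := sy 10 (by norm_num); have s11 := sy 11 (by norm_num)
  have s12 := sy 12 (by norm_num); have s13 := sy 13 (by norm_num)
  have l0 := lb 0 (by norm_num); have l1 := lb 1 (by norm_num); have l2 := lb 2 (by norm_num)
  have l3 := lb 3 (by norm_num); have l4 := lb 4 (by norm_num); have l5 := lb 5 (by norm_num)
  have l6 := lb 6 (by norm_num); have l7 := lb 7 (by norm_num); have l8 := lb 8 (by norm_num)
  have l9 := lb 9 (by norm_num); have l10 := lb 10 (by norm_num); have l11 := lb 11 (by norm_num)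
  have l12 := lb 12 (by norm_num)
  have t : ∀ m, m ≤ 28 → Nl P (m+1) = ∑ j ∈ Finset.range (m+1), Nj P j := by
    intro m _
    induction m with
    | zero => rw [ns, n0]; simp
    | succ m ih => rw [ns, ih (by omega), Finset.sum_range_succ _ (m+1)]
  rw [t 28 le_rfl] at sn
  simp only [Nat.choose_two_right] at *
  norm_num at s0 s1 s2 s3 s4 s5 s6 s7 s8 s9 s10 s11 s12 s13 l0 l1 l2 l3 l4 l5 l6 l7 l8 l9 l10 l11 l12 cf hh
  have q : ∀ m, m ≤ 28 → Nl P (m+1) = Nl P m + Nj P m := fun m _ => ns m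
  have q0 := ns 0; have q1 := ns 1; have q2 := ns 2; have q3 := ns 3; have q4 := ns 4
  have q5 := ns 5; have q6 := ns 6; have q7 := ns 7; have q8 := ns 8; have q9 := ns 9
  have q10 := ns 10; have q11 := ns 11; have q12 := ns 12; have q13 := ns 13
  simp only [Finset.sum_range_succ, Finset.sum_range_zero] at sn
  norm_num at q0 q1 q2 q3 q4 q5 q6 q7 q8 q9 q10 q11 q12 q13
  have W : 27*Nl P 1+25*Nl P 2+23*Nl P 3+21*Nl P 4+19*Nl P 5+17*Nl P 6+15*Nl P 7+13*Nl P 8+11*Nl P 9+9*Nl P 10+7*Nl P 11+5*Nl P 12+3*Nl P 13+1*Nl P 14 ≤ 12771 := by linarith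
  have H : 435 + Nl P 13 ≤ 2 * Nl P 14 := by linarith
  clear cf sn t q sy ns lb n0 hh s0 s1 s2 s3 s4 s5 s6 s7 s8 s9 s10 s11 s12 s13 q0 q1 q2 q3 q4 q5 q6 q7 q8 q9 q10 q11 q12 q13
  intro k hk
  interval_cases k <;> norm_num <;> linarith
end

section
open scoped Classical

theorem notcol {p q r : ℝ × ℝ} (h : det2 (q - p) (r - p) ≠ 0) :
    ¬ Collinear ℝ ({p, q, r} : Set (ℝ × ℝ)) := by
  intro h0
  apply h
  rw [collinear_iff_of_mem (p₀ := p) (by simp)] at h0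
  obtain ⟨v, hv⟩ := h0
  obtain ⟨a, ha⟩ := hv q (by simp)
  obtain ⟨b, hb⟩ := hv r (by simp)
  rw [ha, hb]
  simp [det2]
  ring

theorem triangle_bound (P : Finset (ℝ × ℝ)) (A B C : ℝ × ℝ) {D : ℝ} (hD : 0 < D) :
    ∃ l : ℝ, 0 < l ∧ ∀ z ∈ P, 0 ≤ l * D / 3 + det2 A z ∧ 0 ≤ l * D / 3 + det2 B z ∧
      0 ≤ l * D / 3 + det2 C z := by
  set M := ∑ z ∈ P, (|det2 A z| + |det2 B z| + |det2 C z|) with hM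
  have h0 : 0 ≤ M := Finset.sum_nonneg fun z _ => by positivity
  refine ⟨3 * (M + 1) / D, by positivity, ?_⟩
  intro z hz
  have h1 : |det2 A z| + |det2 B z| + |det2 C z| ≤ M :=
    Finset.single_le_sum (f := fun z => |det2 A z| + |det2 B z| + |det2 C z|)
      (fun z _ => by positivity) hz
  have e : 3 * (M + 1) / D * D / 3 = M + 1 := by field_simp
  rw [e]
  have := abs_nonneg (det2 A z); have := abs_nonneg (det2 B z); have := abs_nonneg (det2 C z)
  have := neg_abs_le (det2 A z); have := neg_abs_le (det2 B z); have := neg_abs_le (det2 C z)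
  refine ⟨?_, ?_, ?_⟩ <;> linarith

theorem mem_tri {v1 v2 v3 z : ℝ × ℝ} {w1 w2 w3 : ℝ} (h1 : 0 ≤ w1) (h2 : 0 ≤ w2) (h3 : 0 ≤ w3)
    (hs : w1 + w2 + w3 = 1) (hz : w1 • v1 + w2 • v2 + w3 • v3 = z) :
    z ∈ convexHull ℝ ({v1, v2, v3} : Set (ℝ × ℝ)) := by
  rw [← hz]
  have := (convex_convexHull ℝ ({v1, v2, v3} : Set (ℝ × ℝ))).sum_mem
    (t := (Finset.univ : Finset (Fin 3))) (w := ![w1, w2, w3]) (z := ![v1, v2, v3]) ?_ ?_ ?_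
  · simpa [Fin.sum_univ_three] using this
  · intro i _; fin_cases i <;> simpa
  · simpa [Fin.sum_univ_three] using hs
  · intro i _
    apply subset_convexHull
    fin_cases i <;> simp

theorem triangle (P : Finset (ℝ × ℝ)) {A B C : ℝ × ℝ} (hs : A + B + C = 0) (hD : 0 < det2 A B) :
    ∃ l : ℝ, 0 < l ∧ ∃ v1 v2 v3 : ℝ × ℝ, v2 - v1 = l • A ∧ v3 - v2 = l • B ∧ v1 - v3 = l • C ∧
      ¬ Collinear ℝ ({v1, v2, v3} : Set (ℝ × ℝ)) ∧
      (P : Set (ℝ × ℝ)) ⊆ convexHull ℝ {v1, v2, v3} := by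
  obtain ⟨l, hl, h⟩ := triangle_bound P A B C hD
  obtain ⟨a1, a2⟩ := A
  obtain ⟨b1, b2⟩ := B
  have hC : C = (-a1 - b1, -a2 - b2) := by
    have h1 := congrArg Prod.fst hs
    have h2 := congrArg Prod.snd hs
    simp at h1 h2
    ext <;> simp <;> linarith
  subst hC
  have hD' : 0 < a1 * b2 - a2 * b1 := hD
  have hD0 : a1 * b2 - a2 * b1 ≠ 0 := hD'.ne'
  refine ⟨l, hl, (l * (-(2 * a1 + b1) / 3), l * (-(2 * a2 + b2) / 3)),
    (l * ((a1 - b1) / 3), l * ((a2 - b2) / 3)), (l * ((a1 + 2 * b1) / 3), l * ((a2 + 2 * b2) / 3)),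
    ?_, ?_, ?_, ?_, ?_⟩
  · ext <;> simp <;> ring
  · ext <;> simp <;> ring
  · ext <;> simp <;> ring
  · apply notcol
    have : l ^ 2 * (a1 * b2 - a2 * b1) ≠ 0 := by positivity
    intro h0
    apply this
    rw [← h0]
    simp only [det2, Prod.fst_sub, Prod.snd_sub]
    ring
  · rintro ⟨x, y⟩ hz
    obtain ⟨h1, h2, h3⟩ := h _ hz
    simp only [det2] at h1 h2 h3
    have hlD : 0 < l * (a1 * b2 - a2 * b1) := by positivity
    refine mem_tri (w1 := (l * (a1 * b2 - a2 * b1) / 3 + (b1 * y - b2 * x)) / (l * (a1 * b2 - a2 * b1)))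
      (w2 := (l * (a1 * b2 - a2 * b1) / 3 + ((-a1 - b1) * y - (-a2 - b2) * x)) / (l * (a1 * b2 - a2 * b1)))
      (w3 := (l * (a1 * b2 - a2 * b1) / 3 + (a1 * y - a2 * x)) / (l * (a1 * b2 - a2 * b1)))
      (div_nonneg h2 hlD.le) (div_nonneg h3 hlD.le) (div_nonneg h1 hlD.le) ?_ ?_
    · field_simp; ring
    · ext <;> simp <;> field_simp <;> ring

theorem rmid {P E : Finset (ℝ × ℝ)} {u p q r x : ℝ × ℝ} (hu : NT P u) (hE : E ⊆ P)
    (hall : ∀ y ∈ P, y = p ∨ y = q ∨ y = r ∨ y ∈ E) (hr : r ∈ P) (hrE : r ∉ E)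
    (hb : 10 ≤ (P.filter (fun y => dot2 u y < dot2 u r)).card) (hq : dot2 u r < dot2 u q)
    (hc : 9 ≤ E.card) (hx : x ∈ Sm E 9 u) : dot2 u x < dot2 u r := by
  have hxE : x ∈ E := (Finset.mem_filter.1 hx).1
  rcases lt_trichotomy (dot2 u x) (dot2 u r) with h | h | h
  · exact h
  · exfalso
    exact hu x (hE hxE) r hr (by rintro rfl; exact hrE hxE) h
  · exfalso
    have hsub : P.filter (fun y => dot2 u y < dot2 u r) ⊆ insert p ((Sm E 9 u).erase x) := by
      intro y hy
      rw [Finset.mem_filter] at hy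
      rw [Finset.mem_insert, Finset.mem_erase]
      rcases hall y hy.1 with h1 | h1 | h1 | h1
      · exact Or.inl h1
      · subst h1; linarith
      · subst h1; linarith
      · right
        refine ⟨by rintro rfl; linarith, ?_⟩
        by_contra hy'
        have := lt_of_mem_Sm (hu.mono hE) hx h1 hy'
        linarith [hy.2]
    have h1 := Finset.card_le_card hsub
    have h2 := Finset.card_insert_le p ((Sm E 9 u).erase x)
    rw [Finset.card_erase_of_mem hx, card_Sm (hu.mono hE) hc] at h2
    omega

theorem order {P : Finset (ℝ × ℝ)} {p q r a b c : ℝ × ℝ} {α β γ : ℝ}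
    (h : Trip P 9 p q r a b c α β γ) (hc : P.card = 30)
    (hH : ∀ v e, Hull P v e → v = p ∨ v = q ∨ v = r)
    {C : Finset (ℝ × ℝ)} (hC : C ⊆ Er P p q r) (h1 : Disjoint (Sm (Er P p q r) 9 c) C)
    (h2 : Disjoint (Sm (Er P p q r) 9 (-c)) C) :
    ∀ x ∈ insert r C, ∀ y ∈ insert p (Sm (Er P p q r) 9 c), ∀ z ∈ insert q (Sm (Er P p q r) 9 (-c)),
      dot2 c y < dot2 c x ∧ dot2 c x < dot2 c z := by
  have hcard := h.card
  have hne : P.Nonempty := ⟨p, h.hp.mem⟩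
  have hnt := h.hr.nt
  have first : ∀ y ∈ P, y ≠ p → dot2 c p < dot2 c y := by
    obtain ⟨m, hm, hmin⟩ := Finset.exists_min_image P (dot2 c) hne
    have hh : Hull P m c := ⟨hm, fun y hy hym => lt_of_le_of_ne (hmin y hy) (hnt m hm y hy hym.symm)⟩
    have emp : (P.filter (fun y => dot2 c y < dot2 c m)).card = 0 := by
      rw [Finset.card_eq_zero, Finset.filter_eq_empty_iff]
      intro y hy; exact not_lt.2 (hmin y hy)
    rcases hH m c hh with rfl | rfl | rfl
    · exact hh.2
    · have := h.hq.low h.bc; omega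
    · have := h.hr.below; omega
  have last : ∀ y ∈ P, y ≠ q → dot2 c y < dot2 c q := by
    obtain ⟨m, hm, hmin⟩ := Finset.exists_max_image P (dot2 c) hne
    have hh : Hull P m (-c) := ⟨hm, fun y hy hym => by
      rw [dot_neg, dot_neg]
      exact neg_lt_neg (lt_of_le_of_ne (hmin y hy) (hnt y hy m hm hym))⟩
    have emp : (P.filter (fun y => dot2 c m < dot2 c y)).card = 0 := by
      rw [Finset.card_eq_zero, Finset.filter_eq_empty_iff]
      intro y hy; exact not_lt.2 (hmin y hy)
    rcases hH m _ hh with rfl | rfl | rfl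
    · have := h.hp.high h.ca; omega
    · intro y hy hyq
      have := hh.2 y hy hyq
      rw [dot_neg, dot_neg] at this
      linarith
    · have := h.hr.above; omega
  have hall : ∀ y ∈ P, y = p ∨ y = q ∨ y = r ∨ y ∈ Er P p q r := by
    intro y hy; rw [mem_Er]; tauto
  have hrE : r ∉ Er P p q r := by rw [mem_Er]; tauto
  have hSP : ∀ u, Sm (Er P p q r) 9 u ⊆ Er P p q r := fun u => Finset.filter_subset _ _
  have ntE : NT (Er P p q r) c := hnt.mono Er_sub
  intro x hx y hy z hz
  rw [Finset.mem_insert] at hx hy hz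
  have hxP : x ∈ P := by
    rcases hx with rfl | hx
    · exact h.hr.mem
    · exact Er_sub (hC hx)
  have hxp : x ≠ p := by
    rcases hx with rfl | hx
    · exact h.rp
    · exact (mem_Er.1 (hC hx)).2.2.1
  have hxq : x ≠ q := by
    rcases hx with rfl | hx
    · exact h.qr.symm
    · exact (mem_Er.1 (hC hx)).2.1
  constructor
  · rcases hy with rfl | hy
    · exact first x hxP hxp
    · rcases hx with rfl | hx
      · exact rmid hnt Er_sub hall h.hr.mem hrE h.hr.below (last _ h.hr.mem h.qr.symm) (by omega) hy
      · exact lt_of_mem_Sm ntE hy (hC hx) (Finset.disjoint_right.1 h1 hx)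
  · rcases hz with rfl | hz
    · exact last x hxP hxq
    · have : dot2 (-c) z < dot2 (-c) x := by
        rcases hx with rfl | hx
        · refine rmid (p := q) (q := p) hnt.neg Er_sub (fun y hy => by have := hall y hy; tauto)
            h.hr.mem hrE ?_ ?_ (by omega) hz
          · have h3 := rk_neg (P := P) (u := c) x
            unfold rk at h3
            rw [h3]; exact h.hr.above
          · rw [dot_neg, dot_neg]; linarith [first _ h.hr.mem h.rp]
        · exact lt_of_mem_Sm ntE.neg hz (hC hx) (Finset.disjoint_right.1 h2 hx)
      rw [dot_neg, dot_neg] at this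
      linarith

theorem dot_smul (l : ℝ) (u x : ℝ × ℝ) : dot2 (l • u) x = l * dot2 u x := by
  simp [dot2]; ring

theorem proj_of {l : ℝ} (hl : 0 < l) {d : ℝ × ℝ} {X Y Z : Finset (ℝ × ℝ)}
    (h : ∀ x ∈ X, ∀ y ∈ Y, ∀ z ∈ Z, dot2 d y < dot2 d x ∧ dot2 d x < dot2 d z) :
    ProjBetween (l • d) X Y Z := by
  left
  intro x hx y hy z hz
  simp only [dot_smul]
  exact ⟨mul_lt_mul_of_pos_left (h x hx y hy z hz).1 hl, mul_lt_mul_of_pos_left (h x hx y hy z hz).2 hl⟩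

theorem threedec {P : Finset (ℝ × ℝ)} (hP : GP P) (hc : P.card = 30) (h1 : Nl P 1 = 3)
    (h10 : Nl P 10 = 165) : PtSet3Decomposable P := by
  obtain ⟨p, q, r, a, b, c, α, β, γ, h⟩ := exists_trip hP (k := 9) (by omega)
  have hcard := h.card
  have hrec := h.recur hP (by omega)
  have hmb := main_bound 9 (Er P p q r) (hP.mono Er_sub) (by omega) 7 (by omega)
  norm_num [Nat.choose_two_right] at hmb hrec
  have hr1 : Er P q r p = Er P p q r := Er_rot P p q r
  have hr2 : Er P r p q = Er P p q r := by rw [Er_rot, Er_rot]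
  have hEP : Er P p q r ⊆ P := Er_sub
  have hEm : ∀ x, x ∈ Er P p q r ↔ x ≠ r ∧ x ≠ q ∧ x ≠ p ∧ x ∈ P := fun x => mem_Er
  have o1 := order h hc
  have o2 := order h.rot hc
  have o3 := order h.rot.rot hc
  rw [hr1] at o2
  rw [hr2] at o3
  have hPE := hP.mono hEP
  set E := Er P p q r with hE
  have na : NT E a := h.hp.nt.mono hEP
  have nb : NT E b := h.hq.nt.mono hEP
  have nc : NT E c := h.hr.nt.mono hEP
  have g1 := gate hPE nb h.ab 9
  have g2 := gate hPE nc h.bc 9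
  have g3 := gate hPE na h.ca 9
  have key : ∀ u w, NT E u → NT E w → (Sm E 9 u \ Sm E 9 w).card ≤ 0 → Sm E 9 u = Sm E 9 w := by
    intro u w hu hw h0
    apply Finset.eq_of_subset_of_card_le
    · rw [← Finset.sdiff_eq_empty_iff_subset, ← Finset.card_eq_zero]; omega
    · rw [card_Sm hu (by omega), card_Sm hw (by omega)]
  have e1 : Sm E 9 b = Sm E 9 (-a) := key _ _ nb na.neg (by omega)
  have e2 : Sm E 9 c = Sm E 9 (-b) := key _ _ nc nb.neg (by omega)
  have e3 : Sm E 9 a = Sm E 9 (-c) := key _ _ na nc.neg (by omega)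
  have dj : ∀ u, NT E u → Disjoint (Sm E 9 u) (Sm E 9 (-u)) := fun u hu =>
    Finset.disjoint_left.2 (Sm_disj hu (by omega))
  have dab : Disjoint (Sm E 9 a) (Sm E 9 b) := by rw [e1]; exact dj a na
  have dbc : Disjoint (Sm E 9 b) (Sm E 9 c) := by rw [e2]; exact dj b nb
  have dca : Disjoint (Sm E 9 c) (Sm E 9 a) := by rw [e3]; exact dj c nc
  have ca := card_Sm na (m := 9) (by omega)
  have cb := card_Sm nb (m := 9) (by omega)
  have cc := card_Sm nc (m := 9) (by omega)
  rw [← e3] at o1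
  rw [← e1] at o2
  rw [← e2] at o3
  have sa : Sm E 9 a ⊆ E := Finset.filter_subset _ _
  have sb : Sm E 9 b ⊆ E := Finset.filter_subset _ _
  have sc : Sm E 9 c ⊆ E := Finset.filter_subset _ _
  generalize Sm E 9 a = X at *
  generalize Sm E 9 b = Y at *
  generalize Sm E 9 c = Z at *
  have un : X ∪ Y ∪ Z = E := by
    apply Finset.eq_of_subset_of_card_le
    · exact Finset.union_subset (Finset.union_subset sa sb) sc
    · rw [Finset.card_union_of_disjoint (Finset.disjoint_union_left.2 ⟨dca.symm, dbc⟩),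
        Finset.card_union_of_disjoint dab]
      omega
  have hH : ∀ v e, Hull P v e → v = p ∨ v = q ∨ v = r := by
    have hs := card_Hs hP (by omega)
    have hn : Nj P 0 = 3 := by
      have := Nl_succ P 0
      rw [Nl_zero] at this
      norm_num at this
      omega
    have hsub : ({p, q, r} : Finset (ℝ × ℝ)) ⊆ Hs P := by
      intro v hv
      simp only [Finset.mem_insert, Finset.mem_singleton] at hv
      rw [Hs, Finset.mem_filter]
      rcases hv with rfl | rfl | rfl
      · exact ⟨h.hp.mem, h.hp.hull.imp fun e he => he.1⟩
      · exact ⟨h.hq.mem, h.hq.hull.imp fun e he => he.1⟩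
      · exact ⟨h.hr.mem, h.hr.hull.imp fun e he => he.1⟩
    have h3 : ({p, q, r} : Finset (ℝ × ℝ)).card = 3 :=
      Finset.card_eq_three.2 ⟨p, q, r, h.pq, h.rp.symm, h.qr, rfl⟩
    have heq := Finset.eq_of_subset_of_card_le hsub (by omega)
    intro v e hv
    have : v ∈ Hs P := by rw [Hs, Finset.mem_filter]; exact ⟨hv.1, e, hv⟩
    rw [← heq] at this
    simpa using this
  have o1 := o1 hH (C := Y) sb dbc.symm dab
  have o2 := o2 (fun v e hv => or_assoc.1 (hH v e hv).symm) (C := Z) sc dca.symm dbc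
  have o3 := o3 (fun v e hv => (or_assoc.2 (hH v e hv)).symm) (C := X) sa dab.symm dca
  have hD : 0 < det2 (α • a) (β • b) := by
    have : det2 (α • a) (β • b) = α * β * det2 a b := by simp [det2]; ring
    rw [this]
    exact mul_pos (mul_pos h.α0 h.β0) h.ab
  obtain ⟨l, hl, v1, v2, v3, t1, t2, t3, t4, t5⟩ := triangle P h.sum hD
  have nE : ∀ W : Finset (ℝ × ℝ), W ⊆ E → p ∉ W ∧ q ∉ W ∧ r ∉ W := by
    intro W hW
    refine ⟨fun hw => ?_, fun hw => ?_, fun hw => ?_⟩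
    · exact ((hEm _).1 (hW hw)).2.2.1 rfl
    · exact ((hEm _).1 (hW hw)).2.1 rfl
    · exact ((hEm _).1 (hW hw)).1 rfl
  have nX := nE X sa
  have nY := nE Y sb
  have nZ := nE Z sc
  refine ⟨insert p Z, insert q X, insert r Y, v1, v2, v3, ?_, ?_, ?_, ?_, ?_, ?_, t4, t5, ?_, ?_, ?_⟩
  · ext x
    have hx := hEm x
    rw [← un] at hx
    simp only [Finset.mem_union, Finset.mem_insert] at hx ⊢
    have := h.hp.mem
    have := h.hq.mem
    have := h.hr.mem
    constructor
    · rintro (((h1 | h1) | h1 | h1) | h1 | h1)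
      · rw [h1]; assumption
      · exact hEP (sc h1)
      · rw [h1]; assumption
      · exact hEP (sa h1)
      · rw [h1]; assumption
      · exact hEP (sb h1)
    · intro hxP
      by_cases x1 : x = p
      · exact Or.inl (Or.inl (Or.inl x1))
      by_cases x2 : x = q
      · exact Or.inl (Or.inr (Or.inl x2))
      by_cases x3 : x = r
      · exact Or.inr (Or.inl x3)
      rcases hx.2 ⟨x3, x2, x1, hxP⟩ with (h4 | h4) | h4
      · exact Or.inl (Or.inr (Or.inr h4))
      · exact Or.inr (Or.inr h4)
      · exact Or.inl (Or.inl (Or.inr h4))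
  · rw [Finset.disjoint_insert_left, Finset.disjoint_insert_right, Finset.mem_insert]
    exact ⟨not_or.2 ⟨h.pq, nX.1⟩, nZ.2.1, dca⟩
  · rw [Finset.disjoint_insert_left, Finset.disjoint_insert_right, Finset.mem_insert]
    exact ⟨not_or.2 ⟨h.rp.symm, nY.1⟩, nZ.2.2, dbc.symm⟩
  · rw [Finset.disjoint_insert_left, Finset.disjoint_insert_right, Finset.mem_insert]
    exact ⟨not_or.2 ⟨h.qr, nY.2.1⟩, nX.2.2, dab⟩
  · rw [Finset.card_insert_of_notMem nZ.1, Finset.card_insert_of_notMem nX.2.1]; omega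
  · rw [Finset.card_insert_of_notMem nX.2.1, Finset.card_insert_of_notMem nY.2.2]; omega
  · rw [t1, smul_smul]; exact proj_of (mul_pos hl h.α0) o2
  · rw [t2, smul_smul]; exact proj_of (mul_pos hl h.β0) o3
  · rw [t3, smul_smul]; exact proj_of (mul_pos hl h.γ0) o1
end

/-- Let `P` be a crossing-minimal set of 30 points in general position
in the plane. Then `E_{≤k}(P) = 3·C(k+2,2) + 3·C(k-8,2)` for every `0 ≤ k ≤ 12`
(with truncated subtraction, so `C(k-8,2) = 0` for `k ≤ 9`), and `P` is 3-decomposable. -/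
theorem crossing_minimal_K30_is_threeDecomposable (P : Finset (ℝ × ℝ))
    (hcard : P.card = 30) (hgp : GenPos P)
    (hmin : ∀ Q : Finset (ℝ × ℝ), Q.card = 30 → GenPos Q → crNum P ≤ crNum Q) :
    (∀ k : ℕ, k ≤ 12 →
      EleK P k = 3 * Nat.choose (k + 2) 2 + 3 * Nat.choose (k - 8) 2) ∧
    PtSet3Decomposable P := by
  have hP := gp_of_genPos hgp
  have h1 := hmin qQ qQ_card (genPos_of_gp qQ_gp)
  rw [qQ_cr] at h1
  have h2 := arith hP hcard h1
  refine ⟨fun k hk => ?_, ?_⟩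
  · rw [EleK_eq hP (by omega), h2 k hk]
  · exact threedec hP hcard (by simpa using h2 0 (by norm_num)) (by simpa [Nat.choose_two_right] using h2 9 (by norm_num))
end

section
/- Let k < n/2 and let Π be an n-half-period with initial arrangement π_0 = (a_k, a_{k−1}, …, a_1, b_1, …, b_m, c_1, …, c_k), m = n − 2k, having no confined transpositions. If Π is perfect, then in the liberation sequence σ(Π) either all the a's occur consecutively or all the c's occur consecutively. -/
/-- An `n`-half-period: a sequence `π_0, …, π_{n(n-1)/2}` of arrangements of `n`
labeled elements in the positions `1, …, n` (recorded by `pos t x` = the position of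
element `x` at time `t`), in which consecutive arrangements differ by a transposition
of the elements in two adjacent positions, and the last arrangement is the reverse of
the first. -/
structure HalfPeriod (n : ℕ) where
  pos : ℕ → Fin n → ℕ
  pos_mem : ∀ t, t ≤ n * (n - 1) / 2 → ∀ x, 1 ≤ pos t x ∧ pos t x ≤ n
  pos_inj : ∀ t, t ≤ n * (n - 1) / 2 → Function.Injective (pos t)
  step : ∀ t, t < n * (n - 1) / 2 → ∃ x y : Fin n,
    pos t y = pos t x + 1 ∧ pos (t + 1) x = pos t x + 1 ∧ pos (t + 1) y = pos t x ∧
    ∀ z, z ≠ x → z ≠ y → pos (t + 1) z = pos t z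
  reverse : ∀ x, pos (n * (n - 1) / 2) x = n + 1 - pos 0 x

namespace HalfPeriod

variable {n : ℕ}

/-- The number of transposition steps of an `n`-half-period. -/
def steps (n : ℕ) : ℕ := n * (n - 1) / 2

/-- Element `x` moves (changes position) at step `t`. -/
def Moved (hp : HalfPeriod n) (t : ℕ) (x : Fin n) : Prop :=
  hp.pos (t + 1) x ≠ hp.pos t x

/-- Step `t` is the transposition of the (distinct) elements `x` and `y`. -/
def SwapsAt (hp : HalfPeriod n) (t : ℕ) (x y : Fin n) : Prop :=
  x ≠ y ∧ hp.Moved t x ∧ hp.Moved t y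

/-- Step `t` is an `i`-transposition: it swaps the elements at positions `i` and `i+1`. -/
def GateAt (hp : HalfPeriod n) (t i : ℕ) : Prop :=
  ∃ x y : Fin n, hp.pos t x = i ∧ hp.pos t y = i + 1 ∧
    hp.pos (t + 1) x = i + 1 ∧ hp.pos (t + 1) y = i

/-- Step `t` is an `i`-critical transposition: an `i`- or an `(n-i)`-transposition. -/
def Critical (hp : HalfPeriod n) (t i : ℕ) : Prop :=
  hp.GateAt t i ∨ hp.GateAt t (n - i)

/-- Step `t` is a `(≤ k)`-critical transposition. -/
def LeCritical (hp : HalfPeriod n) (t k : ℕ) : Prop :=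
  ∃ i, 1 ≤ i ∧ i ≤ k ∧ hp.Critical t i

/-- `N_{≤ k}`: the number of `(≤ k)`-critical transpositions of the half-period. -/
noncomputable def NLe (hp : HalfPeriod n) (k : ℕ) : ℕ :=
  {t : ℕ | t < steps n ∧ hp.LeCritical t k}.ncard

end HalfPeriod
/-- The initial arrangement of `hp` is `(a_k, a_{k-1}, …, a_1, b_1, …, b_m, c_1, …, c_k)`
with `m = n - 2k` (1-indexed subscripts: `a_j = a ⟨j-1⟩`, etc.). -/
def StandardStart {n : ℕ} (hp : HalfPeriod n) (k : ℕ) (a : Fin k → Fin n)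
    (b : Fin (n - 2 * k) → Fin n) (c : Fin k → Fin n) : Prop :=
  Function.Injective (Sum.elim a (Sum.elim b c)) ∧
  (∀ i, hp.pos 0 (a i) = k - (i : ℕ)) ∧
  (∀ i, hp.pos 0 (b i) = k + (i : ℕ) + 1) ∧
  (∀ i, hp.pos 0 (c i) = n - k + (i : ℕ) + 1)

/-- Element `z` is still confined at step `t`: it is an `a` that has stayed in the
positions `{1, …, k}` up to time `t`, or a `c` that has stayed in `{n-k+1, …, n}`. -/
def ConfinedAt {n : ℕ} (hp : HalfPeriod n) (k : ℕ) (a c : Fin k → Fin n)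
    (t : ℕ) (z : Fin n) : Prop :=
  ((∃ i, z = a i) ∧ ∀ s ≤ t, hp.pos s z ≤ k) ∨
  ((∃ i, z = c i) ∧ ∀ s ≤ t, n - k < hp.pos s z)

/-- The half-period has no confined transpositions. -/
def NoConfinedSteps {n : ℕ} (hp : HalfPeriod n) (k : ℕ) (a c : Fin k → Fin n) : Prop :=
  ∀ t, t < HalfPeriod.steps n → ∀ x y, hp.SwapsAt t x y →
    ¬ (ConfinedAt hp k a c t x ∧ ConfinedAt hp k a c t y)

/-- An `a`-element `z` becomes free at time `u`: `u` is the first time at which its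
position exceeds `k` (it has exited through the first `A`-gate). -/
def AFreedAt {n : ℕ} (hp : HalfPeriod n) (k : ℕ) (z : Fin n) (u : ℕ) : Prop :=
  k < hp.pos u z ∧ ∀ s < u, hp.pos s z ≤ k

/-- A `c`-element `z` becomes free at time `u`: `u` is the first time at which its
position is at most `n - k` (it has exited through the first `C`-gate). -/
def CFreedAt {n : ℕ} (hp : HalfPeriod n) (k : ℕ) (z : Fin n) (u : ℕ) : Prop :=
  hp.pos u z ≤ n - k ∧ ∀ s < u, n - k < hp.pos s z

/-- Step `t` occurs in the `A`-Zone: it swaps positions `(p, p+1)` with `p ≤ k`. -/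
def AZoneStep {n : ℕ} (hp : HalfPeriod n) (k t : ℕ) : Prop :=
  ∃ p, 1 ≤ p ∧ p ≤ k ∧ hp.GateAt t p

/-- Step `t` occurs in the `C`-Zone: it swaps positions `(p, p+1)` with `p ≥ k + m = n - k`. -/
def CZoneStep {n : ℕ} (hp : HalfPeriod n) (k t : ℕ) : Prop :=
  ∃ p, n - k ≤ p ∧ hp.GateAt t p

/-- At step `t`, element `z` moves from position `p` to position `q` for the first time. -/
def FirstMove {n : ℕ} (hp : HalfPeriod n) (t : ℕ) (z : Fin n) (p q : ℕ) : Prop :=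
  hp.pos t z = p ∧ hp.pos (t + 1) z = q ∧
    ∀ s < t, ¬ (hp.pos s z = p ∧ hp.pos (s + 1) z = q)

/-- Step `t` is a discovery transposition for the element `z`: for some `1 ≤ i ≤ j`,
`z` is `a_j` (resp. `c_j`) and `z` exits its compulsory exit-gate (the `i`-th `A`-gate,
resp. the `i`-th `C`-gate) or enters its compulsory entry-gate (the `i`-th `C`-gate,
resp. the `i`-th `A`-gate) for the first time. The `i`-th `A`-gate is the pair of
positions `(k-i+1, k-i+2)` and the `i`-th `C`-gate is `(n-k+i-1, n-k+i)`. -/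
def DiscoveryFor {n : ℕ} (hp : HalfPeriod n) (k : ℕ) (a c : Fin k → Fin n)
    (t : ℕ) (z : Fin n) : Prop :=
  ∃ i : ℕ, 1 ≤ i ∧
    ((∃ j : Fin k, z = a j ∧ i ≤ (j : ℕ) + 1 ∧
       (FirstMove hp t z (k - i + 1) (k - i + 2) ∨
        FirstMove hp t z (n - k + i - 1) (n - k + i))) ∨
     (∃ j : Fin k, z = c j ∧ i ≤ (j : ℕ) + 1 ∧
       (FirstMove hp t z (k - i + 2) (k - i + 1) ∨
        FirstMove hp t z (n - k + i) (n - k + i - 1))))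

/-- Step `t` is a double-discovery transposition. -/
def DoubleDiscoveryAt {n : ℕ} (hp : HalfPeriod n) (k : ℕ) (a c : Fin k → Fin n)
    (t : ℕ) : Prop :=
  ∃ x y, hp.SwapsAt t x y ∧ DiscoveryFor hp k a c t x ∧ DiscoveryFor hp k a c t y

/-- `|T(a_{i+1})|`: the number of `c`'s that become free after `a_{i+1}` does. -/
noncomputable def TCardA {n : ℕ} (hp : HalfPeriod n) (k : ℕ) (a c : Fin k → Fin n)
    (i : Fin k) : ℕ :=
  {l : Fin k | ∃ u v, AFreedAt hp k (a i) u ∧ CFreedAt hp k (c l) v ∧ u < v}.ncard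

/-- `|T(c_{i+1})|`: the number of `a`'s that become free after `c_{i+1}` does. -/
noncomputable def TCardC {n : ℕ} (hp : HalfPeriod n) (k : ℕ) (a c : Fin k → Fin n)
    (i : Fin k) : ℕ :=
  {l : Fin k | ∃ u v, CFreedAt hp k (c i) u ∧ AFreedAt hp k (a l) v ∧ u < v}.ncard

/-- The half-period is perfect: it has no confined transpositions, every transposition
in the `A`-Zone or `C`-Zone is a discovery transposition, each `a_{i+1}` is involved in
exactly `min (i+1) |T(a_{i+1})|` double-discovery transpositions in the `C`-Zone, and
each `c_{i+1}` is involved in exactly `min (i+1) |T(c_{i+1})|` double-discovery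
transpositions in the `A`-Zone. -/
def PerfectHalfPeriod {n : ℕ} (hp : HalfPeriod n) (k : ℕ) (a c : Fin k → Fin n) : Prop :=
  NoConfinedSteps hp k a c ∧
  (∀ t, t < HalfPeriod.steps n → (AZoneStep hp k t ∨ CZoneStep hp k t) →
    ∃ z, hp.Moved t z ∧ DiscoveryFor hp k a c t z) ∧
  (∀ i : Fin k,
    {t : ℕ | t < HalfPeriod.steps n ∧ CZoneStep hp k t ∧ hp.Moved t (a i) ∧
      DoubleDiscoveryAt hp k a c t}.ncard = min ((i : ℕ) + 1) (TCardA hp k a c i)) ∧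
  (∀ i : Fin k,
    {t : ℕ | t < HalfPeriod.steps n ∧ AZoneStep hp k t ∧ hp.Moved t (c i) ∧
      DoubleDiscoveryAt hp k a c t}.ncard = min ((i : ℕ) + 1) (TCardC hp k a c i))

/-- A sequence of adjacent swaps. -/
structure SwapSeq (E : Type) where
  N : ℕ
  d : ℕ → E → ℤ
  inj : ∀ t, t ≤ N → Function.Injective (d t)
  step : ∀ t, t < N → ∃ x y, d t y = d t x + 1 ∧ d (t+1) x = d t x + 1 ∧
    d (t+1) y = d t x ∧ ∀ z, z ≠ x → z ≠ y → d (t+1) z = d t z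

namespace SwapSeq

variable {E : Type} (Z : SwapSeq E)

def Sw (t : ℕ) (x y : E) : Prop :=
  t < Z.N ∧ Z.d t y = Z.d t x + 1 ∧ Z.d (t+1) x = Z.d t x + 1 ∧
    Z.d (t+1) y = Z.d t x ∧ ∀ z, z ≠ x → z ≠ y → Z.d (t+1) z = Z.d t z

lemma exSw {t : ℕ} (ht : t < Z.N) : ∃ x y, Z.Sw t x y := by
  obtain ⟨x, y, h⟩ := Z.step t ht
  exact ⟨x, y, ht, h⟩

lemma sw_up {t : ℕ} {x y z : E} (h : Z.Sw t x y) (hz : Z.d t z < Z.d (t+1) z) : z = x := by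
  obtain ⟨_, h1, h2, h3, h4⟩ := h
  by_contra hx
  by_cases hy : z = y
  · subst hy; omega
  · have := h4 z hx hy; omega

lemma sw_down {t : ℕ} {x y z : E} (h : Z.Sw t x y) (hz : Z.d (t+1) z < Z.d t z) : z = y := by
  obtain ⟨_, h1, h2, h3, h4⟩ := h
  by_contra hy
  by_cases hx : z = x
  · subst hx; omega
  · have := h4 z hx hy; omega

lemma step_le {t : ℕ} (ht : t < Z.N) (z : E) :
    Z.d (t+1) z ≤ Z.d t z + 1 ∧ Z.d t z - 1 ≤ Z.d (t+1) z := by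
  obtain ⟨x, y, h⟩ := Z.exSw ht
  obtain ⟨_, h1, h2, h3, h4⟩ := h
  by_cases hx : z = x
  · subst hx; omega
  by_cases hy : z = y
  · subst hy; omega
  have := h4 z hx hy; omega

lemma cross_up {s t : ℕ} (hst : s ≤ t) (ht : t ≤ Z.N) {z : E} {g : ℤ}
    (h1 : Z.d s z < g) (h2 : g ≤ Z.d t z) :
    ∃ r y, s ≤ r ∧ r < t ∧ Z.Sw r z y ∧ Z.d r z = g - 1 := by
  induction t, hst using Nat.le_induction with
  | base => omega
  | succ t hst ih =>
    by_cases h : g ≤ Z.d t z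
    · obtain ⟨r, y, a, b, c⟩ := ih (by omega) h
      exact ⟨r, y, a, by omega, c⟩
    · obtain ⟨x, y, hs⟩ := Z.exSw (t := t) (by omega)
      have hx := Z.sw_up hs (z := z) (by omega)
      subst hx
      have := Z.step_le (t := t) (by omega) z
      exact ⟨t, y, hst, by omega, hs, by omega⟩

lemma cross_down {s t : ℕ} (hst : s ≤ t) (ht : t ≤ Z.N) {z : E} {g : ℤ}
    (h1 : g ≤ Z.d s z) (h2 : Z.d t z < g) :
    ∃ r, s ≤ r ∧ r < t ∧ Z.d r z = g ∧ Z.d (r+1) z = g - 1 := by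
  induction t, hst using Nat.le_induction with
  | base => omega
  | succ t hst ih =>
    by_cases h : Z.d t z < g
    · obtain ⟨r, a, b, c⟩ := ih (by omega) h
      exact ⟨r, a, by omega, c⟩
    · have := Z.step_le (t := t) (by omega) z
      exact ⟨t, hst, by omega, by omega, by omega⟩

lemma keep {t : ℕ} (ht : t < Z.N) {x y : E} (h : Z.d t x < Z.d t y)
    (hn : ¬ Z.Sw t x y) : Z.d (t+1) x < Z.d (t+1) y := by
  obtain ⟨x', y', hs⟩ := Z.exSw ht
  have i1 : Z.d t x' = Z.d t y → x' = y := fun e => Z.inj t (by omega) e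
  have i2 : Z.d t y' = Z.d t y → y' = y := fun e => Z.inj t (by omega) e
  have i3 : Z.d t x' = Z.d t x → x' = x := fun e => Z.inj t (by omega) e
  have i4 : Z.d t y' = Z.d t x → y' = x := fun e => Z.inj t (by omega) e
  have hs' := hs
  obtain ⟨_, h1, h2, h3, h4⟩ := hs'
  by_cases a1 : x = x'
  · subst a1
    by_cases b1 : y = y'
    · subst b1; exact absurd hs hn
    · by_cases b2 : y = x
      · subst b2; omega
      · have := h4 y b2 b1
        have : Z.d t y' ≠ Z.d t y := fun e => b1 (i2 e).symm
        omega
  · by_cases a2 : x = y'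
    · subst a2
      by_cases b1 : y = x'
      · subst b1; omega
      · by_cases b2 : y = x
        · subst b2; omega
        · have := h4 y b1 b2
          omega
    · have e1 := h4 x a1 a2
      by_cases b1 : y = x'
      · subst b1; omega
      · by_cases b2 : y = y'
        · subst b2
          have : Z.d t x' ≠ Z.d t x := fun e => a1 (i3 e).symm
          omega
        · have := h4 y b1 b2
          omega

lemma overtake {s t : ℕ} (hst : s ≤ t) (ht : t ≤ Z.N) {x y : E}
    (h1 : Z.d s x < Z.d s y) (h2 : Z.d t y < Z.d t x) :
    ∃ r, s ≤ r ∧ r < t ∧ Z.Sw r x y := by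
  by_contra hc
  push Not at hc
  have : ∀ q, s ≤ q → q ≤ t → Z.d q x < Z.d q y := by
    intro q hq
    induction q, hq using Nat.le_induction with
    | base => intro _; exact h1
    | succ q hq ih =>
      intro hqt
      exact Z.keep (by omega) (ih (by omega)) (hc q hq (by omega))
  have := this t hst le_rfl
  omega

lemma sw_ne_right {t : ℕ} {x y y' : E} (h : Z.Sw t x y) (h' : Z.Sw t x y') : y = y' := by
  apply Z.inj t h.1.le
  have := h.2; have := h'.2
  omega

end SwapSeq

/-- Abstract swap sequence seen from one zone, in terms of depths. -/
structure ZoneCore (E : Type) (k : ℕ) extends SwapSeq E where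
  m : ℤ
  hm : 1 ≤ m
  A : Fin k → E
  C : Fin k → E
  mono : ∀ t, t < N → ∀ x y, d (t+1) x = d t x + 1 → d (t+1) y = d t y - 1 → d 0 x < d 0 y
  Ainj : Function.Injective A
  A0 : ∀ i, d 0 (A i) = -m - (i : ℕ)
  C0 : ∀ i, d 0 (C i) = (i : ℕ) + 1
  AN : ∀ i, d N (A i) = (i : ℕ) + 1
  nAN : ∀ x, (∀ i, x ≠ A i) → d N x ≤ 0
  CA : ∀ i j, C i ≠ A j

namespace ZoneCore

variable {E : Type} {k : ℕ} (Z : ZoneCore E k)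

def AF (i : Fin k) (u : ℕ) : Prop :=
  -Z.m < Z.d u (Z.A i) ∧ ∀ s < u, Z.d s (Z.A i) ≤ -Z.m

def CF (i : Fin k) (u : ℕ) : Prop :=
  Z.d u (Z.C i) ≤ 0 ∧ ∀ s < u, 0 < Z.d s (Z.C i)

def DA (t : ℕ) (x : E) (i : Fin k) : Prop :=
  x = Z.A i ∧ Z.d t x ≤ (i : ℕ) ∧ ∀ s < t, ¬ (Z.d s x = Z.d t x ∧ Z.d (s+1) x = Z.d t x + 1)

def DC (t : ℕ) (y : E) (j : Fin k) : Prop :=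
  y = Z.C j ∧ Z.d t y ≤ (j : ℕ) + 1 ∧
    ∀ s < t, ¬ (Z.d s y = Z.d t y ∧ Z.d (s+1) y = Z.d t y - 1)

def DD (i : Fin k) : Set ℕ :=
  {t | ∃ y l, Z.Sw t (Z.A i) y ∧ 0 ≤ Z.d t (Z.A i) ∧ Z.DA t (Z.A i) i ∧ Z.DC t y l}

def TT (i : Fin k) : Set (Fin k) := {l | ∃ u v, Z.AF i u ∧ Z.CF l v ∧ u < v}

lemma sw_mono {t : ℕ} {x y : E} (h : Z.Sw t x y) : Z.d 0 x < Z.d 0 y := by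
  obtain ⟨h0, h1, h2, h3, h4⟩ := h
  exact Z.mono t h0 x y h2 (by omega)

lemma sw_uniq {t t' : ℕ} {x y : E} (h : Z.Sw t x y) (h' : Z.Sw t' x y) : t = t' := by
  have key : ∀ t t', Z.Sw t x y → Z.Sw t' x y → ¬ t < t' := by
    intro t t' h h' hlt
    obtain ⟨r, _, _, hr⟩ := Z.overtake (s := t+1) (t := t') (x := y) (y := x) (by omega)
      h'.1.le (by have := h.2; omega) (by have := h'.2; omega)
    have := Z.sw_mono hr
    have := Z.sw_mono h
    omega
  have := key t t' h h'
  have := key t' t h' h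
  omega

lemma AF_le {i : Fin k} {u : ℕ} (h : Z.AF i u) : u ≤ Z.N := by
  by_contra hc
  have := h.2 Z.N (by omega)
  have := Z.AN i
  have := Z.hm
  omega

lemma AF_of {i : Fin k} {t : ℕ} (h : -Z.m < Z.d t (Z.A i)) : ∃ u, u ≤ t ∧ Z.AF i u := by
  classical
  have hex : ∃ u, -Z.m < Z.d u (Z.A i) := ⟨t, h⟩
  refine ⟨Nat.find hex, Nat.find_min' hex h, Nat.find_spec hex, fun s hs => ?_⟩
  have := Nat.find_min hex hs
  omega

lemma AF_uniq {i : Fin k} {u v : ℕ} (h : Z.AF i u) (h' : Z.AF i v) : u = v := by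
  rcases lt_trichotomy u v with hl | hl | hl
  · have := h'.2 u hl; have := h.1; omega
  · exact hl
  · have := h.2 v hl; have := h'.1; omega

lemma CF_uniq {i : Fin k} {u v : ℕ} (h : Z.CF i u) (h' : Z.CF i v) : u = v := by
  rcases lt_trichotomy u v with hl | hl | hl
  · have := h'.2 u hl; have := h.1; omega
  · exact hl
  · have := h.2 v hl; have := h'.1; omega

lemma CF_ex (i : Fin k) : ∃ u, u ≤ Z.N ∧ Z.CF i u := by
  classical
  have h : Z.d Z.N (Z.C i) ≤ 0 := Z.nAN _ (fun j => Z.CA i j)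
  have hex : ∃ u, Z.d u (Z.C i) ≤ 0 := ⟨Z.N, h⟩
  refine ⟨Nat.find hex, Nat.find_min' hex h, Nat.find_spec hex, fun s hs => ?_⟩
  have := Nat.find_min hex hs
  omega

/-- No two confined `A`s are swapped. -/
def NoConf : Prop := ∀ t x y i j, Z.Sw t x y → x = Z.A i → y = Z.A j →
  ¬ ((∀ s ≤ t, Z.d s x ≤ -Z.m) ∧ (∀ s ≤ t, Z.d s y ≤ -Z.m))

def Disc : Prop := ∀ t x y, Z.Sw t x y → 0 ≤ Z.d t x → (∃ i, Z.DA t x i) ∨ (∃ j, Z.DC t y j)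

def Count : Prop := ∀ i : Fin k, (Z.DD i).ncard = min ((i : ℕ) + 1) (Z.TT i).ncard

variable {Z}

lemma order (hnc : Z.NoConf) {i j : Fin k} {u v : ℕ} (h : Z.AF i u) (h' : Z.AF j v)
    (huv : u < v) : i < j := by
  by_contra hc
  have hne : i ≠ j := by
    rintro rfl
    have := Z.AF_uniq h h'
    omega
  have hlt : (j : ℕ) < i := by
    have : j < i := lt_of_le_of_ne (not_lt.mp hc) hne.symm
    exact this
  have h1 := Z.A0 i
  have h2 := Z.A0 j
  have h3 := h'.2 u huv
  have h4 := h.1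
  obtain ⟨r, _, hr, hs⟩ := Z.overtake (s := 0) (t := u) (x := Z.A i) (y := Z.A j) (by omega)
    (Z.AF_le h) (by omega) (by omega)
  exact hnc r _ _ i j hs rfl rfl
    ⟨fun s hs => h.2 s (by omega), fun s hs => h'.2 s (by omega)⟩

lemma DC_conf {t : ℕ} {x y : E} {j : Fin k} (hs : Z.Sw t x y) (h : Z.DC t y j) :
    ∀ s ≤ t, Z.d t y ≤ Z.d s y := by
  intro s hst
  by_contra hc
  obtain ⟨hy, h1, h2⟩ := h
  have := Z.C0 j
  rw [← hy] at this
  obtain ⟨r, _, hr, e1, e2⟩ := Z.cross_down (s := 0) (t := s) (z := y) (g := Z.d t y) (by omega)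
    (by have := hs.1; omega) (by omega) (by omega)
  exact h2 r (by omega) ⟨e1, e2⟩

theorem core (hnc : Z.NoConf) (hd : Z.Disc) (hcount : Z.Count)
    {i0 j0 l0 e : Fin k} {v0 u0 v1 ue : ℕ}
    (hv0 : Z.CF i0 v0) (hu0 : Z.AF l0 u0) (hv1 : Z.CF j0 v1) (h01 : v0 < u0) (h12 : u0 < v1)
    (hue : Z.AF e ue) (hlast : ∀ j v, Z.CF j v → v < ue) : False := by
  classical
  have hm := Z.hm
  -- the last liberation time of a C
  choose f hfN hf using Z.CF_ex
  obtain ⟨jm, -, hjm⟩ := Finset.exists_max_image (Finset.univ : Finset (Fin k)) f ⟨e, by simp⟩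
  obtain ⟨τ, hτ⟩ : ∃ τ, τ = f jm := ⟨_, rfl⟩
  have hCFle : ∀ j v, Z.CF j v → v ≤ τ := by
    intro j v h
    rw [Z.CF_uniq h (hf j), hτ]
    exact hjm j (by simp)
  have hCFτ : Z.CF jm τ := hτ ▸ hf jm
  have hτN : τ ≤ Z.N := hτ ▸ hfN jm
  have hτue : τ < ue := hlast _ _ hCFτ
  have hA0 : ∀ i, Z.d 0 (Z.A i) ≤ 0 := by
    intro i; have := Z.A0 i; omega
  -- C-discoveries happen before τ
  have hDCfree : ∀ t x y j v, Z.Sw t x y → 0 ≤ Z.d t x → Z.DC t y j → Z.CF j v → t < v := by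
    intro t x y j v hs h0 hdc hcf
    by_contra hc
    have := DC_conf hs hdc v (by omega)
    have h2 := hcf.1
    rw [← hdc.1] at h2
    have := hs.2
    omega
  have hDCτ : ∀ t x y j, Z.Sw t x y → 0 ≤ Z.d t x → Z.DC t y j → t < τ := by
    intro t x y j hs h0 hdc
    have := hDCfree t x y j _ hs h0 hdc (hf j)
    have := hCFle j _ (hf j)
    omega
  have hafter : ∀ t x y, τ ≤ t → Z.Sw t x y → 0 ≤ Z.d t x → ∃ i, Z.DA t x i := by
    intro t x y ht hs h0
    rcases hd t x y hs h0 with h | ⟨j, h⟩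
    · exact h
    · have := hDCτ t x y j hs h0 h; omega
  have hL : ∀ t x i, τ ≤ t → Z.Sw t x (Z.A i) → 0 ≤ Z.d t x → ((i : ℕ) : ℤ) + 1 ≤ Z.d t x := by
    intro t x i ht hs h0
    by_contra hc
    have h1 := Z.AN i
    obtain ⟨htN, h2, h3, h4, h5⟩ := hs
    obtain ⟨r, y, hr1, hr2, hr3, hr4⟩ := Z.cross_up (s := t+1) (t := Z.N) (z := Z.A i)
      (g := Z.d t x + 1) (by omega) le_rfl (by omega) (by omega)
    obtain ⟨r', y', hr1', hr2', hr3', hr4'⟩ := Z.cross_up (s := 0) (t := t) (z := Z.A i)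
      (g := Z.d t x + 1) (by omega) (by omega) (by have := hA0 i; omega) (by omega)
    obtain ⟨i', hi'⟩ := hafter r _ _ (by omega) hr3 (by omega)
    have := hr3'.2
    exact hi'.2.2 r' (by omega) ⟨by omega, by omega⟩
  -- M
  have hM1 : ∀ i u, Z.AF i u → u < τ → 1 ≤ Z.d τ (Z.A i) := by
    intro i u hu huτ
    have hne : (Z.TT i).Nonempty := ⟨jm, u, τ, hu, hCFτ, huτ⟩
    have h1 : 0 < (Z.TT i).ncard := (Set.ncard_pos (Set.toFinite _)).2 hne
    have h2 : 0 < (Z.DD i).ncard := by rw [hcount i]; omega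
    obtain ⟨t, y, l, hs, h0, hda, hdc⟩ := Set.nonempty_of_ncard_ne_zero h2.ne'
    have htτ := hDCτ t _ _ l hs h0 hdc
    by_contra hc
    have h3 := Z.AN i
    obtain ⟨r, y, hr1, hr2, hr3, hr4⟩ := Z.cross_up (s := τ) (t := Z.N) (z := Z.A i)
      (g := 1) hτN le_rfl (by omega) (by omega)
    have h4 := hs.2
    obtain ⟨r', y', hr1', hr2', hr3', hr4'⟩ := Z.cross_up (s := 0) (t := t+1) (z := Z.A i)
      (g := 1) (by omega) (by omega) (by have := hA0 i; omega) (by omega)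
    obtain ⟨i', hi'⟩ := hafter r _ _ (by omega) hr3 (by omega)
    have := hr3'.2
    exact hi'.2.2 r' (by omega) ⟨by omega, by omega⟩
  have hM2 : ∀ i u, Z.AF i u → u < τ → ((i : ℕ) : ℤ) + 2 ≤ Z.d τ (Z.A i) := by
    intro i u hu huτ
    have h1 := hM1 i u hu huτ
    have hie : (i : ℕ) < e := order hnc hu hue (by omega)
    by_contra hc
    have hinv : ∀ t, τ ≤ t → t ≤ Z.N → 1 ≤ Z.d t (Z.A i) ∧ Z.d t (Z.A i) ≤ (i : ℕ) + 1 ∧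
        Z.d t (Z.A e) < Z.d t (Z.A i) := by
      intro t ht
      induction t, ht using Nat.le_induction with
      | base =>
        intro _
        have := hue.2 τ hτue
        refine ⟨h1, by omega, by omega⟩
      | succ t ht ih =>
        intro htN
        obtain ⟨g1, g2, g3⟩ := ih (by omega)
        have hnot : ∀ x, ¬ Z.Sw t x (Z.A i) := by
          intro x hs
          have h5 := hs.2
          have := hL t x i ht hs (by omega)
          omega
        have g4 := Z.keep (by omega) g3 (hnot _)
        obtain ⟨x, y, hs⟩ := Z.exSw (t := t) (by omega)
        by_cases hx : Z.A i = x
        · subst hx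
          obtain ⟨i', e1, e2, e3⟩ := hafter t _ _ ht hs (by omega)
          have := Z.Ainj e1
          subst this
          have := hs.2
          exact ⟨by omega, by omega, g4⟩
        · have hy : Z.A i ≠ y := by
            rintro rfl; exact hnot _ hs
          have := hs.2.2.2.2 _ hx hy
          exact ⟨by omega, by omega, g4⟩
    have := hinv Z.N hτN le_rfl
    have := Z.AN i
    have := Z.AN e
    omega
  have hDDsub : ∀ i, (Z.DD i).Finite := fun i =>
    (Set.finite_Iio Z.N).subset (by rintro t ⟨y, l, hs, -⟩; exact hs.1)
  have hM3 : ∀ i u, Z.AF i u → u < τ → ∀ t y, Z.Sw t (Z.A i) y → 0 ≤ Z.d t (Z.A i) →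
      ∃ j, Z.DC t y j := by
    intro i u hu huτ
    have h2 := hM2 i u hu huτ
    have hcard : (i : ℕ) + 1 < (Z.TT i).ncard := by
      by_contra hc
      obtain ⟨t0, y0, -, ht0, hs0, hd0⟩ := Z.cross_up (s := 0) (t := τ) (z := Z.A i)
        (g := ((i : ℕ) : ℤ) + 2) (by omega) hτN (by have := hA0 i; omega) (by omega)
      have hdc0 : ∃ j, Z.DC t0 y0 j := by
        rcases hd t0 _ _ hs0 (by omega) with ⟨i', e1, e2, e3⟩ | h
        · have := Z.Ainj e1
          subst this
          omega
        · exact h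
      obtain ⟨j, hj⟩ := hdc0
      have hjT : ∀ t y l, Z.Sw t (Z.A i) y → 0 ≤ Z.d t (Z.A i) → Z.DC t y l → l ∈ Z.TT i := by
        intro t y l hs h0 hdc
        obtain ⟨u', hu', hu''⟩ := Z.AF_of (i := i) (t := t) (by omega)
        have := hDCfree t _ _ l _ hs h0 hdc (hf l)
        exact ⟨u', f l, hu'', hf l, by omega⟩
      have hch : ∀ t, ∃ l, t ∈ Z.DD i → Z.Sw t (Z.A i) (Z.C l) ∧ 0 ≤ Z.d t (Z.A i) ∧
          Z.DA t (Z.A i) i ∧ Z.DC t (Z.C l) l := by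
        intro t
        by_cases ht : t ∈ Z.DD i
        · obtain ⟨y, l, a1, a2, a3, a4⟩ := ht
          have := a4.1
          subst this
          exact ⟨l, fun _ => ⟨a1, a2, a3, a4⟩⟩
        · exact ⟨i, fun h => absurd h ht⟩
      choose F hF using hch
      have hinj : Set.InjOn F (Z.DD i) := by
        intro t ht t' ht' heq
        have b1 := (hF t ht).1
        have b2 := (hF t' ht').1
        rw [heq] at b1
        exact Z.sw_uniq b1 b2
      have himg : F '' Z.DD i ⊆ Z.TT i := by
        rintro _ ⟨t, ht, rfl⟩
        obtain ⟨b1, b2, b3, b4⟩ := hF t ht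
        exact hjT t _ _ b1 b2 b4
      have hcd : (F '' Z.DD i).ncard = (Z.DD i).ncard := Set.InjOn.ncard_image hinj
      have heq := Set.eq_of_subset_of_ncard_le himg (by rw [hcd, hcount i]; omega)
        (Set.toFinite _)
      have hjin : j ∈ F '' Z.DD i := by
        rw [heq]; exact hjT t0 y0 j hs0 (by omega) hj
      obtain ⟨t, ht, hFt⟩ := hjin
      obtain ⟨b1, b2, b3, b4⟩ := hF t ht
      rw [hFt] at b1
      have hy0 := hj.1
      subst hy0
      have := Z.sw_uniq b1 hs0
      subst this
      have := b3.2.1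
      omega
    have hDD : (Z.DD i).ncard = (i : ℕ) + 1 := by rw [hcount i]; omega
    intro t y hs h0
    rcases hd t _ _ hs h0 with ⟨i', hda⟩ | h
    swap
    · exact h
    have := Z.Ainj hda.1
    subst this
    have hinj : Set.InjOn (fun t => (Z.d t (Z.A i)).toNat) (Z.DD i) := by
      rintro t ⟨y, l, a1, a2, a3, a4⟩ t' ⟨y', l', a1', a2', a3', a4'⟩ heq
      have heq : (Z.d t (Z.A i)).toNat = (Z.d t' (Z.A i)).toNat := heq
      have c1 := a1.2
      have c2 := a1'.2
      rcases lt_trichotomy t t' with hl | hl | hl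
      · exact absurd ⟨by omega, by omega⟩ (a3'.2.2 t hl)
      · exact hl
      · exact absurd ⟨by omega, by omega⟩ (a3.2.2 t' hl)
    have himg : (fun t => (Z.d t (Z.A i)).toNat) '' Z.DD i ⊆ Set.Iio ((i : ℕ) + 1) := by
      rintro _ ⟨t, ⟨y, l, a1, a2, a3, a4⟩, rfl⟩
      have := a3.2.1
      simp only [Set.mem_Iio]
      omega
    have hcd := Set.InjOn.ncard_image hinj
    have hIio : (Set.Iio ((i : ℕ) + 1)).ncard = (i : ℕ) + 1 := by
      rw [← Finset.coe_Iio, Set.ncard_coe_finset, Nat.card_Iio]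
    have heq := Set.eq_of_subset_of_ncard_le himg (by rw [hcd, hDD, hIio]) (Set.toFinite _)
    have hin : (Z.d t (Z.A i)).toNat ∈ (fun t => (Z.d t (Z.A i)).toNat) '' Z.DD i := by
      rw [heq]
      have := hda.2.1
      simp only [Set.mem_Iio]
      omega
    obtain ⟨t', ⟨y', l', a1', a2', a3', a4'⟩, heq'⟩ := hin
    have heq' : (Z.d t' (Z.A i)).toNat = (Z.d t (Z.A i)).toNat := heq'
    have c1 := hs.2
    have c2 := a1'.2
    have : t = t' := by
      rcases lt_trichotomy t t' with hl | hl | hl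
      · exact absurd ⟨by omega, by omega⟩ (a3'.2.2 t hl)
      · exact hl
      · exact absurd ⟨by omega, by omega⟩ (hda.2.2 t' hl)
    subst this
    have := Z.sw_ne_right hs a1'
    subst this
    exact ⟨l', a4'⟩
  have hbefore : ∀ t x y, t < τ → Z.Sw t x y → 0 ≤ Z.d t x → ∃ j, Z.DC t y j := by
    intro t x y ht hs h0
    rcases hd t x y hs h0 with ⟨i, hda⟩ | h
    · have := hda.1
      subst this
      obtain ⟨u, hu, hu'⟩ := Z.AF_of (i := i) (t := t) (by omega)
      exact hM3 i u hu' (by omega) t y hs h0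
    · exact h
  -- the liberator of `C i0`
  have hv0pos : v0 ≠ 0 := by
    rintro rfl
    have := hv0.1
    have := Z.C0 i0
    omega
  obtain ⟨w, rfl⟩ := Nat.exists_eq_succ_of_ne_zero hv0pos
  have hv1τ := hCFle _ _ hv1
  have hw1 := hv0.1
  have hw2 := hv0.2 w (by omega)
  have hw1 : Z.d (w+1) (Z.C i0) ≤ 0 := hw1
  obtain ⟨x, y, hs⟩ := Z.exSw (t := w) (by omega)
  have hy := Z.sw_down hs (z := Z.C i0) (by omega)
  subst hy
  have hs2 := hs.2
  have hxw : Z.d w x = 0 := by omega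
  have hinv : ∀ t, w + 1 ≤ t → t ≤ τ → 1 ≤ Z.d t x ∧ Z.d t (Z.A l0) < Z.d t x := by
    intro t ht
    induction t, ht using Nat.le_induction with
    | base =>
      intro _
      have := hu0.2 (w+1) (by omega)
      exact ⟨by omega, by omega⟩
    | succ t ht ih =>
      intro htτ
      obtain ⟨g1, g2⟩ := ih (by omega)
      have hnot : ∀ x', ¬ Z.Sw t x' x := by
        intro x' hs'
        have h5 := hs'.2
        obtain ⟨j, hj⟩ := hbefore t x' x (by omega) hs' (by omega)
        have := DC_conf hs' hj w (by omega)
        omega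
      have g4 := Z.keep (by omega) g2 (hnot _)
      refine ⟨?_, g4⟩
      obtain ⟨x', y', hs'⟩ := Z.exSw (t := t) (by omega)
      by_contra hc
      have := Z.sw_down hs' (z := x) (by omega)
      subst this
      exact hnot _ hs'
  have hτ1 := hinv τ (by omega) le_rfl
  have hl0 := hM2 l0 u0 hu0 (by omega)
  have hfin : Z.d Z.N x < Z.d Z.N (Z.A l0) := by
    rw [Z.AN l0]
    by_cases hx : ∃ i, x = Z.A i
    · obtain ⟨i, rfl⟩ := hx
      obtain ⟨u, hu, hu'⟩ := Z.AF_of (i := i) (t := w) (by omega)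
      have : (i : ℕ) < l0 := order hnc hu' hu0 (by omega)
      rw [Z.AN i]
      omega
    · push Not at hx
      have := Z.nAN x hx
      omega
  obtain ⟨r, hr1, hr2, hr3⟩ := Z.overtake hτN le_rfl hτ1.2 hfin
  have hinv2 : ∀ t, τ ≤ t → t ≤ Z.N → ((l0 : ℕ) : ℤ) + 1 ≤ Z.d t (Z.A l0) := by
    intro t ht
    induction t, ht using Nat.le_induction with
    | base => intro _; omega
    | succ t ht ih =>
      intro htN
      have g := ih (by omega)
      obtain ⟨x', y', hs'⟩ := Z.exSw (t := t) (by omega)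
      by_contra hc
      have := Z.sw_down hs' (z := Z.A l0) (by omega)
      subst this
      have h5 := hs'.2
      have := hL t x' l0 ht hs' (by omega)
      omega
  have h6 := hinv2 r hr1 (by omega)
  obtain ⟨i', e1, e2, e3⟩ := hafter r _ _ hr1 hr3 (by omega)
  have := Z.Ainj e1
  subst this
  omega

lemma DD_eq (D : ℕ → E → Prop) (ZS : ℕ → Prop)
    (hz : ∀ t, t < Z.N → (ZS t ↔ ∃ x y, Z.Sw t x y ∧ 0 ≤ Z.d t x))
    (hup : ∀ t x y, Z.Sw t x y → 0 ≤ Z.d t x → (D t x ↔ ∃ i, Z.DA t x i))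
    (hdown : ∀ t x y, Z.Sw t x y → 0 ≤ Z.d t x → (D t y ↔ ∃ j, Z.DC t y j)) (i : Fin k) :
    {t | t < Z.N ∧ ZS t ∧ Z.d (t+1) (Z.A i) ≠ Z.d t (Z.A i) ∧
      ∃ x y, (x ≠ y ∧ Z.d (t+1) x ≠ Z.d t x ∧ Z.d (t+1) y ≠ Z.d t y) ∧ D t x ∧ D t y} =
    Z.DD i := by
  have hmv : ∀ t x y z, Z.Sw t x y → Z.d (t+1) z ≠ Z.d t z → z = x ∨ z = y := by
    intro t x y z hs hz
    by_contra hc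
    push Not at hc
    exact hz (hs.2.2.2.2 z hc.1 hc.2)
  ext t
  constructor
  · rintro ⟨ht, hzs, hmove, x1, y1, ⟨hne, hx1, hy1⟩, hdx, hdy⟩
    obtain ⟨x, y, hs, h0⟩ := (hz t ht).1 hzs
    have hboth : D t x ∧ D t y := by
      rcases hmv t x y x1 hs hx1 with rfl | rfl <;> rcases hmv t _ _ y1 hs hy1 with rfl | rfl
      · exact absurd rfl hne
      · exact ⟨hdx, hdy⟩
      · exact ⟨hdy, hdx⟩
      · exact absurd rfl hne
    obtain ⟨i', hi'⟩ := (hup t x y hs h0).1 hboth.1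
    obtain ⟨j, hj⟩ := (hdown t x y hs h0).1 hboth.2
    have hx : x = Z.A i := by
      rcases hmv t x y _ hs hmove with h | h
      · exact h.symm
      · exact absurd (hj.1.symm.trans h.symm) (Z.CA j i)
    subst hx
    have := Z.Ainj hi'.1
    subst this
    exact ⟨y, j, hs, h0, hi', hj⟩
  · rintro ⟨y, l, hs, h0, hda, hdc⟩
    have h2 := hs.2
    refine ⟨hs.1, (hz t hs.1).2 ⟨_, _, hs, h0⟩, by omega, Z.A i, y, ⟨?_, by omega, by omega⟩,
      (hup t _ _ hs h0).2 ⟨i, hda⟩, (hdown t _ _ hs h0).2 ⟨l, hdc⟩⟩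
    rintro h
    rw [← h] at h2
    omega

end ZoneCore

section Inst

variable {n k : ℕ}

def HalfPeriod.seqR (hp : HalfPeriod n) (r : ℤ) : SwapSeq (Fin n) where
  N := n * (n - 1) / 2
  d := fun t x => (hp.pos t x : ℤ) - r
  inj := fun t ht x y h => hp.pos_inj t ht (by dsimp only at h; omega)
  step := by
    intro t ht
    obtain ⟨x, y, h1, h2, h3, h4⟩ := hp.step t ht
    refine ⟨x, y, by omega, by omega, by omega, ?_⟩
    intro z hx hy
    have := h4 z hx hy
    omega

def HalfPeriod.seqL (hp : HalfPeriod n) (r : ℤ) : SwapSeq (Fin n) where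
  N := n * (n - 1) / 2
  d := fun t x => r - (hp.pos t x : ℤ)
  inj := fun t ht x y h => hp.pos_inj t ht (by dsimp only at h; omega)
  step := by
    intro t ht
    obtain ⟨x, y, h1, h2, h3, h4⟩ := hp.step t ht
    refine ⟨y, x, by omega, by omega, by omega, ?_⟩
    intro z hx hy
    have := h4 z hy hx
    omega

lemma card_pairs (hp : HalfPeriod n) :
    (Finset.univ.filter (fun p : Fin n × Fin n => hp.pos 0 p.1 < hp.pos 0 p.2)).card
      = n * (n - 1) / 2 := by
  classical
  set P := Finset.univ.filter (fun p : Fin n × Fin n => hp.pos 0 p.1 < hp.pos 0 p.2) with hP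
  set Q := Finset.univ.filter (fun p : Fin n × Fin n => hp.pos 0 p.2 < hp.pos 0 p.1) with hQ
  have hPQ : P.card = Q.card := by
    apply Finset.card_bij (fun p _ => (p.2, p.1))
    · intro p hp; simpa [hP, hQ] using hp
    · rintro ⟨a, b⟩ _ ⟨c, d⟩ _ h; simp at h; simp [h]
    · rintro ⟨a, b⟩ h; exact ⟨(b, a), by simpa [hP, hQ] using h, rfl⟩
  have hun : P ∪ Q = (Finset.univ : Finset (Fin n)).offDiag := by
    ext ⟨x, y⟩
    simp only [hP, hQ, Finset.mem_union, Finset.mem_filter, Finset.mem_univ, true_and,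
      Finset.mem_offDiag]
    constructor
    · rintro (h | h) rfl <;> omega
    · intro h
      have := (hp.pos_inj 0 (by omega)).ne h
      omega
  have hdis : Disjoint P Q := by
    rw [Finset.disjoint_left]
    intro p h1 h2
    simp only [hP, hQ, Finset.mem_filter] at h1 h2
    omega
  have h := Finset.card_union_of_disjoint hdis
  rw [hun, Finset.offDiag_card] at h
  simp only [Finset.card_univ, Fintype.card_fin] at h
  have e : n * (n - 1) = n * n - n := by rw [Nat.mul_sub, mul_one]
  omega

lemma hp_mono (hp : HalfPeriod n) (t : ℕ) (ht : t < n * (n - 1) / 2) (x y : Fin n)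
    (hx : hp.pos (t+1) x = hp.pos t x + 1) (hy : hp.pos (t+1) y + 1 = hp.pos t y) :
    hp.pos 0 x < hp.pos 0 y := by
  classical
  let S := hp.seqR 0
  let P := Finset.univ.filter (fun p : Fin n × Fin n => hp.pos 0 p.1 < hp.pos 0 p.2)
  have hex : ∀ p : Fin n × Fin n, ∃ r, p ∈ P → r < n * (n - 1) / 2 ∧ S.Sw r p.1 p.2 := by
    intro p
    by_cases h : p ∈ P
    · have h1 : hp.pos 0 p.1 < hp.pos 0 p.2 := by simpa [P] using h
      have h2 := hp.reverse p.1
      have h3 := hp.reverse p.2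
      have h4 := hp.pos_mem 0 (by omega) p.1
      have h5 := hp.pos_mem 0 (by omega) p.2
      obtain ⟨r, _, hr, hs⟩ := S.overtake (s := 0) (t := S.N) (x := p.1) (y := p.2) (by omega)
        le_rfl (by simp only [S, HalfPeriod.seqR]; omega)
        (by simp only [S, HalfPeriod.seqR]; omega)
      exact ⟨r, fun _ => ⟨hr, hs⟩⟩
    · exact ⟨0, fun h' => absurd h' h⟩
  choose F hF using hex
  have hmaps : ∀ p ∈ P, F p ∈ Finset.range (n * (n - 1) / 2) := by
    intro p h; simpa using (hF p h).1
  have hinj : Set.InjOn F P := by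
    intro p h q h' e
    have h1 := (hF p h).2
    have h2 := (hF q h').2
    rw [e] at h1
    have e1 := S.sw_up h2 (z := p.1) (by have := h1.2; omega)
    have e2 := S.sw_down h2 (z := p.2) (by have := h1.2; omega)
    exact Prod.ext e1 e2
  have hsurj := Finset.surjOn_of_injOn_of_card_le F hmaps hinj
    (by rw [Finset.card_range]; exact (card_pairs hp).ge)
  obtain ⟨p, hpP, hpt⟩ := hsurj (show t ∈ _ by simpa using ht)
  have h2 := (hF p hpP).2
  rw [hpt] at h2
  have e1 := S.sw_up h2 (z := x) (by simp only [S, HalfPeriod.seqR]; omega)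
  have e2 := S.sw_down h2 (z := y) (by simp only [S, HalfPeriod.seqR]; omega)
  rw [e1, e2]
  have : hp.pos 0 p.1 < hp.pos 0 p.2 := by simpa [P] using hpP
  exact this

def zoneC (hk : 2 * k < n) (hp : HalfPeriod n) (a : Fin k → Fin n) (b : Fin (n - 2 * k) → Fin n)
    (c : Fin k → Fin n) (hstart : StandardStart hp k a b c) : ZoneCore (Fin n) k where
  toSwapSeq := hp.seqR ((n : ℤ) - k)
  m := (n : ℤ) - 2 * k
  hm := by omega
  A := a
  C := c
  mono := by
    intro t ht x y h1 h2
    simp only [HalfPeriod.seqR] at *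
    have := hp_mono hp t ht x y (by omega) (by omega)
    omega
  Ainj := fun i j h => by
    have := hstart.1 (a₁ := Sum.inl i) (a₂ := Sum.inl j) h
    simpa using this
  A0 := by
    intro i
    have := hstart.2.1 i
    have := i.2
    simp only [HalfPeriod.seqR]; omega
  C0 := by
    intro i
    have := hstart.2.2.2 i
    simp only [HalfPeriod.seqR]; omega
  AN := by
    intro i
    have := hstart.2.1 i
    have := i.2
    have := hp.reverse (a i)
    simp only [HalfPeriod.seqR]; omega
  nAN := by
    intro x hx
    have h1 := hp.reverse x
    have h2 := hp.pos_mem 0 (by omega) x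
    simp only [HalfPeriod.seqR]
    by_contra hc
    have h3 := hstart.2.1 ⟨k - hp.pos 0 x, by omega⟩
    exact hx _ (hp.pos_inj 0 (by omega) (by rw [h3]; simp only; omega))
  CA := by
    intro i j h
    have := hstart.1 (a₁ := Sum.inr (Sum.inr i)) (a₂ := Sum.inl j) h
    simp at this

def zoneA (hk : 2 * k < n) (hp : HalfPeriod n) (a : Fin k → Fin n) (b : Fin (n - 2 * k) → Fin n)
    (c : Fin k → Fin n) (hstart : StandardStart hp k a b c) : ZoneCore (Fin n) k where
  toSwapSeq := hp.seqL ((k : ℤ) + 1)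
  m := (n : ℤ) - 2 * k
  hm := by omega
  A := c
  C := a
  mono := by
    intro t ht x y h1 h2
    simp only [HalfPeriod.seqL] at *
    have := hp_mono hp t ht y x (by omega) (by omega)
    omega
  Ainj := fun i j h => by
    have := hstart.1 (a₁ := Sum.inr (Sum.inr i)) (a₂ := Sum.inr (Sum.inr j)) h
    simpa using this
  A0 := by
    intro i
    have := hstart.2.2.2 i
    simp only [HalfPeriod.seqL]; omega
  C0 := by
    intro i
    have := hstart.2.1 i
    have := i.2
    simp only [HalfPeriod.seqL]; omega
  AN := by
    intro i
    have := hstart.2.2.2 i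
    have := i.2
    have := hp.reverse (c i)
    simp only [HalfPeriod.seqL]; omega
  nAN := by
    intro x hx
    have h1 := hp.reverse x
    have h2 := hp.pos_mem 0 (by omega) x
    simp only [HalfPeriod.seqL]
    by_contra hc
    have h3 := hstart.2.2.2 ⟨hp.pos 0 x - (n - k) - 1, by omega⟩
    exact hx _ (hp.pos_inj 0 (by omega) (by rw [h3]; simp only; omega))
  CA := by
    intro i j h
    have := hstart.1 (a₁ := Sum.inl i) (a₂ := Sum.inr (Sum.inr j)) h
    simp at this

lemma exists_last (Z : ZoneCore (Fin n) k) (hk0 : 0 < k) :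
    ∃ j τ, Z.CF j τ ∧ τ ≤ Z.N ∧ ∀ i v, Z.CF i v → v ≤ τ := by
  choose f hfN hf using Z.CF_ex
  obtain ⟨jm, -, hjm⟩ := Finset.exists_max_image (Finset.univ : Finset (Fin k)) f
    ⟨⟨0, hk0⟩, by simp⟩
  refine ⟨jm, f jm, hf jm, hfN jm, fun i v h => ?_⟩
  rw [Z.CF_uniq h (hf i)]
  exact hjm i (by simp)

variable (hk : 2 * k < n) (hp : HalfPeriod n) (a : Fin k → Fin n) (b : Fin (n - 2 * k) → Fin n)
    (c : Fin k → Fin n) (hstart : StandardStart hp k a b c)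

lemma zoneC_AF (i : Fin k) (u : ℕ) :
    (zoneC hk hp a b c hstart).AF i u ↔ AFreedAt hp k (a i) u := by
  simp only [ZoneCore.AF, AFreedAt, zoneC, HalfPeriod.seqR]
  refine and_congr (by omega) (forall₂_congr fun s _ => by omega)

lemma zoneC_CF (i : Fin k) (u : ℕ) :
    (zoneC hk hp a b c hstart).CF i u ↔ CFreedAt hp k (c i) u := by
  simp only [ZoneCore.CF, CFreedAt, zoneC, HalfPeriod.seqR]
  refine and_congr (by omega) (forall₂_congr fun s _ => by omega)

lemma zoneA_AF (i : Fin k) (u : ℕ) :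
    (zoneA hk hp a b c hstart).AF i u ↔ CFreedAt hp k (c i) u := by
  simp only [ZoneCore.AF, CFreedAt, zoneA, HalfPeriod.seqL]
  refine and_congr (by omega) (forall₂_congr fun s _ => by omega)

lemma zoneA_CF (i : Fin k) (u : ℕ) :
    (zoneA hk hp a b c hstart).CF i u ↔ AFreedAt hp k (a i) u := by
  simp only [ZoneCore.CF, AFreedAt, zoneA, HalfPeriod.seqL]
  refine and_congr (by omega) (forall₂_congr fun s _ => by omega)

lemma fm_iff (t : ℕ) (z : Fin n) (p q : ℕ) : FirstMove hp t z p q ↔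
    (hp.pos t z = p ∧ hp.pos (t+1) z = q ∧
      ∀ s < t, ¬ (hp.pos s z = hp.pos t z ∧ hp.pos (s+1) z = hp.pos (t+1) z)) := by
  unfold FirstMove
  constructor
  · rintro ⟨rfl, rfl, h⟩; exact ⟨rfl, rfl, h⟩
  · rintro ⟨rfl, rfl, h⟩; exact ⟨rfl, rfl, h⟩

lemma zoneC_up (t : ℕ) (x y : Fin n) (hs : (zoneC hk hp a b c hstart).Sw t x y)
    (h0 : 0 ≤ (zoneC hk hp a b c hstart).d t x) :
    DiscoveryFor hp k a c t x ↔ ∃ i, (zoneC hk hp a b c hstart).DA t x i := by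
  have h2 := hs.2
  simp only [ZoneCore.DA, zoneC, HalfPeriod.seqR, DiscoveryFor, fm_iff] at *
  constructor
  · rintro ⟨i, hi, ⟨j, hj, hij, ⟨e1, e2, e3⟩ | ⟨e1, e2, e3⟩⟩ |
      ⟨j, hj, hij, ⟨e1, e2, e3⟩ | ⟨e1, e2, e3⟩⟩⟩
    · omega
    · exact ⟨j, hj, by omega, fun s hs h => e3 s hs ⟨by omega, by omega⟩⟩
    · omega
    · omega
  · rintro ⟨j, hj, hij, h3⟩
    have := j.2
    refine ⟨hp.pos t x + 1 - (n - k), by omega, Or.inl ⟨j, hj, by omega, Or.inr ⟨by omega, by omega,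
      fun s hs h => h3 s hs ⟨by omega, by omega⟩⟩⟩⟩

lemma zoneC_down (t : ℕ) (x y : Fin n) (hs : (zoneC hk hp a b c hstart).Sw t x y)
    (h0 : 0 ≤ (zoneC hk hp a b c hstart).d t x) :
    DiscoveryFor hp k a c t y ↔ ∃ i, (zoneC hk hp a b c hstart).DC t y i := by
  have h2 := hs.2
  simp only [ZoneCore.DC, zoneC, HalfPeriod.seqR, DiscoveryFor, fm_iff] at *
  constructor
  · rintro ⟨i, hi, ⟨j, hj, hij, ⟨e1, e2, e3⟩ | ⟨e1, e2, e3⟩⟩ |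
      ⟨j, hj, hij, ⟨e1, e2, e3⟩ | ⟨e1, e2, e3⟩⟩⟩
    · omega
    · omega
    · omega
    · exact ⟨j, hj, by omega, fun s hs h => e3 s hs ⟨by omega, by omega⟩⟩
  · rintro ⟨j, hj, hij, h3⟩
    have := j.2
    refine ⟨hp.pos t y - (n - k), by omega, Or.inr ⟨j, hj, by omega, Or.inr ⟨by omega, by omega,
      fun s hs h => h3 s hs ⟨by omega, by omega⟩⟩⟩⟩

lemma zoneA_up (t : ℕ) (x y : Fin n) (hs : (zoneA hk hp a b c hstart).Sw t x y)
    (h0 : 0 ≤ (zoneA hk hp a b c hstart).d t x) :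
    DiscoveryFor hp k a c t x ↔ ∃ i, (zoneA hk hp a b c hstart).DA t x i := by
  have h2 := hs.2
  simp only [ZoneCore.DA, zoneA, HalfPeriod.seqL, DiscoveryFor, fm_iff] at *
  constructor
  · rintro ⟨i, hi, ⟨j, hj, hij, ⟨e1, e2, e3⟩ | ⟨e1, e2, e3⟩⟩ |
      ⟨j, hj, hij, ⟨e1, e2, e3⟩ | ⟨e1, e2, e3⟩⟩⟩
    · omega
    · omega
    · exact ⟨j, hj, by omega, fun s hs h => e3 s hs ⟨by omega, by omega⟩⟩
    · omega
  · rintro ⟨j, hj, hij, h3⟩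
    have := j.2
    refine ⟨k + 2 - hp.pos t x, by omega, Or.inr ⟨j, hj, by omega, Or.inl ⟨by omega, by omega,
      fun s hs h => h3 s hs ⟨by omega, by omega⟩⟩⟩⟩

lemma zoneA_down (t : ℕ) (x y : Fin n) (hs : (zoneA hk hp a b c hstart).Sw t x y)
    (h0 : 0 ≤ (zoneA hk hp a b c hstart).d t x) :
    DiscoveryFor hp k a c t y ↔ ∃ i, (zoneA hk hp a b c hstart).DC t y i := by
  have h2 := hs.2
  simp only [ZoneCore.DC, zoneA, HalfPeriod.seqL, DiscoveryFor, fm_iff] at *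
  constructor
  · rintro ⟨i, hi, ⟨j, hj, hij, ⟨e1, e2, e3⟩ | ⟨e1, e2, e3⟩⟩ |
      ⟨j, hj, hij, ⟨e1, e2, e3⟩ | ⟨e1, e2, e3⟩⟩⟩
    · exact ⟨j, hj, by omega, fun s hs h => e3 s hs ⟨by omega, by omega⟩⟩
    · omega
    · omega
    · omega
  · rintro ⟨j, hj, hij, h3⟩
    have := j.2
    refine ⟨k + 1 - hp.pos t y, by omega, Or.inl ⟨j, hj, by omega, Or.inl ⟨by omega, by omega,
      fun s hs h => h3 s hs ⟨by omega, by omega⟩⟩⟩⟩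

lemma zoneC_zs (t : ℕ) (ht : t < (zoneC hk hp a b c hstart).N) :
    CZoneStep hp k t ↔ ∃ x y, (zoneC hk hp a b c hstart).Sw t x y ∧
      0 ≤ (zoneC hk hp a b c hstart).d t x := by
  constructor
  · rintro ⟨p, hpk, x', y', e1, e2, e3, e4⟩
    obtain ⟨x, y, hs⟩ := (zoneC hk hp a b c hstart).exSw ht
    have := (zoneC hk hp a b c hstart).sw_up hs (z := x')
      (by simp only [zoneC, HalfPeriod.seqR]; omega)
    subst this
    exact ⟨x', y, hs, by simp only [zoneC, HalfPeriod.seqR]; omega⟩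
  · rintro ⟨x, y, hs, h0⟩
    have h2 := hs.2
    simp only [zoneC, HalfPeriod.seqR] at *
    exact ⟨hp.pos t x, by omega, x, y, by omega, by omega, by omega, by omega⟩

lemma zoneA_zs (t : ℕ) (ht : t < (zoneA hk hp a b c hstart).N) :
    AZoneStep hp k t ↔ ∃ x y, (zoneA hk hp a b c hstart).Sw t x y ∧
      0 ≤ (zoneA hk hp a b c hstart).d t x := by
  constructor
  · rintro ⟨p, hp1, hpk, x', y', e1, e2, e3, e4⟩
    obtain ⟨x, y, hs⟩ := (zoneA hk hp a b c hstart).exSw ht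
    have := (zoneA hk hp a b c hstart).sw_up hs (z := y')
      (by simp only [zoneA, HalfPeriod.seqL]; omega)
    subst this
    exact ⟨y', y, hs, by simp only [zoneA, HalfPeriod.seqL]; omega⟩
  · rintro ⟨x, y, hs, h0⟩
    have h2 := hs.2
    have h3 := hp.pos_mem t (le_of_lt ht) y
    simp only [zoneA, HalfPeriod.seqL] at *
    exact ⟨hp.pos t y, by omega, by omega, y, x, by omega, by omega, by omega, by omega⟩

lemma zone_disc (Z : ZoneCore (Fin n) k) (hN : Z.N = HalfPeriod.steps n)
    (hmv : ∀ t z, Z.d (t+1) z ≠ Z.d t z ↔ hp.Moved t z) (ZS : ℕ → Prop)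
    (hzs : ∀ t, t < Z.N → (ZS t ↔ ∃ x y, Z.Sw t x y ∧ 0 ≤ Z.d t x))
    (hup : ∀ t x y, Z.Sw t x y → 0 ≤ Z.d t x →
      (DiscoveryFor hp k a c t x ↔ ∃ i, Z.DA t x i))
    (hdown : ∀ t x y, Z.Sw t x y → 0 ≤ Z.d t x →
      (DiscoveryFor hp k a c t y ↔ ∃ i, Z.DC t y i))
    (h : ∀ t, t < HalfPeriod.steps n → ZS t → ∃ z, hp.Moved t z ∧ DiscoveryFor hp k a c t z) :
    Z.Disc := by
  intro t x y hs h0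
  obtain ⟨z, hz1, hz2⟩ := h t (hN ▸ hs.1) ((hzs t hs.1).2 ⟨x, y, hs, h0⟩)
  rw [← hmv] at hz1
  have : z = x ∨ z = y := by
    by_contra hc
    push Not at hc
    exact hz1 (hs.2.2.2.2 z hc.1 hc.2)
  rcases this with rfl | rfl
  · exact Or.inl ((hup t _ _ hs h0).1 hz2)
  · exact Or.inr ((hdown t _ _ hs h0).1 hz2)

lemma zone_count (Z : ZoneCore (Fin n) k) (hN : Z.N = HalfPeriod.steps n)
    (hmv : ∀ t z, Z.d (t+1) z ≠ Z.d t z ↔ hp.Moved t z) (ZS : ℕ → Prop)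
    (hzs : ∀ t, t < Z.N → (ZS t ↔ ∃ x y, Z.Sw t x y ∧ 0 ≤ Z.d t x))
    (hup : ∀ t x y, Z.Sw t x y → 0 ≤ Z.d t x →
      (DiscoveryFor hp k a c t x ↔ ∃ i, Z.DA t x i))
    (hdown : ∀ t x y, Z.Sw t x y → 0 ≤ Z.d t x →
      (DiscoveryFor hp k a c t y ↔ ∃ i, Z.DC t y i))
    (h : ∀ i : Fin k, {t : ℕ | t < HalfPeriod.steps n ∧ ZS t ∧ hp.Moved t (Z.A i) ∧
      DoubleDiscoveryAt hp k a c t}.ncard = min ((i : ℕ) + 1) (Z.TT i).ncard) :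
    Z.Count := by
  intro i
  rw [← h i, ← Z.DD_eq (DiscoveryFor hp k a c) ZS hzs hup hdown i]
  simp only [hmv, hN]
  rfl

end Inst

/-- Let `k < n/2` and let `Π` be an `n`-half-period with initial
arrangement `(a_k, …, a_1, b_1, …, b_m, c_1, …, c_k)`, `m = n - 2k`, having no confined
transpositions. If `Π` is perfect, then in the liberation sequence either all the `a`'s
occur consecutively (no `c` becomes free strictly between two `a`'s) or all the `c`'s
occur consecutively (no `a` becomes free strictly between two `c`'s). -/
theorem liberation_sequence_consecutive (n k : ℕ) (hk : 2 * k < n)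
    (hp : HalfPeriod n) (a : Fin k → Fin n) (b : Fin (n - 2 * k) → Fin n)
    (c : Fin k → Fin n) (hstart : StandardStart hp k a b c)
    (hnoconf : NoConfinedSteps hp k a c)
    (hperf : PerfectHalfPeriod hp k a c) :
    (∀ (i j l : Fin k) (u₁ u₂ u₃ : ℕ),
      AFreedAt hp k (a i) u₁ → CFreedAt hp k (c l) u₂ → AFreedAt hp k (a j) u₃ →
      ¬ (u₁ < u₂ ∧ u₂ < u₃)) ∨
    (∀ (i j l : Fin k) (u₁ u₂ u₃ : ℕ),
      CFreedAt hp k (c i) u₁ → AFreedAt hp k (a l) u₂ → CFreedAt hp k (c j) u₃ →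
      ¬ (u₁ < u₂ ∧ u₂ < u₃)) := by
  obtain ⟨hnc, hdisc, hcA, hcC⟩ := hperf
  by_contra hcon
  push Not at hcon
  obtain ⟨⟨i, j, l, u₁, u₂, u₃, f1, f2, f3, f4, f5⟩,
    ⟨i', j', l', v₁, v₂, v₃, g1, g2, g3, g4, g5⟩⟩ := hcon
  have hk0 : 0 < k := i.pos
  have mvC : ∀ t z, (zoneC hk hp a b c hstart).d (t+1) z ≠ (zoneC hk hp a b c hstart).d t z ↔
      hp.Moved t z := by
    intro t z
    simp only [zoneC, HalfPeriod.seqR, HalfPeriod.Moved]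
    omega
  have mvA : ∀ t z, (zoneA hk hp a b c hstart).d (t+1) z ≠ (zoneA hk hp a b c hstart).d t z ↔
      hp.Moved t z := by
    intro t z
    simp only [zoneA, HalfPeriod.seqL, HalfPeriod.Moved]
    omega
  obtain ⟨jc, τc, hc1, hcN, hc2⟩ := exists_last (zoneC hk hp a b c hstart) hk0
  obtain ⟨ja, τa, ha1, haN, ha2⟩ := exists_last (zoneA hk hp a b c hstart) hk0
  have hne : τc ≠ τa := by
    rintro rfl
    have hpos : τc ≠ 0 := by
      rintro rfl
      have := hc1.1
      have := (zoneC hk hp a b c hstart).C0 jc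
      omega
    obtain ⟨w, rfl⟩ := Nat.exists_eq_succ_of_ne_zero hpos
    obtain ⟨x, y, hs⟩ := (zoneC hk hp a b c hstart).exSw (t := w) (by omega)
    have q1 := (zoneC_CF hk hp a b c hstart _ _).1 hc1
    have q2 := (zoneA_CF hk hp a b c hstart _ _).1 ha1
    have r1 : hp.pos (w+1) (c jc) ≤ n - k := q1.1
    have r2 := q1.2 w (by omega)
    have r3 : k < hp.pos (w+1) (a ja) := q2.1
    have r4 := q2.2 w (by omega)
    have e1 := (zoneC hk hp a b c hstart).sw_up hs (z := a ja)
      (by simp only [zoneC, HalfPeriod.seqR]; omega)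
    have e2 := (zoneC hk hp a b c hstart).sw_down hs (z := c jc)
      (by simp only [zoneC, HalfPeriod.seqR]; omega)
    subst e1 e2
    have h2 := hs.2
    simp only [zoneC, HalfPeriod.seqR] at h2
    omega
  rcases lt_or_gt_of_ne hne with hlt | hlt
  · refine ZoneCore.core (Z := zoneC hk hp a b c hstart) (e := ja) (ue := τa) ?_ ?_ ?_
      ((zoneC_CF hk hp a b c hstart _ _).2 g1) ((zoneC_AF hk hp a b c hstart _ _).2 g2)
      ((zoneC_CF hk hp a b c hstart _ _).2 g3) g4 g5
      ((zoneC_AF hk hp a b c hstart _ _).2 ((zoneA_CF hk hp a b c hstart _ _).1 ha1))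
      (fun q v h => lt_of_le_of_lt (hc2 q v h) hlt)
    · intro t x y p q hs hx hy ⟨k1, k2⟩
      have h2 := hs.2
      refine hnoconf t hs.1 x y ⟨?_, (mvC _ _).1 (by omega), (mvC _ _).1 (by omega)⟩
        ⟨Or.inl ⟨⟨p, hx⟩, fun s h => ?_⟩, Or.inl ⟨⟨q, hy⟩, fun s h => ?_⟩⟩
      · rintro rfl; omega
      · have := k1 s h
        simp only [zoneC, HalfPeriod.seqR] at this
        omega
      · have := k2 s h
        simp only [zoneC, HalfPeriod.seqR] at this
        omega
    · exact zone_disc hp a c _ rfl mvC (CZoneStep hp k) (zoneC_zs hk hp a b c hstart)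
        (zoneC_up hk hp a b c hstart) (zoneC_down hk hp a b c hstart)
        (fun t ht h => hdisc t ht (Or.inr h))
    · refine zone_count hp a c _ rfl mvC (CZoneStep hp k) (zoneC_zs hk hp a b c hstart)
        (zoneC_up hk hp a b c hstart) (zoneC_down hk hp a b c hstart) (fun q => ?_)
      have h := hcA q
      simp only [TCardA] at h
      simp only [ZoneCore.TT, zoneC_AF, zoneC_CF]
      exact h
  · refine ZoneCore.core (Z := zoneA hk hp a b c hstart) (e := jc) (ue := τc) ?_ ?_ ?_
      ((zoneA_CF hk hp a b c hstart _ _).2 f1) ((zoneA_AF hk hp a b c hstart _ _).2 f2)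
      ((zoneA_CF hk hp a b c hstart _ _).2 f3) f4 f5
      ((zoneA_AF hk hp a b c hstart _ _).2 ((zoneC_CF hk hp a b c hstart _ _).1 hc1))
      (fun q v h => lt_of_le_of_lt (ha2 q v h) hlt)
    · intro t x y p q hs hx hy ⟨k1, k2⟩
      have h2 := hs.2
      refine hnoconf t hs.1 x y ⟨?_, (mvA _ _).1 (by omega), (mvA _ _).1 (by omega)⟩
        ⟨Or.inr ⟨⟨p, hx⟩, fun s h => ?_⟩, Or.inr ⟨⟨q, hy⟩, fun s h => ?_⟩⟩
      · rintro rfl; omega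
      · have := k1 s h
        simp only [zoneA, HalfPeriod.seqL] at this
        omega
      · have := k2 s h
        simp only [zoneA, HalfPeriod.seqL] at this
        omega
    · exact zone_disc hp a c _ rfl mvA (AZoneStep hp k) (zoneA_zs hk hp a b c hstart)
        (zoneA_up hk hp a b c hstart) (zoneA_down hk hp a b c hstart)
        (fun t ht h => hdisc t ht (Or.inl h))
    · refine zone_count hp a c _ rfl mvA (AZoneStep hp k) (zoneA_zs hk hp a b c hstart)
        (zoneA_up hk hp a b c hstart) (zoneA_down hk hp a b c hstart) (fun q => ?_)
      have h := hcC q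
      simp only [TCardC] at h
      simp only [ZoneCore.TT, zoneA_AF, zoneA_CF]
      exact h
end
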